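/- For every pair (P, m) where P = P_F is the pattern of a 3-CNF formula F and m = |C(P)| + 3, there exist a black/white/gray (3-colored) pattern Q and integers m_b, m_w, m_g with the following property: P can be self-assembled by a DTAS with at most m tile types if and only if Q can be self-assembled by a DTAS with at most m_b black tile types, m_w white tile types and m_g gray tile types. Moreover (Q, m_b, m_w, m_g) can be computed from P in polynomial time. -/

import Mathlib

/-!
The pattern `QPat` represents each position of `P` by an `ℓ × ℓ` square, a *supertile*, with
`ℓ = 5 k + 8`. The inside of a supertile is black, its bottom row and left column are white, and
its top row and right column are gray except for one white tile, whose place encodes the color of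
the position. Above and to the right of the supertiles run a *gadget row* and a *gadget column*
with a single white tile each. The whole pattern is symmetric under reflection in the diagonal, so
every statement about rows yields one about columns (`Asm.transpose`).

**From the three-colored pattern to `P`.** A single black tile type has to pass its glues straight
through (`Asm.one_north`). Hence all tiles of the gadget row left of the first crossing have the
same south glue, each tile determines the next one, and the place of the white tile forces `k + 1`
distinct gray tile types. The gadget column needs `k + 1` others and their crossings one more, so
the gray budget `2 k + 3` is exhausted (`Asm.gray_extra`). It follows that the top row of a
supertile of color `c` copies the part of the gadget row starting `c` tiles before the white one
(`Asm.top_first`). Likewise for the right column, which is started by the bottom right tile with a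
glue that depends injectively on `c`. Since bottom rows propagate deterministically, the bottom left
tile of an interior supertile determines its color and both of its outputs (`Asm.a_color`,
`Asm.back_inner`); interior supertiles thus simulate a directed system with as many interior tile
types as there are white bottom left tiles.

It remains to count these. The white bottom left tiles, second tiles of bottom rows and bottom right
tiles, the mirror images of the latter two classes, and the white tiles of the two counters are all
distinct (`Asm.white_card`). Each color that occurs above the bottom row needs a bottom right tile
for each of its east outputs, and symmetrically (`Asm.setC_ge`). In the subpattern `p` the color
`OR` is west and south of eight different colors, so the numbers `e` and `n` of its east and north
outputs satisfy `e n ≥ 8`, whence `e + n ≥ 6`. With these outputs, the budget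
`5 k + 14 - 3 (w + h)` leaves at most `k + 4 - (w + h)` bottom left tiles, and adding `w + h - 1`
tile types for the boundary of `P` gives a system with `k + 3` tile types (`reverse_direction`).

**From `P` to the three-colored pattern.** Every color needs a tile type, so a system with `k + 3`
tile types assembling the pattern of a formula has at most three superfluous ones (`Sol.excess`).
The subpattern `p` takes up two of them for `OR`, and the subpatterns `q₁, …, q₄` then force four
different tile types of color `OR` (`Sol.gates_inj`). Hence all other colors have a single tile type
(`Sol.single`), and as the positions east of the four `OR`-colored ones have the color `+` or `-`,
the `OR`-colored tile types have only two east glues (`Sol.ors_east`). Therefore the number of white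
tiles needed to send the outputs and the color of a supertile along its bottom row and left column
does not exceed the budget (`Sol.sa_card`, `Sol.ie_card`, `Sol.in_card`). The system `tileOf` does
so: the bottom left tile of a supertile evaluates its inputs, the corner at the end of the bottom
row or left column starts a counter, and the counter places the white tile. Its south and west glues
determine each tile by construction (`forward_core`).

Neither direction depends on whether the formula is satisfiable.
-/

/-- A colored Wang tile with a color and four glues (north, east, south, west). -/
structure Tile (C G : Type) where
  color : C
  north : G
  east : G
  south : G
  west : G
deriving DecidableEq

/-- A rectilinear tile assembly system: a finite set of tile types together with
an L-shaped seed, given by its north glues (bottom arm) and east glues (left arm). -/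
structure RTAS (C G : Type) where
  tiles : Finset (Tile C G)
  seedN : ℕ → G
  seedE : ℕ → G

/-- A tile assignment for the `M × N` rectangle spanned by the seed:
every tile belongs to the system, west/south glues match the east/north glues of the
west/south neighbours, and the seed glues on the boundary. -/
def IsAssignment {C G : Type} (T : RTAS C G) (M N : ℕ) (f : ℕ → ℕ → Tile C G) : Prop :=
  (∀ x < M, ∀ y < N, f x y ∈ T.tiles) ∧
  (∀ y < N, (f 0 y).west = T.seedE y) ∧
  (∀ x < M, (f x 0).south = T.seedN x) ∧
  (∀ x, x + 1 < M → ∀ y < N, (f (x + 1) y).west = (f x y).east) ∧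
  (∀ x < M, ∀ y, y + 1 < N → (f x (y + 1)).south = (f x y).north)

/-- `T` self-assembles the `M × N` pattern `P` if some tile assignment realizes `P`. -/
def SelfAssembles {C G : Type} (T : RTAS C G) (M N : ℕ) (P : ℕ → ℕ → C) : Prop :=
  ∃ f, IsAssignment T M N f ∧ ∀ x < M, ∀ y < N, (f x y).color = P x y

/-- A directed RTAS: distinct tile types differ in their south or west glue. -/
def DirectedTAS {C G : Type} (T : RTAS C G) : Prop :=
  ∀ t₁ ∈ T.tiles, ∀ t₂ ∈ T.tiles, t₁ ≠ t₂ → t₁.south ≠ t₂.south ∨ t₁.west ≠ t₂.west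

/-- The set of colors occurring in the `M × N` pattern `P`. -/
def colorsOf {C : Type} [DecidableEq C] (M N : ℕ) (P : ℕ → ℕ → C) : Finset C :=
  (Finset.range M ×ˢ Finset.range N).image fun q => P q.1 q.2

/-- The named colors used in the subpatterns of the pattern `P_F` of the paper.
`uniq n` are the "unique" filler colors. -/
inductive PColor where
  | orC | plus | minus
  | Z1 | Z2 | Z3 | Z4
  | aC | bW | bD | cW | cD | dC
  | arrW (w : Fin 2)
  | arrD (w : Fin 2)
  | upW (s : Fin 2)
  | upD (s : Fin 2)
  | gate (i : Fin 4)
  | X (i : Fin 8)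
  | Y (i : Fin 8)
  | varW (v : ℕ)
  | negW (v : ℕ)
  | varAux (v : ℕ)
  | varMod (v : ℕ)
  | varModd (v : ℕ)
  | uniq (n : ℕ)
deriving DecidableEq

/-- The `16 × 2` subpattern `p`: eight `2 × 2` blocks, block `i` having colors
`Xᵢ` (bottom-left), `OR` (bottom-right, top-left) and `Yᵢ` (top-right). -/
def pPat : ℕ → ℕ → PColor := fun x y =>
  if y = 0 then
    if x % 2 = 0 then PColor.X ⟨x / 2 % 8, Nat.mod_lt _ (by norm_num)⟩ else PColor.orC
  else
    if x % 2 = 0 then PColor.orC else PColor.Y ⟨x / 2 % 8, Nat.mod_lt _ (by norm_num)⟩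

/-- The `4 × 4` subpatterns `q₁, …, q₄` (index `idx = 0, …, 3`), with west input
`w = idx / 2` and south input `s = idx % 2` feeding an `OR`-colored position. -/
def qPat (idx : Fin 4) : ℕ → ℕ → PColor := fun x y =>
  let wv : Fin 2 := ⟨idx.val / 2, by have := idx.isLt; omega⟩
  let sv : Fin 2 := ⟨idx.val % 2, Nat.mod_lt _ (by norm_num)⟩
  match x, y with
  | 0, 0 => PColor.Z1
  | 1, 0 => PColor.Z2
  | 2, 0 => PColor.upD sv
  | 3, 0 => PColor.bD
  | 0, 1 => PColor.Z3
  | 1, 1 => PColor.aC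
  | 2, 1 => PColor.upW sv
  | 3, 1 => PColor.bW
  | 0, 2 => PColor.arrD wv
  | 1, 2 => PColor.arrW wv
  | 2, 2 => PColor.orC
  | 3, 2 => if idx.val = 0 then PColor.minus else PColor.plus
  | 0, 3 => PColor.cD
  | 1, 3 => PColor.cW
  | 2, 3 => PColor.gate idx
  | _, _ => PColor.dC

/-- The `6 × 3` subpattern `q₅`: bottom row `a ↑₀ ↑₁ ↑₀ ↑₁ b`, middle row
`→₀ OR OR OR OR +`, top row `c A B C D d`. -/
def q5Pat : ℕ → ℕ → PColor := fun x y =>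
  match y, x with
  | 0, 0 => PColor.aC
  | 0, 1 => PColor.upW 0
  | 0, 2 => PColor.upW 1
  | 0, 3 => PColor.upW 0
  | 0, 4 => PColor.upW 1
  | 0, _ => PColor.bW
  | 1, 0 => PColor.arrW 0
  | 1, 5 => PColor.plus
  | 1, _ => PColor.orC
  | 2, 0 => PColor.cW
  | 2, 1 => PColor.gate 0
  | 2, 2 => PColor.gate 1
  | 2, 3 => PColor.gate 2
  | 2, 4 => PColor.gate 3
  | _, _ => PColor.dC

/-- A literal: a variable index together with its sign (`true` = positive). -/
abbrev Lit := ℕ × Bool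

/-- A clause with three literals. -/
abbrev Clause3 := Lit × Lit × Lit

/-- A boolean formula in 3-CNF over the variables `0, …, numVars - 1`. -/
structure CNF3 where
  numVars : ℕ
  clauses : List Clause3
  wf : ∀ cl ∈ clauses, cl.1.1 < numVars ∧ cl.2.1.1 < numVars ∧ cl.2.2.1 < numVars

/-- Value of a literal under a variable assignment. -/
def litVal (f : ℕ → Bool) (l : Lit) : Bool := if l.2 then f l.1 else ! f l.1

/-- A 3-CNF formula is satisfiable if some assignment makes every clause true. -/
def CNF3.Satisfiable (F : CNF3) : Prop :=
  ∃ f : ℕ → Bool, ∀ cl ∈ F.clauses,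
    (litVal f cl.1 || litVal f cl.2.1 || litVal f cl.2.2) = true

/-- The `2 × 2` subpattern `r₁(v)`. -/
def r1Pat (v : ℕ) : ℕ → ℕ → PColor := fun x y =>
  match x, y with
  | 0, 0 => PColor.Z4
  | 1, 0 => PColor.varW v
  | 0, 1 => PColor.varAux v
  | _, _ => PColor.varMod v

/-- The `2 × 2` subpattern `r₂(v)`. -/
def r2Pat (v : ℕ) : ℕ → ℕ → PColor := fun x y =>
  match x, y with
  | 0, 0 => PColor.Z4
  | 1, 0 => PColor.negW v
  | 0, 1 => PColor.varAux v
  | _, _ => PColor.varModd v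

/-- The `4 × 2` subpattern `r₃(v)`: bottom row `a v ¬v b`, top row `→₀ OR OR +`. -/
def r3Pat (v : ℕ) : ℕ → ℕ → PColor := fun x y =>
  match y, x with
  | 0, 0 => PColor.aC
  | 0, 1 => PColor.varW v
  | 0, 2 => PColor.negW v
  | 0, _ => PColor.bW
  | 1, 0 => PColor.arrW 0
  | 1, 3 => PColor.plus
  | _, _ => PColor.orC

/-- The color of a literal. -/
def litColor (l : Lit) : PColor := if l.2 then PColor.varW l.1 else PColor.negW l.1

/-- The `5 × 2` subpattern `s(C)` for a clause `C = (c₁ ∨ c₂ ∨ c₃)`: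
bottom row `a c₁ c₂ c₃ b`, top row `→₀ OR OR OR +`. -/
def sPat (cl : Clause3) : ℕ → ℕ → PColor := fun x y =>
  match y, x with
  | 0, 0 => PColor.aC
  | 0, 1 => litColor cl.1
  | 0, 2 => litColor cl.2.1
  | 0, 3 => litColor cl.2.2
  | 0, _ => PColor.bW
  | 1, 0 => PColor.arrW 0
  | 1, 4 => PColor.plus
  | _, _ => PColor.orC

/-- A rectangular block: width, height and contents. -/
abbrev PBlock := ℕ × ℕ × (ℕ → ℕ → PColor)

/-- The list of subpatterns of `P_F`: `p`, `q₁, …, q₅`, then `r₁(v), r₂(v), r₃(v)`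
for every variable `v`, then `s(C)` for every clause `C`. -/
def blocksOf (F : CNF3) : List PBlock :=
  [(16, 2, pPat), (4, 4, qPat 0), (4, 4, qPat 1), (4, 4, qPat 2), (4, 4, qPat 3),
    (6, 3, q5Pat)]
    ++ (List.range F.numVars).flatMap
        (fun v => [(2, 2, r1Pat v), (2, 2, r2Pat v), (4, 2, r3Pat v)])
    ++ F.clauses.map (fun cl => (5, 2, sPat cl))

/-- Place the blocks side by side (starting at column `x0`, occupying rows `1, …, h`),
with one column of unique colors before each block and after the last one; all the
remaining positions carry unique colors (`uniq` of the position code). -/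
def place : List PBlock → ℕ → ℕ → ℕ → PColor
  | [], _, x, y => PColor.uniq (Nat.pair x y)
  | b :: bs, x0, x, y =>
      if x0 ≤ x ∧ x < x0 + b.1 ∧ 1 ≤ y ∧ y < 1 + b.2.1 then
        b.2.2 (x - x0) (y - 1)
      else if x < x0 + b.1 + 1 then PColor.uniq (Nat.pair x y)
      else place bs (x0 + b.1 + 1) x y

/-- The pattern `P_F` of the paper, of height `6` and width `45 + 11·|V| + 6·ℓ`. -/
def patF (F : CNF3) : ℕ → ℕ → PColor := fun x y => place (blocksOf F) 1 x y

/-- The width of the pattern `P_F`. -/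
def widthF (F : CNF3) : ℕ := 45 + 11 * F.numVars + 6 * F.clauses.length

/-- The three colors black, white, gray. -/
inductive BWG where
  | black | white | gray
deriving DecidableEq

/-- The number of tile types of a given color in a tile assembly system. -/
def countColor {C G : Type} [DecidableEq C] (T : RTAS C G) (c : C) : ℕ :=
  (T.tiles.filter (fun t => t.color = c)).card

/-- The `ℓ × ℓ` supertile portraying the color `c ∈ [k]` (with `ℓ = 5k + 8`):
white bottom row and left column; gray top row and right column except for one
white position at index `c + 1` of each (the color counters); black interior. -/
def superPat (ℓ c : ℕ) : ℕ → ℕ → BWG := fun x y =>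
  if y = 0 then BWG.white
  else if x = 0 then BWG.white
  else if y = ℓ - 1 then (if x = c + 1 then BWG.white else BWG.gray)
  else if x = ℓ - 1 then (if y = c + 1 then BWG.white else BWG.gray)
  else BWG.black

/-- The black/white/gray pattern `Q` built from the `w × h` pattern `P` with colors
in `[k]`: each position `(x, y)` of `P` is replaced by the `ℓ × ℓ` supertile
portraying `P x y` (supertiles in the bottom row/left column of `P` are
incomplete, lacking their white bottom row/left column), and three gadget rows
and three gadget columns are appended at the top and at the right. -/
def QPat (k w h : ℕ) (P : ℕ → ℕ → ℕ) : ℕ → ℕ → BWG := fun X Y =>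
  let ℓ := 5 * k + 8
  if X + 1 < ℓ * w ∧ Y + 1 < ℓ * h then
    superPat ℓ (P ((X + 1) / ℓ) ((Y + 1) / ℓ)) ((X + 1) % ℓ) ((Y + 1) % ℓ)
  else if X + 1 < ℓ * w then
    -- the three gadget rows
    if Y = ℓ * h then (if X = k then BWG.white else BWG.gray)
    else (if (X + 1) % ℓ = ℓ - 1 then BWG.gray else BWG.black)
  else if Y + 1 < ℓ * h then
    -- the three gadget columns
    if X = ℓ * w then (if Y = k then BWG.white else BWG.gray)
    else (if (Y + 1) % ℓ = ℓ - 1 then BWG.gray else BWG.black)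
  else
    -- the top-right 3 × 3 corner
    if X = ℓ * w ∨ Y = ℓ * h then BWG.gray else BWG.black

/-- Width of the pattern `Q`. -/
def QW (k w : ℕ) : ℕ := (5 * k + 8) * w + 2

/-- Height of the pattern `Q`. -/
def QH (k h : ℕ) : ℕ := (5 * k + 8) * h + 2

/-- `(P, m) ∈ ℐ` (with `m = k + 3`): `P` is, up to an identification `ρ` of its
colors with `[k] = {1, …, k}`, the pattern `P_F` of a 3-CNF formula `F`. -/
def InI (k w h : ℕ) (P : ℕ → ℕ → ℕ) : Prop :=
  ∃ (F : CNF3) (ρ : PColor → ℕ),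
    w = widthF F ∧ h = 6 ∧
    Set.BijOn ρ (↑(colorsOf (widthF F) 6 (patF F))) (Set.Icc 1 k) ∧
    ∀ x < w, ∀ y < h, P x y = ρ (patF F x y)

/-- The tile assignment of the supertile at `(x, y)` of the supertile grid,
as a partial function on inner coordinates: inner position `(i, j)` corresponds
to the global position `(x·ℓ + i - 1, y·ℓ + j - 1)`; positions with `i = 0`
(resp. `j = 0`) exist only if `x ≥ 1` (resp. `y ≥ 1`). -/
def superOpt {G : Type} (ℓ : ℕ) (f : ℕ → ℕ → Tile BWG G) (x y : ℕ) :
    ℕ → ℕ → Option (Tile BWG G) := fun i j =>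
  if i < ℓ ∧ j < ℓ ∧ (1 ≤ x ∨ 1 ≤ i) ∧ (1 ≤ y ∨ 1 ≤ j) then
    some (f (x * ℓ + i - 1) (y * ℓ + j - 1))
  else none

/-- `s(N)`: the north output of a supertile, i.e. the north glue of its tile in
position `C₂` (inner position `(0, ℓ - 1)`); defined for `x ≥ 1`. -/
def stN {G : Type} (ℓ : ℕ) (f : ℕ → ℕ → Tile BWG G) (x y : ℕ) : G :=
  (f (x * ℓ - 1) (y * ℓ + ℓ - 2)).north

/-- `s(E)`: the east output of a supertile, i.e. the east glue of its tile in
position `C₁` (inner position `(ℓ - 1, 0)`); defined for `y ≥ 1`. -/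
def stE {G : Type} (ℓ : ℕ) (f : ℕ → ℕ → Tile BWG G) (x y : ℕ) : G :=
  (f (x * ℓ + ℓ - 2) (y * ℓ - 1)).east

/-- `s(S)`: the south input of a supertile, i.e. the south glue of its tile in
position `A` (inner position `(0, 0)`); defined for `x, y ≥ 1`. -/
def stS {G : Type} (ℓ : ℕ) (f : ℕ → ℕ → Tile BWG G) (x y : ℕ) : G :=
  (f (x * ℓ - 1) (y * ℓ - 1)).south

/-- `s(W)`: the west input of a supertile, i.e. the west glue of its tile in
position `A` (inner position `(0, 0)`); defined for `x, y ≥ 1`. -/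
def stW {G : Type} (ℓ : ℕ) (f : ℕ → ℕ → Tile BWG G) (x y : ℕ) : G :=
  (f (x * ℓ - 1) (y * ℓ - 1)).west


/-! ### Transposition and shifted coordinates -/

/-- Reflection of a tile along the main diagonal. -/
def Tile.swap {C G : Type} (t : Tile C G) : Tile C G :=
  ⟨t.color, t.east, t.north, t.west, t.south⟩

theorem Tile.swap_swap {C G : Type} (t : Tile C G) : t.swap.swap = t := rfl

theorem Tile.swap_inj {C G : Type} {t t' : Tile C G} (h : t.swap = t'.swap) : t = t' := by
  have := congrArg Tile.swap h
  simpa [Tile.swap_swap] using this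

/-- The pattern `QPat` in coordinates shifted by one, so that the supertile `(x, y)` occupies
the positions `(ℓ x + i, ℓ y + j)` with `i, j < ℓ` (row and column `0` do not exist). -/
def QS (ℓ k w h : ℕ) (P : ℕ → ℕ → ℕ) (a b : ℕ) : BWG :=
  if a < ℓ * w ∧ b < ℓ * h then superPat ℓ (P (a / ℓ) (b / ℓ)) (a % ℓ) (b % ℓ)
  else if a < ℓ * w then
    (if b = ℓ * h + 1 then (if a = k + 1 then BWG.white else BWG.gray)
     else (if a % ℓ = ℓ - 1 then BWG.gray else BWG.black))
  else if b < ℓ * h then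
    (if a = ℓ * w + 1 then (if b = k + 1 then BWG.white else BWG.gray)
     else (if b % ℓ = ℓ - 1 then BWG.gray else BWG.black))
  else (if a = ℓ * w + 1 ∨ b = ℓ * h + 1 then BWG.gray else BWG.black)

theorem QPat_eq_QS (k w h : ℕ) (P : ℕ → ℕ → ℕ) (X Y : ℕ) :
    QPat k w h P X Y = QS (5 * k + 8) k w h P (X + 1) (Y + 1) := by
  simp [QPat, QS]

theorem mul_succ_le {ℓ x w : ℕ} (hx : x < w) : ℓ * x + ℓ ≤ ℓ * w := by
  have := Nat.mul_le_mul_left ℓ (Nat.succ_le_of_lt hx)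
  rwa [Nat.mul_succ] at this

theorem div_of {ℓ x i : ℕ} (hi : i < ℓ) : (ℓ * x + i) / ℓ = x := by
  rw [Nat.mul_add_div (by omega), Nat.div_eq_of_lt hi, Nat.add_zero]

theorem mod_of {ℓ x i : ℕ} (hi : i < ℓ) : (ℓ * x + i) % ℓ = i := by
  rw [Nat.mul_add_mod, Nat.mod_eq_of_lt hi]

theorem QS_in {ℓ k w h : ℕ} {P : ℕ → ℕ → ℕ} {x y i j : ℕ} (hx : x < w) (hy : y < h)
    (hi : i < ℓ) (hj : j < ℓ) :
    QS ℓ k w h P (ℓ * x + i) (ℓ * y + j) = superPat ℓ (P x y) i j := by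
  have h1 := mul_succ_le (ℓ := ℓ) hx
  have h2 := mul_succ_le (ℓ := ℓ) hy
  rw [QS, if_pos ⟨by omega, by omega⟩, div_of hi, div_of hj, mod_of hi, mod_of hj]

theorem QS_top {ℓ k w h : ℕ} {P : ℕ → ℕ → ℕ} {x i b : ℕ} (hx : x < w)
    (hi : i < ℓ) (hb : ℓ * h ≤ b) :
    QS ℓ k w h P (ℓ * x + i) b =
      if b = ℓ * h + 1 then (if ℓ * x + i = k + 1 then BWG.white else BWG.gray)
      else (if i = ℓ - 1 then BWG.gray else BWG.black) := by
  have h1 := mul_succ_le (ℓ := ℓ) hx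
  rw [QS, if_neg (by omega), if_pos (by omega), mod_of hi]

theorem superPat_symm {ℓ c i j : ℕ} (hc : c + 2 < ℓ) :
    superPat ℓ c i j = superPat ℓ c j i := by
  unfold superPat
  split_ifs <;> first | rfl | omega

theorem QS_symm {ℓ k w h : ℕ} {P : ℕ → ℕ → ℕ} (hℓ : k + 2 < ℓ)
    (hP : ∀ x < w, ∀ y < h, P x y ≤ k) (a b : ℕ) :
    QS ℓ k w h P a b = QS ℓ k h w (fun x y => P y x) b a := by
  unfold QS
  by_cases h1 : a < ℓ * w <;> by_cases h2 : b < ℓ * h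
  · simp only [h1, h2, and_self, if_true]
    have := hP _ (Nat.div_lt_of_lt_mul h1) _ (Nat.div_lt_of_lt_mul h2)
    exact superPat_symm (by omega)
  · simp [h1, h2]
  · simp [h1, h2]
  · simp only [h1, h2, and_self, if_false]
    congr 1
    exact propext or_comm

/-! ### Tile systems assembling the three-colored pattern -/

/-- The tile `t` occurs in the assignment `g` of the shifted rectangle. -/
def Used {G : Type} (ℓ w h : ℕ) (g : ℕ → ℕ → Tile BWG G) (t : Tile BWG G) : Prop :=
  ∃ a b, 1 ≤ a ∧ a < ℓ * w + 3 ∧ 1 ≤ b ∧ b < ℓ * h + 3 ∧ g a b = t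

/-- `g` is (in shifted coordinates) a tile assignment realizing the three-colored pattern by
a directed system with a single black tile type and at most `2 k + 3` gray tile types. -/
structure Asm {G : Type} (ℓ k w h : ℕ) (P : ℕ → ℕ → ℕ) (g : ℕ → ℕ → Tile BWG G) : Prop where
  hℓ : ℓ = 5 * k + 8
  hw : 2 ≤ w
  hh : 2 ≤ h
  rng : ∀ x < w, ∀ y < h, 1 ≤ P x y ∧ P x y ≤ k
  col : ∀ a b, 1 ≤ a → a < ℓ * w + 3 → 1 ≤ b → b < ℓ * h + 3 →
    (g a b).color = QS ℓ k w h P a b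
  hor : ∀ a b, 1 ≤ a → a + 1 < ℓ * w + 3 → 1 ≤ b → b < ℓ * h + 3 →
    (g (a + 1) b).west = (g a b).east
  ver : ∀ a b, 1 ≤ a → a < ℓ * w + 3 → 1 ≤ b → b + 1 < ℓ * h + 3 →
    (g a (b + 1)).south = (g a b).north
  dir : ∀ t t', Used ℓ w h g t → Used ℓ w h g t' → t.south = t'.south → t.west = t'.west → t = t'
  blk : ∀ t t', Used ℓ w h g t → Used ℓ w h g t' → t.color = BWG.black → t'.color = BWG.black →
    t = t'
  gry : ∀ Γ : Finset (Tile BWG G), (∀ t ∈ Γ, Used ℓ w h g t ∧ t.color = BWG.gray) →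
    Γ.card ≤ 2 * k + 3

/-- The transposed assignment. -/
def tr {G : Type} (g : ℕ → ℕ → Tile BWG G) : ℕ → ℕ → Tile BWG G := fun a b => (g b a).swap

theorem used_tr {G : Type} {ℓ w h : ℕ} {g : ℕ → ℕ → Tile BWG G} {t : Tile BWG G}
    (ht : Used ℓ h w (tr g) t) : Used ℓ w h g t.swap := by
  obtain ⟨a, b, h1, h2, h3, h4, h5⟩ := ht
  exact ⟨b, a, h3, h4, h1, h2, by rw [← h5]; rfl⟩

theorem used_tr' {G : Type} {ℓ w h : ℕ} {g : ℕ → ℕ → Tile BWG G} {t : Tile BWG G}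
    (ht : Used ℓ w h g t) : Used ℓ h w (tr g) t.swap :=
  used_tr (g := tr g) ht

namespace Asm

variable {G : Type} {ℓ k w h : ℕ} {P : ℕ → ℕ → ℕ} {g : ℕ → ℕ → Tile BWG G}

theorem transpose (H : Asm ℓ k w h P g) : Asm ℓ k h w (fun x y => P y x) (tr g) where
  hℓ := H.hℓ
  hw := H.hh
  hh := H.hw
  rng := fun x hx y hy => H.rng y hy x hx
  col := fun a b h1 h2 h3 h4 => by
    have := H.hℓ
    have := H.col b a h3 h4 h1 h2
    rw [QS_symm (by omega) (fun x hx y hy => (H.rng x hx y hy).2)] at this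
    exact this
  hor := fun a b h1 h2 h3 h4 => H.ver b a h3 h4 h1 h2
  ver := fun a b h1 h2 h3 h4 => H.hor b a h3 h4 h1 h2
  dir := fun t t' h1 h2 h3 h4 =>
    Tile.swap_inj (H.dir _ _ (used_tr h1) (used_tr h2) h4 h3)
  blk := fun t t' h1 h2 h3 h4 =>
    Tile.swap_inj (H.blk _ _ (used_tr h1) (used_tr h2) h3 h4)
  gry := fun Γ hΓ => by
    classical
    have hc : (Γ.image Tile.swap).card = Γ.card :=
      Finset.card_image_of_injective _ (fun _ _ e => Tile.swap_inj e)
    rw [← hc]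
    apply H.gry
    intro t ht
    obtain ⟨u, hu, rfl⟩ := Finset.mem_image.1 ht
    exact ⟨used_tr (hΓ u hu).1, (hΓ u hu).2⟩

theorem used (_H : Asm ℓ k w h P g) {a b : ℕ} (h1 : 1 ≤ a) (h2 : a < ℓ * w + 3) (h3 : 1 ≤ b)
    (h4 : b < ℓ * h + 3) : Used ℓ w h g (g a b) := ⟨a, b, h1, h2, h3, h4, rfl⟩

theorem lw (H : Asm ℓ k w h P g) : 2 * ℓ ≤ ℓ * w := by
  rw [mul_comm]; exact Nat.mul_le_mul_left _ H.hw

theorem lh (H : Asm ℓ k w h P g) : 2 * ℓ ≤ ℓ * h := H.transpose.lw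

theorem color_in (H : Asm ℓ k w h P g) {x y i j : ℕ} (hx : x < w) (hy : y < h)
    (hi : i < ℓ) (hj : j < ℓ) (ha : 1 ≤ ℓ * x + i) (hb : 1 ≤ ℓ * y + j) :
    (g (ℓ * x + i) (ℓ * y + j)).color = superPat ℓ (P x y) i j := by
  have h1 := mul_succ_le (ℓ := ℓ) hx
  have h2 := mul_succ_le (ℓ := ℓ) hy
  rw [H.col _ _ ha (by omega) hb (by omega), QS_in hx hy hi hj]

theorem color_top (H : Asm ℓ k w h P g) {x i b : ℕ} (hx : x < w)
    (hi : i < ℓ) (ha : 1 ≤ ℓ * x + i) (hb : ℓ * h ≤ b) (hb' : b < ℓ * h + 3) :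
    (g (ℓ * x + i) b).color =
      if b = ℓ * h + 1 then (if ℓ * x + i = k + 1 then BWG.white else BWG.gray)
      else (if i = ℓ - 1 then BWG.gray else BWG.black) := by
  have h1 := mul_succ_le (ℓ := ℓ) hx
  have := H.hℓ
  have := H.lh
  rw [H.col _ _ ha (by omega) (by omega) hb', QS_top hx hi hb]

/-- Interior positions of supertiles are black. -/
theorem black_in (H : Asm ℓ k w h P g) {x y i j : ℕ} (hx : x < w) (hy : y < h)
    (hi : 1 ≤ i) (hi' : i + 2 ≤ ℓ) (hj : 1 ≤ j) (hj' : j + 2 ≤ ℓ) :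
    (g (ℓ * x + i) (ℓ * y + j)).color = BWG.black := by
  rw [H.color_in hx hy (by omega) (by omega) (by omega) (by omega), superPat,
    if_neg (by omega), if_neg (by omega), if_neg (by omega), if_neg (by omega)]

theorem black_one (H : Asm ℓ k w h P g) : (g 1 1).color = BWG.black := by
  have := H.hℓ
  have := H.black_in (x := 0) (y := 0) (i := 1) (j := 1) (by have := H.hw; omega)
    (by have := H.hh; omega) le_rfl (by omega) le_rfl (by omega)
  simpa using this

theorem used_one (H : Asm ℓ k w h P g) : Used ℓ w h g (g 1 1) :=
  H.used le_rfl (by omega) le_rfl (by omega)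

theorem eq_black (H : Asm ℓ k w h P g) {t : Tile BWG G} (ht : Used ℓ w h g t)
    (hc : t.color = BWG.black) : t = g 1 1 :=
  H.blk _ _ ht H.used_one hc H.black_one

/-- The black tile type passes its glues through unchanged. -/
theorem one_north (H : Asm ℓ k w h P g) : (g 1 1).north = (g 1 1).south := by
  have h0 := H.hℓ
  have := H.black_in (x := 0) (y := 0) (i := 1) (j := 2) (by have := H.hw; omega)
    (by have := H.hh; omega) le_rfl (by omega) (by omega) (by omega)
  simp only [mul_zero, zero_add] at this
  have h2 := H.eq_black (H.used le_rfl (by omega) (by omega) (by omega)) this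
  rw [← H.ver 1 1 le_rfl (by omega) le_rfl (by omega), h2]

theorem one_east (H : Asm ℓ k w h P g) : (g 1 1).east = (g 1 1).west :=
  H.transpose.one_north

/-- A used tile with the input glues of the black tile is black. -/
theorem black_of (H : Asm ℓ k w h P g) {t : Tile BWG G} (ht : Used ℓ w h g t)
    (hs : t.south = (g 1 1).south) (hw : t.west = (g 1 1).west) : t.color = BWG.black := by
  rw [H.dir _ _ ht H.used_one hs hw, H.black_one]

theorem north_below (H : Asm ℓ k w h P g) {a b : ℕ} (h1 : 1 ≤ a) (h2 : a < ℓ * w + 3)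
    (h3 : 1 ≤ b) (h4 : b + 1 < ℓ * h + 3) (hc : (g a (b + 1)).color = BWG.black) :
    (g a b).north = (g 1 1).south := by
  rw [← H.ver a b h1 h2 h3 h4, H.eq_black (H.used h1 h2 (by omega) h4) hc]

theorem south_above (H : Asm ℓ k w h P g) {a b : ℕ} (h1 : 1 ≤ a) (h2 : a < ℓ * w + 3)
    (h3 : 1 ≤ b) (h4 : b + 1 < ℓ * h + 3) (hc : (g a b).color = BWG.black) :
    (g a (b + 1)).south = (g 1 1).south := by
  rw [H.ver a b h1 h2 h3 h4, H.eq_black (H.used h1 h2 h3 (by omega)) hc, H.one_north]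

theorem east_left (H : Asm ℓ k w h P g) {a b : ℕ} (h1 : 1 ≤ a) (h2 : a + 1 < ℓ * w + 3)
    (h3 : 1 ≤ b) (h4 : b < ℓ * h + 3) (hc : (g (a + 1) b).color = BWG.black) :
    (g a b).east = (g 1 1).west :=
  H.transpose.north_below h3 h4 h1 h2 hc

theorem west_right (H : Asm ℓ k w h P g) {a b : ℕ} (h1 : 1 ≤ a) (h2 : a + 1 < ℓ * w + 3)
    (h3 : 1 ≤ b) (h4 : b < ℓ * h + 3) (hc : (g a b).color = BWG.black) :
    (g (a + 1) b).west = (g 1 1).west :=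
  H.transpose.south_above h3 h4 h1 h2 hc

/-! ### The gadget row and the gray tile types -/

theorem row_color (H : Asm ℓ k w h P g) {a : ℕ} (h1 : 1 ≤ a) (h2 : a < ℓ) :
    (g a (ℓ * h + 1)).color = if a = k + 1 then BWG.white else BWG.gray := by
  have := H.color_top (x := 0) (i := a) (b := ℓ * h + 1) (by have := H.hw; omega) h2
    (by omega) (by omega) (by omega)
  simpa using this

theorem row_south (H : Asm ℓ k w h P g) {a : ℕ} (h1 : 1 ≤ a) (h2 : a + 2 ≤ ℓ) :
    (g a (ℓ * h + 1)).south = (g 1 1).south := by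
  have := H.hℓ
  have := H.lh
  have := H.lw
  have hc := H.color_top (x := 0) (i := a) (b := ℓ * h) (by have := H.hw; omega) (by omega)
    (by omega) (by omega) (by omega)
  rw [if_neg (by omega), if_neg (by omega)] at hc
  simp only [mul_zero, zero_add] at hc
  exact H.south_above h1 (by omega) (by omega) (by omega) hc

theorem row_north (H : Asm ℓ k w h P g) {a : ℕ} (h1 : 1 ≤ a) (h2 : a + 2 ≤ ℓ) :
    (g a (ℓ * h + 1)).north = (g 1 1).south := by
  have := H.hℓ
  have := H.lh
  have := H.lw
  have hc := H.color_top (x := 0) (i := a) (b := ℓ * h + 2) (by have := H.hw; omega) (by omega)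
    (by omega) (by omega) (by omega)
  rw [if_neg (by omega), if_neg (by omega)] at hc
  simp only [mul_zero, zero_add] at hc
  exact H.north_below h1 (by omega) (by omega) (by omega) hc

theorem row_used (H : Asm ℓ k w h P g) {a : ℕ} (h1 : 1 ≤ a) (h2 : a < ℓ) :
    Used ℓ w h g (g a (ℓ * h + 1)) := by
  have := H.lw
  exact H.used h1 (by omega) (by omega) (by omega)

theorem row_east (H : Asm ℓ k w h P g) {a : ℕ} (h1 : 1 ≤ a) (h2 : a < ℓ) :
    (g a (ℓ * h + 1)).east = (g (a + 1) (ℓ * h + 1)).west := by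
  have := H.lw
  rw [H.hor a _ h1 (by omega) (by omega) (by omega)]

/-- Along the gadget row every tile has the same south glue, hence determines its successor. -/
theorem row_follow (H : Asm ℓ k w h P g) {a a' : ℕ} (h1 : 1 ≤ a) (h1' : 1 ≤ a')
    (e : g a (ℓ * h + 1) = g a' (ℓ * h + 1)) (n : ℕ) (h2 : a + n + 2 ≤ ℓ) (h2' : a' + n + 2 ≤ ℓ) :
    g (a + n) (ℓ * h + 1) = g (a' + n) (ℓ * h + 1) := by
  induction n with
  | zero => exact e
  | succ n ih =>
    have ih := ih (by omega) (by omega)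
    apply H.dir _ _ (H.row_used (by omega) (by omega)) (H.row_used (by omega) (by omega))
    · rw [H.row_south (by omega) (by omega), H.row_south (by omega) (by omega)]
    · rw [← add_assoc, ← add_assoc, ← H.row_east (by omega) (by omega),
        ← H.row_east (by omega) (by omega), ih]

/-- The `k` gray tiles left of the white tile of the gadget row are distinct from each other and
from the tile to the right of the white one. -/
theorem row_ne (H : Asm ℓ k w h P g) {a a' : ℕ} (h1 : 1 ≤ a) (h2 : a < a') (h3 : a ≤ k)
    (h4 : a' ≤ 2 * k + 2) (h5 : a' ≠ k + 1) : g a (ℓ * h + 1) ≠ g a' (ℓ * h + 1) := by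
  intro e
  have h0 := H.hℓ
  have hf := fun n hn hn' => congrArg Tile.color (H.row_follow h1 (by omega) e n hn hn')
  rcases lt_or_gt_of_ne h5 with h6 | h6
  · have := hf (k + 1 - a') (by omega) (by omega)
    rw [H.row_color (by omega) (by omega), H.row_color (by omega) (by omega), if_neg (by omega),
      if_pos (by omega)] at this
    cases this
  · have := hf (k + 1 - a) (by omega) (by omega)
    rw [H.row_color (by omega) (by omega), H.row_color (by omega) (by omega), if_pos (by omega),
      if_neg (by omega)] at this
    cases this

/-- Index of the `k + 1` gray tile types of the gadget row: the `k` tiles left of the white one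
and the tile following it. -/
def ix (k n : ℕ) : ℕ := if n < k then n + 1 else k + 2

theorem ix_inj (H : Asm ℓ k w h P g) {m n : ℕ} (hm : m < k + 1) (hn : n < k + 1)
    (e : g (ix k m) (ℓ * h + 1) = g (ix k n) (ℓ * h + 1)) : m = n := by
  by_contra hne
  have key : ∀ m n, m < n → n < k + 1 → g (ix k m) (ℓ * h + 1) ≠ g (ix k n) (ℓ * h + 1) := by
    intro m n hmn hn
    rw [ix, ix, if_pos (by omega)]
    split_ifs
    · exact H.row_ne (by omega) (by omega) (by omega) (by omega) (by omega)
    · rcases Nat.eq_zero_or_pos k with h0 | h0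
      · omega
      · exact H.row_ne (by omega) (by omega) (by omega) (by omega) (by omega)
  rcases lt_or_gt_of_ne hne with hl | hl
  · exact key m n hl hn e
  · exact key n m hl hm e.symm

open Classical in
/-- The `k + 1` gray tile types of the gadget row. -/
noncomputable def rowSet (k b : ℕ) (g : ℕ → ℕ → Tile BWG G) : Finset (Tile BWG G) :=
  (Finset.range (k + 1)).image fun n => g (ix k n) b

theorem rowSet_card (H : Asm ℓ k w h P g) : (rowSet k (ℓ * h + 1) g).card = k + 1 := by
  classical
  rw [rowSet, Finset.card_image_of_injOn, Finset.card_range]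
  intro m hm n hn e
  simp only [Finset.coe_range, Set.mem_Iio] at hm hn
  exact H.ix_inj hm hn e

theorem ix_bounds (H : Asm ℓ k w h P g) {n : ℕ} (hn : n < k + 1) :
    1 ≤ ix k n ∧ ix k n + 2 ≤ ℓ ∧ ix k n ≠ k + 1 := by
  have := H.hℓ
  unfold ix; split_ifs <;> omega

theorem rowSet_spec (H : Asm ℓ k w h P g) {t : Tile BWG G} (ht : t ∈ rowSet k (ℓ * h + 1) g) :
    Used ℓ w h g t ∧ t.color = BWG.gray ∧ t.south = (g 1 1).south ∧ t.north = (g 1 1).south := by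
  classical
  obtain ⟨n, hn, rfl⟩ := Finset.mem_image.1 ht
  obtain ⟨h1, h2, h3⟩ := H.ix_bounds (Finset.mem_range.1 hn)
  exact ⟨H.row_used h1 (by omega), by rw [H.row_color h1 (by omega), if_neg h3],
    H.row_south h1 h2, H.row_north h1 h2⟩

open Classical in
/-- The `k + 1` gray tile types of the gadget column. -/
noncomputable def colSet (k a : ℕ) (g : ℕ → ℕ → Tile BWG G) : Finset (Tile BWG G) :=
  (rowSet k a (tr g)).image Tile.swap

theorem colSet_card (H : Asm ℓ k w h P g) : (colSet k (ℓ * w + 1) g).card = k + 1 := by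
  classical
  rw [colSet, Finset.card_image_of_injective _ (fun _ _ e => Tile.swap_inj e)]
  exact H.transpose.rowSet_card

theorem colSet_spec (H : Asm ℓ k w h P g) {t : Tile BWG G} (ht : t ∈ colSet k (ℓ * w + 1) g) :
    Used ℓ w h g t ∧ t.color = BWG.gray ∧ t.west = (g 1 1).west ∧ t.east = (g 1 1).west := by
  classical
  obtain ⟨u, hu, rfl⟩ := Finset.mem_image.1 ht
  obtain ⟨h1, h2, h3, h4⟩ := H.transpose.rowSet_spec hu
  exact ⟨used_tr h1, h2, h3, h4⟩

/-- The crossing of the first gray column with the gadget row. -/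
theorem corner_color (H : Asm ℓ k w h P g) : (g (ℓ - 1) (ℓ * h + 1)).color = BWG.gray := by
  have := H.hℓ
  rw [H.row_color (by omega) (by omega), if_neg (by omega)]

theorem corner_north (H : Asm ℓ k w h P g) :
    (g (ℓ - 1) (ℓ * h + 1)).north ≠ (g 1 1).south := by
  intro e
  have h0 := H.hℓ
  have := H.lw
  have := H.lh
  have hc := H.color_top (x := 0) (i := ℓ - 1) (b := ℓ * h + 2) (by have := H.hw; omega) (by omega)
    (by omega) (by omega) (by omega)
  have hc' := H.color_top (x := 0) (i := ℓ - 2) (b := ℓ * h + 2) (by have := H.hw; omega)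
    (by omega) (by omega) (by omega) (by omega)
  rw [if_neg (by omega), if_pos (by omega)] at hc
  rw [if_neg (by omega), if_neg (by omega)] at hc'
  simp only [mul_zero, zero_add] at hc hc'
  have h1 := H.west_right (a := ℓ - 2) (b := ℓ * h + 2) (by omega) (by omega) (by omega)
    (by omega) hc'
  rw [show ℓ - 2 + 1 = ℓ - 1 by omega] at h1
  rw [← H.ver _ _ (by omega) (by omega) (by omega) (by omega)] at e
  rw [H.black_of (H.used (by omega) (by omega) (by omega) (by omega)) e h1] at hc
  cases hc

theorem corner_east (H : Asm ℓ k w h P g) :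
    (g (ℓ - 1) (ℓ * h + 1)).east ≠ (g 1 1).west := by
  intro e
  have h0 := H.hℓ
  have := H.lw
  have := H.lh
  have hc := H.color_top (x := 1) (i := 0) (b := ℓ * h + 1) (by have := H.hw; omega) (by omega)
    (by omega) (by omega) (by omega)
  have hc' := H.color_top (x := 1) (i := 0) (b := ℓ * h) (by have := H.hw; omega)
    (by omega) (by omega) (by omega) (by omega)
  rw [if_pos rfl, if_neg (by omega)] at hc
  rw [if_neg (by omega), if_neg (by omega)] at hc'
  simp only [mul_one, add_zero] at hc hc'
  have h1 := H.south_above (a := ℓ) (b := ℓ * h) (by omega) (by omega) (by omega)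
    (by omega) hc'
  rw [← H.hor _ _ (by omega) (by omega) (by omega) (by omega),
    show ℓ - 1 + 1 = ℓ by omega] at e
  rw [H.black_of (H.used (by omega) (by omega) (by omega) (by omega)) h1 e] at hc
  cases hc

theorem rowSet_disj (H : Asm ℓ k w h P g) :
    Disjoint (rowSet k (ℓ * h + 1) g) (colSet k (ℓ * w + 1) g) := by
  classical
  rw [Finset.disjoint_left]
  intro t h1 h2
  have h1 := H.rowSet_spec h1
  have h2 := H.colSet_spec h2
  have := H.black_of h1.1 h1.2.2.1 h2.2.2.1
  rw [h2.2.1] at this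
  cases this

open Classical in
/-- The budget of gray tile types is exhausted by the gadget row, the gadget column, and one
crossing tile. -/
theorem gray_extra (H : Asm ℓ k w h P g) {t t' : Tile BWG G} (ht : Used ℓ w h g t)
    (ht' : Used ℓ w h g t') (hc : t.color = BWG.gray) (hc' : t'.color = BWG.gray)
    (h1 : t ∉ rowSet k (ℓ * h + 1) g) (h2 : t ∉ colSet k (ℓ * w + 1) g)
    (h1' : t' ∉ rowSet k (ℓ * h + 1) g) (h2' : t' ∉ colSet k (ℓ * w + 1) g) : t = t' := by
  by_contra hne
  have hcard : (insert t (insert t' (rowSet k (ℓ * h + 1) g ∪ colSet k (ℓ * w + 1) g))).card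
      = (k + 1) + (k + 1) + 1 + 1 := by
    rw [Finset.card_insert_of_notMem (by simp [hne, h1, h2]),
      Finset.card_insert_of_notMem (by simp [h1', h2']),
      Finset.card_union_of_disjoint H.rowSet_disj, H.rowSet_card, H.colSet_card]
  have := H.gry (insert t (insert t' (rowSet k (ℓ * h + 1) g ∪ colSet k (ℓ * w + 1) g))) (by
    intro u hu
    simp only [Finset.mem_insert, Finset.mem_union] at hu
    rcases hu with rfl | rfl | hu | hu
    · exact ⟨ht, hc⟩
    · exact ⟨ht', hc'⟩
    · exact ⟨(H.rowSet_spec hu).1, (H.rowSet_spec hu).2.1⟩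
    · exact ⟨(H.colSet_spec hu).1, (H.colSet_spec hu).2.1⟩)
  omega

theorem corner_used (H : Asm ℓ k w h P g) : Used ℓ w h g (g (ℓ - 1) (ℓ * h + 1)) := by
  have := H.hℓ
  exact H.row_used (by omega) (by omega)

theorem corner_notMem_row (H : Asm ℓ k w h P g) :
    g (ℓ - 1) (ℓ * h + 1) ∉ rowSet k (ℓ * h + 1) g :=
  fun hm => H.corner_north (H.rowSet_spec hm).2.2.2

theorem corner_notMem_col (H : Asm ℓ k w h P g) :
    g (ℓ - 1) (ℓ * h + 1) ∉ colSet k (ℓ * w + 1) g :=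
  fun hm => H.corner_east (H.colSet_spec hm).2.2.2

/-- The gadget row and the gadget column use the same crossing tile. -/
theorem corner_eq (H : Asm ℓ k w h P g) :
    g (ℓ - 1) (ℓ * h + 1) = g (ℓ * w + 1) (ℓ - 1) :=
  H.gray_extra H.corner_used (used_tr H.transpose.corner_used) H.corner_color
    H.transpose.corner_color H.corner_notMem_row H.corner_notMem_col
    (fun hm => H.transpose.corner_east (H.rowSet_spec hm).2.2.2)
    (fun hm => H.transpose.corner_north (H.colSet_spec hm).2.2.2)

theorem gray_cases (H : Asm ℓ k w h P g) {t : Tile BWG G} (ht : Used ℓ w h g t)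
    (hc : t.color = BWG.gray) : t ∈ rowSet k (ℓ * h + 1) g ∨ t ∈ colSet k (ℓ * w + 1) g ∨
      t = g (ℓ - 1) (ℓ * h + 1) := by
  by_contra hcon
  push Not at hcon
  exact hcon.2.2 (H.gray_extra ht H.corner_used hc H.corner_color hcon.1 hcon.2.1
    H.corner_notMem_row H.corner_notMem_col)

theorem k_pos (H : Asm ℓ k w h P g) : 1 ≤ k := by
  have := H.rng 0 (by have := H.hw; omega) 0 (by have := H.hh; omega)
  omega

theorem row_post (H : Asm ℓ k w h P g) :
    g (k + 3) (ℓ * h + 1) = g (k + 2) (ℓ * h + 1) := by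
  classical
  have h0 := H.hℓ
  have hk := H.k_pos
  have hu := H.row_used (a := k + 3) (by omega) (by omega)
  have hg : (g (k + 3) (ℓ * h + 1)).color = BWG.gray := by
    rw [H.row_color (by omega) (by omega), if_neg (by omega)]
  have hs := H.row_south (a := k + 3) (by omega) (by omega)
  rcases H.gray_cases hu hg with hm | hm | hm
  · obtain ⟨n, hn, e⟩ := Finset.mem_image.1 hm
    rw [Finset.mem_range] at hn
    rw [ix] at e
    split_ifs at e
    · exact absurd e (H.row_ne (by omega) (by omega) (by omega) (by omega) (by omega))
    · exact e.symm
  · have := H.black_of hu hs (H.colSet_spec hm).2.2.1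
    rw [hg] at this; cases this
  · exact absurd (hm ▸ H.row_north (a := k + 3) (by omega) (by omega)) H.corner_north

/-- After the white tile, the gadget row is constant. -/
theorem row_const (H : Asm ℓ k w h P g) {a : ℕ} (h1 : k + 2 ≤ a) (h2 : a + 2 ≤ ℓ) :
    g a (ℓ * h + 1) = g (k + 2) (ℓ * h + 1) := by
  obtain ⟨n, rfl⟩ := Nat.exists_eq_add_of_le h1
  induction n with
  | zero => rfl
  | succ n ih =>
    rw [← ih (by omega) (by omega), show k + 2 + (n + 1) = k + 3 + n by ring]
    exact H.row_follow (by omega) (by omega) H.row_post n (by omega) (by omega)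

end Asm

/-! ### The characteristic glues -/

section Glues

variable {G : Type}

/-- The glue passed vertically by the black tile type. -/
def sg (g : ℕ → ℕ → Tile BWG G) : G := (g 1 1).south

/-- The glue passed horizontally by the black tile type. -/
def vg (g : ℕ → ℕ → Tile BWG G) : G := sg (tr g)

/-- The horizontal glue signalling that the row color counter is completed. -/
def tau (ℓ k h : ℕ) (g : ℕ → ℕ → Tile BWG G) : G := (g (k + 2) (ℓ * h + 1)).west

/-- The vertical glue signalling that the column color counter is completed. -/
def sig (ℓ k w : ℕ) (g : ℕ → ℕ → Tile BWG G) : G := tau ℓ k w (tr g)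

/-- The horizontal glue that starts the row color counter for the color `c`. -/
def wr (ℓ k h : ℕ) (g : ℕ → ℕ → Tile BWG G) (c : ℕ) : G := (g (k + 1 - c) (ℓ * h + 1)).west

/-- The vertical glue that starts the column color counter for the color `c`. -/
def cr (ℓ k w : ℕ) (g : ℕ → ℕ → Tile BWG G) (c : ℕ) : G := wr ℓ k w (tr g) c

end Glues

namespace Asm

variable {G : Type} {ℓ k w h : ℕ} {P : ℕ → ℕ → ℕ} {g : ℕ → ℕ → Tile BWG G}

theorem row_const_east (H : Asm ℓ k w h P g) :
    (g (k + 2) (ℓ * h + 1)).east = tau ℓ k h g := by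
  have h0 := H.hℓ
  rw [H.row_east (by omega) (by omega), H.row_post]; rfl

theorem white_east (H : Asm ℓ k w h P g) :
    (g (k + 1) (ℓ * h + 1)).east = tau ℓ k h g := by
  have h0 := H.hℓ
  rw [H.row_east (by omega) (by omega)]; rfl

theorem corner_west (H : Asm ℓ k w h P g) :
    (g (ℓ - 1) (ℓ * h + 1)).west = tau ℓ k h g := by
  have h0 := H.hℓ
  have := H.row_east (a := ℓ - 2) (by omega) (by omega)
  rw [show ℓ - 2 + 1 = ℓ - 1 by omega] at this
  rw [← this, H.row_const (by omega) (by omega), H.row_const_east]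

theorem corner_south_ne (H : Asm ℓ k w h P g) :
    (g (ℓ - 1) (ℓ * h + 1)).south ≠ sg g := by
  intro e
  have h0 := H.hℓ
  have hk := H.k_pos
  have := H.dir _ _ H.corner_used (H.row_used (a := k + 2) (by omega) (by omega))
    (by rw [e, H.row_south (a := k + 2) (by omega) (by omega)]; rfl) H.corner_west
  exact H.corner_north (by rw [this]; exact H.row_north (by omega) (by omega))

theorem corner_south (H : Asm ℓ k w h P g) :
    (g (ℓ - 1) (ℓ * h + 1)).south = sig ℓ k w g := by
  rw [H.corner_eq]; exact H.transpose.corner_west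

theorem sig_ne (H : Asm ℓ k w h P g) : sig ℓ k w g ≠ sg g := by
  rw [← H.corner_south]; exact H.corner_south_ne

/-- A gray tile whose south glue is that of the black tile is one of the `k + 1` gray tiles of
the gadget row. -/
theorem gray_south (H : Asm ℓ k w h P g) {t : Tile BWG G} (ht : Used ℓ w h g t)
    (hc : t.color = BWG.gray) (hs : t.south = sg g) :
    ∃ n < k + 1, t = g (ix k n) (ℓ * h + 1) := by
  classical
  rcases H.gray_cases ht hc with hm | hm | hm
  · obtain ⟨n, hn, e⟩ := Finset.mem_image.1 hm
    exact ⟨n, Finset.mem_range.1 hn, e.symm⟩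
  · have := H.black_of ht hs (H.colSet_spec hm).2.2.1
    rw [hc] at this; cases this
  · rw [hm] at hs
    exact absurd hs H.corner_south_ne

/-! ### The color counters of the supertiles -/

theorem top_color (H : Asm ℓ k w h P g) {x y i : ℕ} (hx : x < w) (hy : y < h)
    (hi : 1 ≤ i) (hi' : i < ℓ) : (g (ℓ * x + i) (ℓ * y + (ℓ - 1))).color =
      if i = P x y + 1 then BWG.white else BWG.gray := by
  have h0 := H.hℓ
  rw [H.color_in hx hy hi' (by omega) (by omega) (by omega), superPat, if_neg (by omega),
    if_neg (by omega), if_pos rfl]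

theorem top_used (H : Asm ℓ k w h P g) {x y i : ℕ} (hx : x < w) (hy : y < h)
    (hi : 1 ≤ i) (hi' : i < ℓ) : Used ℓ w h g (g (ℓ * x + i) (ℓ * y + (ℓ - 1))) := by
  have h0 := H.hℓ
  have h1 := mul_succ_le (ℓ := ℓ) hx
  have h2 := mul_succ_le (ℓ := ℓ) hy
  exact H.used (by omega) (by omega) (by omega) (by omega)

theorem top_south (H : Asm ℓ k w h P g) {x y i : ℕ} (hx : x < w) (hy : y < h)
    (hi : 1 ≤ i) (hi' : i + 2 ≤ ℓ) :
    (g (ℓ * x + i) (ℓ * y + (ℓ - 1))).south = sg g := by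
  have h0 := H.hℓ
  have h1 := mul_succ_le (ℓ := ℓ) hx
  have h2 := mul_succ_le (ℓ := ℓ) hy
  have := H.south_above (a := ℓ * x + i) (b := ℓ * y + (ℓ - 2)) (by omega) (by omega) (by omega)
    (by omega) (H.black_in hx hy hi hi' (by omega) (by omega))
  rwa [show ℓ * y + (ℓ - 2) + 1 = ℓ * y + (ℓ - 1) by omega] at this

theorem top_east (H : Asm ℓ k w h P g) {x y i : ℕ} (hx : x < w) (hy : y < h)
    (hi : 1 ≤ i) (hi' : i < ℓ) : (g (ℓ * x + i) (ℓ * y + (ℓ - 1))).east =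
      (g (ℓ * x + (i + 1)) (ℓ * y + (ℓ - 1))).west := by
  have h0 := H.hℓ
  have h1 := mul_succ_le (ℓ := ℓ) hx
  have h2 := mul_succ_le (ℓ := ℓ) hy
  rw [← add_assoc, H.hor _ _ (by omega) (by omega) (by omega) (by omega)]

/-- If the top row of a supertile starts with a tile of the gadget row then it copies the gadget
row. -/
theorem top_follow (H : Asm ℓ k w h P g) {x y a : ℕ} (hx : x < w) (hy : y < h) (ha : 1 ≤ a)
    (e : g (ℓ * x + 1) (ℓ * y + (ℓ - 1)) = g a (ℓ * h + 1)) (n : ℕ) (hn : n + 3 ≤ ℓ)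
    (hn' : a + n + 2 ≤ ℓ) :
    g (ℓ * x + (n + 1)) (ℓ * y + (ℓ - 1)) = g (a + n) (ℓ * h + 1) := by
  induction n with
  | zero => exact e
  | succ n ih =>
    apply H.dir _ _ (H.top_used hx hy (by omega) (by omega)) (H.row_used (by omega) (by omega))
    · rw [H.top_south hx hy (by omega) (by omega), H.row_south (by omega) (by omega)]; rfl
    · rw [← H.top_east hx hy (by omega) (by omega), show a + (n + 1) = a + n + 1 from rfl,
        ← H.row_east (by omega) (by omega), ih (by omega) (by omega)]

/-- The top row of a supertile portraying `c` starts with the `(k + 1 - c)`-th tile of the gadget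
row: this is how the position of the white tile encodes the color. -/
theorem top_first (H : Asm ℓ k w h P g) {x y : ℕ} (hx : x < w) (hy : y < h) :
    g (ℓ * x + 1) (ℓ * y + (ℓ - 1)) = g (k + 1 - P x y) (ℓ * h + 1) := by
  have h0 := H.hℓ
  have hr := H.rng x hx y hy
  obtain ⟨n, hn, e⟩ := H.gray_south (H.top_used hx hy le_rfl (by omega))
    (by rw [H.top_color hx hy (by omega) (by omega), if_neg (by omega)])
    (H.top_south hx hy le_rfl (by omega))
  obtain ⟨h1, h2, h3⟩ := H.ix_bounds hn
  have h4 : ix k n ≤ k + 2 := by unfold ix; split_ifs <;> omega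
  have := congrArg Tile.color (H.top_follow hx hy h1 e (P x y) (by omega) (by omega))
  rw [H.top_color hx hy (by omega) (by omega), H.row_color (by omega) (by omega),
    if_pos rfl] at this
  split_ifs at this with h5
  rw [e]; congr 1; omega

theorem top_follow' (H : Asm ℓ k w h P g) {x y n : ℕ} (hx : x < w) (hy : y < h)
    (hn : n ≤ P x y + 1) :
    g (ℓ * x + (n + 1)) (ℓ * y + (ℓ - 1)) = g (k + 1 - P x y + n) (ℓ * h + 1) := by
  have h0 := H.hℓ
  have hr := H.rng x hx y hy
  exact H.top_follow hx hy (by omega) (H.top_first hx hy) n (by omega) (by omega)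

theorem top_const (H : Asm ℓ k w h P g) {x y i : ℕ} (hx : x < w) (hy : y < h)
    (hi : P x y + 2 ≤ i) (hi' : i + 2 ≤ ℓ) :
    g (ℓ * x + i) (ℓ * y + (ℓ - 1)) = g (k + 2) (ℓ * h + 1) := by
  have h0 := H.hℓ
  have hr := H.rng x hx y hy
  obtain ⟨n, rfl⟩ := Nat.exists_eq_add_of_le hi
  induction n with
  | zero =>
    rw [add_zero, H.top_follow' hx hy le_rfl]; congr 1; omega
  | succ n ih =>
    apply H.dir _ _ (H.top_used hx hy (by omega) (by omega)) (H.row_used (by omega) (by omega))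
    · rw [H.top_south hx hy (by omega) (by omega), H.row_south (by omega) (by omega)]; rfl
    · rw [show P x y + 2 + (n + 1) = P x y + 2 + n + 1 from rfl,
        ← H.top_east hx hy (by omega) (by omega), ih (by omega) (by omega), H.row_const_east]; rfl

theorem top_north (H : Asm ℓ k w h P g) {x y i : ℕ} (hx : x < w) (hy : y < h)
    (hi : 1 ≤ i) (hi' : i + 2 ≤ ℓ) :
    (g (ℓ * x + i) (ℓ * y + (ℓ - 1))).north = sg g := by
  have h0 := H.hℓ
  have hr := H.rng x hx y hy
  by_cases hc : i ≤ P x y + 2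
  · obtain ⟨n, rfl⟩ := Nat.exists_eq_add_of_le' hi
    rw [H.top_follow' hx hy (by omega)]
    exact H.row_north (by omega) (by omega)
  · rw [H.top_const hx hy (by omega) hi']
    exact H.row_north (by omega) (by omega)

theorem top_west (H : Asm ℓ k w h P g) {x y : ℕ} (hx : x < w) (hy : y < h) :
    (g (ℓ * x + 1) (ℓ * y + (ℓ - 1))).west = wr ℓ k h g (P x y) := by
  rw [H.top_first hx hy]; rfl

theorem super_corner_west (H : Asm ℓ k w h P g) {x y : ℕ} (hx : x < w) (hy : y < h) :
    (g (ℓ * x + (ℓ - 1)) (ℓ * y + (ℓ - 1))).west = tau ℓ k h g := by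
  have h0 := H.hℓ
  have hr := H.rng x hx y hy
  rw [show ℓ * x + (ℓ - 1) = ℓ * x + (ℓ - 2 + 1) by omega,
    ← H.top_east hx hy (by omega) (by omega), H.top_const hx hy (by omega) (by omega),
    H.row_const_east]

/-- All top right corners of supertiles are the crossing tile. -/
theorem super_corner (H : Asm ℓ k w h P g) {x y : ℕ} (hx : x < w) (hy : y < h) :
    g (ℓ * x + (ℓ - 1)) (ℓ * y + (ℓ - 1)) = g (ℓ - 1) (ℓ * h + 1) := by
  have h0 := H.hℓ
  apply H.dir _ _ (H.top_used hx hy (by omega) (by omega)) H.corner_used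
  · rw [H.corner_south]; exact H.transpose.super_corner_west hy hx
  · rw [H.corner_west]; exact H.super_corner_west hx hy

theorem tau_ne (H : Asm ℓ k w h P g) : tau ℓ k h g ≠ vg g := H.transpose.sig_ne

/-- The crossing tile passes the vertical completion signal. -/
theorem corner_north_eq (H : Asm ℓ k w h P g) :
    (g (ℓ - 1) (ℓ * h + 1)).north = sig ℓ k w g := by
  have h0 := H.hℓ
  have := H.lw
  have := H.lh
  have HT := H.transpose
  have hw := H.hw
  have hh := H.hh
  have hc := H.color_top (x := 0) (i := ℓ - 1) (b := ℓ * h) (by omega) (by omega)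
    (by omega) (by omega) (by omega)
  have hc' := H.color_top (x := 0) (i := ℓ - 2) (b := ℓ * h) (by omega)
    (by omega) (by omega) (by omega) (by omega)
  rw [if_neg (by omega), if_pos (by omega)] at hc
  rw [if_neg (by omega), if_neg (by omega)] at hc'
  simp only [mul_zero, zero_add] at hc hc'
  have h1 := H.west_right (a := ℓ - 2) (b := ℓ * h) (by omega) (by omega) (by omega)
    (by omega) hc'
  rw [show ℓ - 2 + 1 = ℓ - 1 by omega] at h1
  have hu : Used ℓ w h g (g (ℓ - 1) (ℓ * h)) := H.used (by omega) (by omega) (by omega) (by omega)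
  obtain ⟨n, hn, e⟩ := HT.gray_south (t := (g (ℓ - 1) (ℓ * h)).swap) (used_tr' hu) hc h1
  -- the tile below the crossing of the gadget row passes `sig` upwards
  have h2 : (g (ℓ - 1) (ℓ * h)).north = sig ℓ k w g := by
    rw [← H.ver _ _ (by omega) (by omega) (by omega) (by omega), H.corner_south]
  have h3 : (tr g (ix k n) (ℓ * w + 1)).east = sig ℓ k w g := by rw [← e]; exact h2
  obtain ⟨i1, i2, i3⟩ := HT.ix_bounds hn
  have hlt : ix k n ≤ k + 2 := by unfold ix; split_ifs <;> omega
  rw [HT.row_east i1 (by omega)] at h3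
  have h4 : tr g (ix k n + 1) (ℓ * w + 1) = tr g (k + 2) (ℓ * w + 1) :=
    HT.dir _ _ (HT.row_used (by omega) (by omega)) (HT.row_used (by omega) (by omega))
      (by rw [HT.row_south (by omega) (by omega), HT.row_south (by omega) (by omega)]) h3
  have h5 : ix k n = k + 2 := by
    by_contra hne
    by_cases h6 : ix k n = k
    · have := congrArg Tile.color h4
      rw [HT.row_color (by omega) (by omega), HT.row_color (by omega) (by omega),
        if_pos (by omega), if_neg (by omega)] at this
      cases this
    · have hk := H.k_pos
      exact HT.row_ne (a := ix k n + 1) (a' := k + 2) (by omega) (by omega) (by omega) (by omega)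
        (by omega) h4
  have h6 : (g (ℓ - 1) (ℓ * h)).south = sig ℓ k w g := by
    rw [h5] at e
    have := congrArg Tile.west e
    exact this
  have h7 := H.super_corner (x := 0) (y := h - 1) (by omega) (by omega)
  have h8 : ℓ * (h - 1) + ℓ = ℓ * h := by
    rw [← Nat.mul_succ]; congr 1; omega
  rw [mul_zero, zero_add] at h7
  rw [← h7, ← H.ver _ _ (by omega) (by omega) (by omega) (by omega),
    show ℓ * (h - 1) + (ℓ - 1) + 1 = ℓ * h by omega, h6]

theorem corner_east_eq (H : Asm ℓ k w h P g) :
    (g (ℓ - 1) (ℓ * h + 1)).east = tau ℓ k h g := by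
  rw [H.corner_eq]; exact H.transpose.corner_north_eq

/-! ### Forbidden inputs of white tiles -/

theorem wr_lt (H : Asm ℓ k w h P g) {c : ℕ} (h1 : 1 ≤ c) (h2 : c ≤ k) :
    1 ≤ k + 1 - c ∧ k + 1 - c + 2 ≤ ℓ := by
  have h0 := H.hℓ
  omega

theorem wr_inj (H : Asm ℓ k w h P g) {c c' : ℕ} (h1 : 1 ≤ c) (h2 : c ≤ k) (h1' : 1 ≤ c')
    (h2' : c' ≤ k) (e : wr ℓ k h g c = wr ℓ k h g c') : c = c' := by
  have h0 := H.hℓ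
  have e' := H.dir _ _ (H.row_used (a := k + 1 - c) (by omega) (by omega))
    (H.row_used (a := k + 1 - c') (by omega) (by omega))
    (by rw [H.row_south (by omega) (by omega), H.row_south (by omega) (by omega)]) e
  by_contra hne
  rcases lt_or_gt_of_ne hne with hl | hl
  · exact H.row_ne (by omega) (by omega) (by omega) (by omega) (by omega) e'.symm
  · exact H.row_ne (by omega) (by omega) (by omega) (by omega) (by omega) e'

theorem bad_black (H : Asm ℓ k w h P g) {t : Tile BWG G} (ht : Used ℓ w h g t)
    (hc : t.color = BWG.white) (hs : t.south = sg g) : t.west ≠ vg g := by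
  intro e
  have := H.black_of ht hs e
  rw [hc] at this; cases this

theorem bad_wr (H : Asm ℓ k w h P g) {t : Tile BWG G} (ht : Used ℓ w h g t)
    (hc : t.color = BWG.white) (hs : t.south = sg g) {c : ℕ} (h1 : 1 ≤ c) (h2 : c ≤ k) :
    t.west ≠ wr ℓ k h g c := by
  intro e
  have h0 := H.hℓ
  have := H.dir _ _ ht (H.row_used (a := k + 1 - c) (by omega) (by omega))
    (by rw [H.row_south (by omega) (by omega), hs]; rfl) e
  rw [this, H.row_color (by omega) (by omega), if_neg (by omega)] at hc
  cases hc

theorem bad_tau (H : Asm ℓ k w h P g) {t : Tile BWG G} (ht : Used ℓ w h g t)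
    (hc : t.color = BWG.white) (hs : t.south = sg g) : t.west ≠ tau ℓ k h g := by
  intro e
  have h0 := H.hℓ
  have := H.dir _ _ ht (H.row_used (a := k + 2) (by omega) (by omega))
    (by rw [H.row_south (by omega) (by omega), hs]; rfl) e
  rw [this, H.row_color (by omega) (by omega), if_neg (by omega)] at hc
  cases hc

theorem bad_corner (H : Asm ℓ k w h P g) {t : Tile BWG G} (ht : Used ℓ w h g t)
    (hc : t.color = BWG.white) (hs : t.south = sig ℓ k w g) : t.west ≠ tau ℓ k h g := by
  intro e
  have := H.dir _ _ ht H.corner_used (by rw [hs, H.corner_south]) (by rw [e, H.corner_west])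
  rw [this, H.corner_color] at hc
  cases hc

theorem wr_ne (H : Asm ℓ k w h P g) {c : ℕ} (h1 : 1 ≤ c) (h2 : c ≤ k) :
    wr ℓ k h g c ≠ vg g := by
  intro e
  have h0 := H.hℓ
  have := H.black_of (H.row_used (a := k + 1 - c) (by omega) (by omega))
    (H.row_south (by omega) (by omega)) e
  rw [H.row_color (by omega) (by omega), if_neg (by omega)] at this
  cases this

theorem cr_ne (H : Asm ℓ k w h P g) {c : ℕ} (h1 : 1 ≤ c) (h2 : c ≤ k) :
    cr ℓ k w g c ≠ sg g := H.transpose.wr_ne h1 h2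

theorem cr_inj (H : Asm ℓ k w h P g) {c c' : ℕ} (h1 : 1 ≤ c) (h2 : c ≤ k) (h1' : 1 ≤ c')
    (h2' : c' ≤ k) (e : cr ℓ k w g c = cr ℓ k w g c') : c = c' :=
  H.transpose.wr_inj h1 h2 h1' h2' e

theorem bad_cr (H : Asm ℓ k w h P g) {t : Tile BWG G} (ht : Used ℓ w h g t)
    (hc : t.color = BWG.white) (hs : t.west = vg g) {c : ℕ} (h1 : 1 ≤ c) (h2 : c ≤ k) :
    t.south ≠ cr ℓ k w g c :=
  H.transpose.bad_wr (used_tr' ht) hc hs h1 h2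

theorem bad_sig (H : Asm ℓ k w h P g) {t : Tile BWG G} (ht : Used ℓ w h g t)
    (hc : t.color = BWG.white) (hs : t.west = vg g) : t.south ≠ sig ℓ k w g :=
  H.transpose.bad_tau (used_tr' ht) hc hs

end Asm

/-! ### The white tiles in the bottom rows and left columns of supertiles -/

namespace Asm

variable {G : Type} {ℓ k w h : ℕ} {P : ℕ → ℕ → ℕ} {g : ℕ → ℕ → Tile BWG G}

theorem bot_white (H : Asm ℓ k w h P g) {x y i : ℕ} (hx : x < w) (hy : y < h) (hy1 : 1 ≤ y)
    (hi : i < ℓ) (ha : 1 ≤ ℓ * x + i) : (g (ℓ * x + i) (ℓ * y)).color = BWG.white := by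
  have h0 := H.hℓ
  have h1 : ℓ * 1 ≤ ℓ * y := Nat.mul_le_mul_left _ hy1
  have := H.color_in (j := 0) hx hy hi (by omega) ha (by omega)
  rw [superPat, if_pos rfl] at this
  exact this

theorem bot_used (H : Asm ℓ k w h P g) {x y i : ℕ} (hx : x < w) (hy : y < h) (hy1 : 1 ≤ y)
    (hi : i < ℓ) (ha : 1 ≤ ℓ * x + i) : Used ℓ w h g (g (ℓ * x + i) (ℓ * y)) := by
  have h0 := H.hℓ
  have h1 : ℓ * 1 ≤ ℓ * y := Nat.mul_le_mul_left _ hy1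
  have h2 := mul_succ_le (ℓ := ℓ) hx
  have h3 := mul_succ_le (ℓ := ℓ) hy
  exact H.used ha (by omega) (by omega) (by omega)

theorem bot_south_eq (H : Asm ℓ k w h P g) {x y i : ℕ} (hx : x < w) (hy : y < h) (hy1 : 1 ≤ y)
    (hi : i < ℓ) (ha : 1 ≤ ℓ * x + i) :
    (g (ℓ * x + i) (ℓ * y)).south = (g (ℓ * x + i) (ℓ * (y - 1) + (ℓ - 1))).north := by
  have h0 := H.hℓ
  obtain ⟨y, rfl⟩ := Nat.exists_eq_add_of_le' hy1
  have h2 := mul_succ_le (ℓ := ℓ) hx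
  have h3 := mul_succ_le (ℓ := ℓ) hy
  have e : ℓ * (y + 1) = ℓ * y + (ℓ - 1) + 1 := by rw [Nat.mul_succ]; omega
  rw [e, H.ver _ _ ha (by omega) (by omega) (by omega), Nat.add_sub_cancel]

theorem bot_south (H : Asm ℓ k w h P g) {x y i : ℕ} (hx : x < w) (hy : y < h) (hy1 : 1 ≤ y)
    (hi : 1 ≤ i) (hi' : i + 2 ≤ ℓ) : (g (ℓ * x + i) (ℓ * y)).south = sg g := by
  rw [H.bot_south_eq hx hy hy1 (by omega) (by omega), H.top_north hx (by omega) hi hi']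

theorem bot_north (H : Asm ℓ k w h P g) {x y i : ℕ} (hx : x < w) (hy : y < h) (hy1 : 1 ≤ y)
    (hi : 1 ≤ i) (hi' : i + 2 ≤ ℓ) : (g (ℓ * x + i) (ℓ * y)).north = sg g := by
  have h0 := H.hℓ
  have h1 : ℓ * 1 ≤ ℓ * y := Nat.mul_le_mul_left _ hy1
  have h2 := mul_succ_le (ℓ := ℓ) hx
  have h3 := mul_succ_le (ℓ := ℓ) hy
  exact H.north_below (by omega) (by omega) (by omega) (by omega)
    (H.black_in hx hy hi hi' le_rfl (by omega))

theorem c1_south (H : Asm ℓ k w h P g) {x y : ℕ} (hx : x < w) (hy : y < h) (hy1 : 1 ≤ y) :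
    (g (ℓ * x + (ℓ - 1)) (ℓ * y)).south = sig ℓ k w g := by
  have h0 := H.hℓ
  rw [H.bot_south_eq hx hy hy1 (by omega) (by omega), H.super_corner hx (by omega),
    H.corner_north_eq]

theorem c1_north (H : Asm ℓ k w h P g) {x y : ℕ} (hx : x < w) (hy : y < h) (hy1 : 1 ≤ y) :
    (g (ℓ * x + (ℓ - 1)) (ℓ * y)).north = cr ℓ k w g (P x y) := by
  have h0 := H.hℓ
  have h1 : ℓ * 1 ≤ ℓ * y := Nat.mul_le_mul_left _ hy1
  have h2 := mul_succ_le (ℓ := ℓ) hx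
  have h3 := mul_succ_le (ℓ := ℓ) hy
  rw [← H.ver _ _ (by omega) (by omega) (by omega) (by omega)]
  exact H.transpose.top_west hy hx

theorem bot_east (H : Asm ℓ k w h P g) {x y i : ℕ} (hx : x < w) (hy : y < h) (hy1 : 1 ≤ y)
    (hi : i < ℓ) (ha : 1 ≤ ℓ * x + i) :
    (g (ℓ * x + i) (ℓ * y)).east = (g (ℓ * x + (i + 1)) (ℓ * y)).west := by
  have h0 := H.hℓ
  have h1 : ℓ * 1 ≤ ℓ * y := Nat.mul_le_mul_left _ hy1
  have h2 := mul_succ_le (ℓ := ℓ) hx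
  have h3 := mul_succ_le (ℓ := ℓ) hy
  rw [← add_assoc, H.hor _ _ (by omega) (by omega) (by omega) (by omega)]

/-- Two supertiles with the same second bottom tile have the same bottom row from there on. -/
theorem bot_follow (H : Asm ℓ k w h P g) {x y x' y' : ℕ} (hx : x < w) (hy : y < h) (hy1 : 1 ≤ y)
    (hx' : x' < w) (hy' : y' < h) (hy1' : 1 ≤ y')
    (e : g (ℓ * x + 1) (ℓ * y) = g (ℓ * x' + 1) (ℓ * y')) :
    g (ℓ * x + (ℓ - 1)) (ℓ * y) = g (ℓ * x' + (ℓ - 1)) (ℓ * y') := by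
  have h0 := H.hℓ
  have key : ∀ n, n + 3 ≤ ℓ →
      g (ℓ * x + (n + 1)) (ℓ * y) = g (ℓ * x' + (n + 1)) (ℓ * y') := by
    intro n hn
    induction n with
    | zero => exact e
    | succ n ih =>
      apply H.dir _ _ (H.bot_used hx hy hy1 (by omega) (by omega))
        (H.bot_used hx' hy' hy1' (by omega) (by omega))
      · rw [H.bot_south hx hy hy1 (by omega) (by omega),
          H.bot_south hx' hy' hy1' (by omega) (by omega)]
      · rw [← H.bot_east hx hy hy1 (by omega) (by omega),
          ← H.bot_east hx' hy' hy1' (by omega) (by omega), ih (by omega)]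
  apply H.dir _ _ (H.bot_used hx hy hy1 (by omega) (by omega))
    (H.bot_used hx' hy' hy1' (by omega) (by omega))
  · rw [H.c1_south hx hy hy1, H.c1_south hx' hy' hy1']
  · have := key (ℓ - 3) (by omega)
    rw [show ℓ - 1 = (ℓ - 3 + 1) + 1 by omega,
      ← H.bot_east hx hy hy1 (by omega) (by omega),
      ← H.bot_east hx' hy' hy1' (by omega) (by omega), this]

/-- The bottom left tile of a supertile determines its bottom right tile. -/
theorem a_c1 (H : Asm ℓ k w h P g) {x y x' y' : ℕ} (hx : x < w) (hx1 : 1 ≤ x) (hy : y < h)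
    (hy1 : 1 ≤ y) (hx' : x' < w) (hx1' : 1 ≤ x') (hy' : y' < h) (hy1' : 1 ≤ y')
    (e : g (ℓ * x) (ℓ * y) = g (ℓ * x') (ℓ * y')) :
    g (ℓ * x + (ℓ - 1)) (ℓ * y) = g (ℓ * x' + (ℓ - 1)) (ℓ * y') := by
  have h0 := H.hℓ
  have h1 : ℓ * 1 ≤ ℓ * x := Nat.mul_le_mul_left _ hx1
  have h2 : ℓ * 1 ≤ ℓ * x' := Nat.mul_le_mul_left _ hx1'
  apply H.bot_follow hx hy hy1 hx' hy' hy1'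
  apply H.dir _ _ (H.bot_used hx hy hy1 (by omega) (by omega))
    (H.bot_used hx' hy' hy1' (by omega) (by omega))
  · rw [H.bot_south hx hy hy1 le_rfl (by omega), H.bot_south hx' hy' hy1' le_rfl (by omega)]
  · have e1 := H.bot_east (i := 0) hx hy hy1 (by omega) (by omega)
    have e2 := H.bot_east (i := 0) hx' hy' hy1' (by omega) (by omega)
    simp only [add_zero, zero_add] at e1 e2
    rw [← e1, ← e2, e]

/-- The bottom left tile of a supertile determines the portrayed color: the bottom right tile starts
the column color counter, and this glue is different for different colors. -/
theorem a_color (H : Asm ℓ k w h P g) {x y x' y' : ℕ} (hx : x < w) (hx1 : 1 ≤ x) (hy : y < h)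
    (hy1 : 1 ≤ y) (hx' : x' < w) (hx1' : 1 ≤ x') (hy' : y' < h) (hy1' : 1 ≤ y')
    (e : g (ℓ * x) (ℓ * y) = g (ℓ * x') (ℓ * y')) : P x y = P x' y' := by
  have := H.a_c1 hx hx1 hy hy1 hx' hx1' hy' hy1' e
  have := congrArg Tile.north this
  rw [H.c1_north hx hy hy1, H.c1_north hx' hy' hy1'] at this
  have r := H.rng x hx y hy
  have r' := H.rng x' hx' y' hy'
  exact H.cr_inj r.1 r.2 r'.1 r'.2 this

/-! Glues of the bottom row that separate the classes of white tiles. -/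

theorem b1_east_ne (H : Asm ℓ k w h P g) {x y i : ℕ} (hx : x < w) (hy : y < h) (hy1 : 1 ≤ y)
    (hi : i + 3 ≤ ℓ) (ha : 1 ≤ ℓ * x + i) :
    (g (ℓ * x + i) (ℓ * y)).east ≠ vg g ∧ (g (ℓ * x + i) (ℓ * y)).east ≠ tau ℓ k h g ∧
      ∀ c, 1 ≤ c → c ≤ k → (g (ℓ * x + i) (ℓ * y)).east ≠ wr ℓ k h g c := by
  rw [H.bot_east hx hy hy1 (by omega) ha]
  have hu := H.bot_used (i := i + 1) hx hy hy1 (by omega) (by omega)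
  have hc := H.bot_white (i := i + 1) hx hy hy1 (by omega) (by omega)
  have hs := H.bot_south (i := i + 1) hx hy hy1 (by omega) (by omega)
  exact ⟨H.bad_black hu hc hs, H.bad_tau hu hc hs, fun c h1 h2 => H.bad_wr hu hc hs h1 h2⟩

theorem a_east_ne (H : Asm ℓ k w h P g) {x y : ℕ} (hx : x < w) (hx1 : 1 ≤ x) (hy : y < h)
    (hy1 : 1 ≤ y) :
    (g (ℓ * x) (ℓ * y)).east ≠ vg g ∧ (g (ℓ * x) (ℓ * y)).east ≠ tau ℓ k h g ∧
      ∀ c, 1 ≤ c → c ≤ k → (g (ℓ * x) (ℓ * y)).east ≠ wr ℓ k h g c := by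
  have h0 := H.hℓ
  have h1 : ℓ * 1 ≤ ℓ * x := Nat.mul_le_mul_left _ hx1
  have := H.b1_east_ne (i := 0) hx hy hy1 (by omega) (by omega)
  simpa using this

theorem c1_west_ne (H : Asm ℓ k w h P g) {x y : ℕ} (hx : x < w) (hy : y < h) (hy1 : 1 ≤ y) :
    (g (ℓ * x + (ℓ - 1)) (ℓ * y)).west ≠ vg g ∧
      (g (ℓ * x + (ℓ - 1)) (ℓ * y)).west ≠ tau ℓ k h g := by
  have h0 := H.hℓ
  have hu := H.bot_used (i := ℓ - 1) hx hy hy1 (by omega) (by omega)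
  have hc := H.bot_white (i := ℓ - 1) hx hy hy1 (by omega) (by omega)
  exact ⟨fun e => H.bad_sig hu hc e (H.c1_south hx hy hy1),
    H.bad_corner hu hc (H.c1_south hx hy hy1)⟩

end Asm

/-! ### Counting white tiles -/

/-- If `F` distinguishes whatever `F'` distinguishes then `F'` takes at most as many values. -/
theorem card_image_le_image {α β γ : Type*} [DecidableEq β] [DecidableEq γ] (S : Finset α)
    (F : α → β) (F' : α → γ) (hF : ∀ p ∈ S, ∀ q ∈ S, F p = F q → F' p = F' q) :
    (S.image F').card ≤ (S.image F).card := by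
  classical
  have h1 : S.image F' = (S.image fun p => (F p, F' p)).image Prod.snd := by
    rw [Finset.image_image]; rfl
  rw [h1]
  refine Finset.card_image_le.trans ?_
  apply Finset.card_le_card_of_injOn Prod.fst
  · intro t ht
    simp only [Finset.coe_image, Set.mem_image] at ht ⊢
    obtain ⟨p, hp, rfl⟩ := ht
    exact ⟨p, hp, rfl⟩
  · intro t ht t' ht' e
    simp only [Finset.coe_image, Set.mem_image] at ht ht'
    obtain ⟨p, hp, rfl⟩ := ht
    obtain ⟨p', hp', rfl⟩ := ht'
    exact Prod.ext e (hF p hp p' hp' e)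

open Classical in
/-- Bottom left tiles of the interior supertiles. -/
noncomputable def setA {G : Type} (ℓ w h : ℕ) (g : ℕ → ℕ → Tile BWG G) : Finset (Tile BWG G) :=
  (Finset.Ico 1 w ×ˢ Finset.Ico 1 h).image fun p => g (ℓ * p.1) (ℓ * p.2)

open Classical in
/-- Second tiles in the bottom rows of the supertiles above the bottom row of the pattern. -/
noncomputable def setB {G : Type} (ℓ w h : ℕ) (g : ℕ → ℕ → Tile BWG G) : Finset (Tile BWG G) :=
  (Finset.range w ×ˢ Finset.Ico 1 h).image fun p => g (ℓ * p.1 + 1) (ℓ * p.2)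

open Classical in
/-- Bottom right tiles of the supertiles above the bottom row of the pattern. -/
noncomputable def setC {G : Type} (ℓ w h : ℕ) (g : ℕ → ℕ → Tile BWG G) : Finset (Tile BWG G) :=
  (Finset.range w ×ˢ Finset.Ico 1 h).image fun p => g (ℓ * p.1 + (ℓ - 1)) (ℓ * p.2)

namespace Asm

variable {G : Type} {ℓ k w h : ℕ} {P : ℕ → ℕ → ℕ} {g : ℕ → ℕ → Tile BWG G}

/-- Distinct bottom right tiles have distinct second tiles in their bottom rows. -/
theorem setB_ge (H : Asm ℓ k w h P g) : (setC ℓ w h g).card ≤ (setB ℓ w h g).card := by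
  classical
  apply card_image_le_image
  intro p hp q hq e
  simp only [Finset.mem_product, Finset.mem_range, Finset.mem_Ico] at hp hq
  exact H.bot_follow hp.1 hp.2.2 hp.2.1 hq.1 hq.2.2 hq.2.1 e

open Classical in
/-- Every color above the bottom row of the pattern needs its own bottom right tile, and a color
with several east outputs needs one for each of them. -/
theorem setC_ge (H : Asm ℓ k w h P g) (hsurj : ∀ c, 1 ≤ c → c ≤ k → ∃ x < w, ∃ y < h, P x y = c)
    (o n : ℕ) (pos : ℕ → ℕ × ℕ)
    (hpos : ∀ i < n, (pos i).1 < w ∧ 1 ≤ (pos i).2 ∧ (pos i).2 < h ∧ P (pos i).1 (pos i).2 = o) :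
    k + ((Finset.range n).image fun i =>
      (g (ℓ * (pos i).1 + (ℓ - 1)) (ℓ * (pos i).2)).east).card ≤ (setC ℓ w h g).card + w + 1 := by
  set S := Finset.range w ×ˢ Finset.Ico 1 h with hS
  set F : ℕ × ℕ → Tile BWG G := fun p => g (ℓ * p.1 + (ℓ - 1)) (ℓ * p.2) with hF
  set K := S.image (fun p => P p.1 p.2) with hK
  have hcol : ∀ p ∈ S, ∀ q ∈ S, F p = F q → P p.1 p.2 = P q.1 q.2 := by
    intro p hp q hq e
    simp only [hS, Finset.mem_product, Finset.mem_range, Finset.mem_Ico] at hp hq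
    have := congrArg Tile.north e
    simp only [hF] at this
    rw [H.c1_north hp.1 hp.2.2 hp.2.1, H.c1_north hq.1 hq.2.2 hq.2.1] at this
    have r := H.rng _ hp.1 _ hp.2.2
    have r' := H.rng _ hq.1 _ hq.2.2
    exact H.cr_inj r.1 r.2 r'.1 r'.2 this
  have hKk : k ≤ K.card + w := by
    have hsub : Finset.Icc 1 k ⊆ K ∪ (Finset.range w).image (fun x => P x 0) := by
      intro c hc
      rw [Finset.mem_Icc] at hc
      obtain ⟨x, hx, y, hy, e⟩ := hsurj c hc.1 hc.2
      rw [Finset.mem_union]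
      rcases Nat.eq_zero_or_pos y with rfl | hy0
      · exact Or.inr (Finset.mem_image.2 ⟨x, Finset.mem_range.2 hx, e⟩)
      · refine Or.inl (Finset.mem_image.2 ⟨(x, y), ?_, e⟩)
        simp only [hS, Finset.mem_product, Finset.mem_range, Finset.mem_Ico]
        exact ⟨hx, hy0, hy⟩
    have h1 := Finset.card_le_card hsub
    have h2 := Finset.card_union_le K ((Finset.range w).image (fun x => P x 0))
    have h3 : ((Finset.range w).image (fun x => P x 0)).card ≤ w := by
      simpa using Finset.card_image_le (s := Finset.range w) (f := fun x => P x 0)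
    rw [Nat.card_Icc] at h1
    omega
  have h1 : (K.erase o).card ≤ ((S.filter fun p => P p.1 p.2 ≠ o).image F).card := by
    have : K.erase o = (S.filter fun p => P p.1 p.2 ≠ o).image (fun p => P p.1 p.2) := by
      ext c
      simp only [hK, Finset.mem_erase, Finset.mem_image, Finset.mem_filter]
      constructor
      · rintro ⟨hne, p, hp, rfl⟩; exact ⟨p, ⟨hp, hne⟩, rfl⟩
      · rintro ⟨p, ⟨hp, hne⟩, rfl⟩; exact ⟨hne, p, hp, rfl⟩
    rw [this]
    apply card_image_le_image
    intro p hp q hq e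
    exact hcol p (Finset.mem_filter.1 hp).1 q (Finset.mem_filter.1 hq).1 e
  have h2 : ((Finset.range n).image fun i =>
      (g (ℓ * (pos i).1 + (ℓ - 1)) (ℓ * (pos i).2)).east).card ≤
      ((S.filter fun p => P p.1 p.2 = o).image F).card := by
    refine (Finset.card_le_card ?_).trans (Finset.card_image_le (f := Tile.east))
    intro u hu
    obtain ⟨i, hi, rfl⟩ := Finset.mem_image.1 hu
    have := hpos i (Finset.mem_range.1 hi)
    refine Finset.mem_image.2 ⟨F (pos i), Finset.mem_image.2 ⟨pos i, ?_, rfl⟩, rfl⟩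
    simp only [hS, Finset.mem_filter, Finset.mem_product, Finset.mem_range, Finset.mem_Ico]
    exact ⟨⟨this.1, this.2.1, this.2.2.1⟩, this.2.2.2⟩
  have hdisj : Disjoint ((S.filter fun p => P p.1 p.2 ≠ o).image F)
      ((S.filter fun p => P p.1 p.2 = o).image F) := by
    rw [Finset.disjoint_left]
    intro t ht ht'
    obtain ⟨p, hp, rfl⟩ := Finset.mem_image.1 ht
    obtain ⟨q, hq, e⟩ := Finset.mem_image.1 ht'
    rw [Finset.mem_filter] at hp hq
    exact hp.2 ((hcol q hq.1 p hp.1 e).symm.trans hq.2)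
  have h3 : ((S.filter fun p => P p.1 p.2 ≠ o).image F).card +
      ((S.filter fun p => P p.1 p.2 = o).image F).card ≤ (setC ℓ w h g).card := by
    rw [← Finset.card_union_of_disjoint hdisj]
    apply Finset.card_le_card
    rw [setC, ← Finset.image_union]
    apply Finset.image_subset_image
    apply Finset.union_subset <;> exact Finset.filter_subset _ _
  have h4 := Finset.pred_card_le_card_erase (s := K) (a := o)
  omega

/-! ### Separating the seven classes of white tiles -/

theorem mem_setA (H : Asm ℓ k w h P g) {t : Tile BWG G} (ht : t ∈ setA ℓ w h g) :
    Used ℓ w h g t ∧ t.color = BWG.white ∧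
    (t.east ≠ vg g ∧ t.east ≠ tau ℓ k h g ∧ ∀ c, 1 ≤ c → c ≤ k → t.east ≠ wr ℓ k h g c) ∧
    (t.north ≠ sg g ∧ t.north ≠ sig ℓ k w g ∧ ∀ c, 1 ≤ c → c ≤ k → t.north ≠ cr ℓ k w g c) := by
  classical
  obtain ⟨⟨x, y⟩, hp, rfl⟩ := Finset.mem_image.1 ht
  simp only [Finset.mem_product, Finset.mem_Ico] at hp
  obtain ⟨⟨h1, h2⟩, h3, h4⟩ := hp
  have h0 := H.hℓ
  have h5 : ℓ * 1 ≤ ℓ * x := Nat.mul_le_mul_left _ h1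
  exact ⟨H.bot_used (x := x) (y := y) (i := 0) h2 h4 h3 (by omega) (by omega),
    H.bot_white (x := x) (y := y) (i := 0) h2 h4 h3 (by omega) (by omega),
    H.a_east_ne h2 h1 h4 h3, H.transpose.a_east_ne h4 h3 h2 h1⟩

theorem mem_setB (H : Asm ℓ k w h P g) {t : Tile BWG G} (ht : t ∈ setB ℓ w h g) :
    Used ℓ w h g t ∧ t.color = BWG.white ∧ t.south = sg g ∧ t.north = sg g ∧
    (t.east ≠ vg g ∧ t.east ≠ tau ℓ k h g ∧ ∀ c, 1 ≤ c → c ≤ k → t.east ≠ wr ℓ k h g c) := by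
  classical
  obtain ⟨⟨x, y⟩, hp, rfl⟩ := Finset.mem_image.1 ht
  simp only [Finset.mem_product, Finset.mem_Ico, Finset.mem_range] at hp
  obtain ⟨h2, h3, h4⟩ := hp
  have h0 := H.hℓ
  exact ⟨H.bot_used h2 h4 h3 (by omega) (by omega),
    H.bot_white h2 h4 h3 (by omega) (by omega), H.bot_south h2 h4 h3 (by omega) (by omega),
    H.bot_north h2 h4 h3 (by omega) (by omega), H.b1_east_ne h2 h4 h3 (by omega) (by omega)⟩

theorem mem_setC (H : Asm ℓ k w h P g) {t : Tile BWG G} (ht : t ∈ setC ℓ w h g) :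
    Used ℓ w h g t ∧ t.color = BWG.white ∧ t.south = sig ℓ k w g ∧
    (∃ c, 1 ≤ c ∧ c ≤ k ∧ t.north = cr ℓ k w g c) ∧ t.west ≠ vg g ∧ t.west ≠ tau ℓ k h g := by
  classical
  obtain ⟨⟨x, y⟩, hp, rfl⟩ := Finset.mem_image.1 ht
  simp only [Finset.mem_product, Finset.mem_Ico, Finset.mem_range] at hp
  obtain ⟨h2, h3, h4⟩ := hp
  have h0 := H.hℓ
  have r := H.rng x h2 y h4
  exact ⟨H.bot_used h2 h4 h3 (by omega) (by omega),
    H.bot_white h2 h4 h3 (by omega) (by omega), H.c1_south h2 h4 h3,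
    ⟨_, r.1, r.2, H.c1_north h2 h4 h3⟩, H.c1_west_ne h2 h4 h3⟩

theorem white_spec (H : Asm ℓ k w h P g) : ∃ t, Used ℓ w h g t ∧ t.color = BWG.white ∧
    t.south = sg g ∧ t.north = sg g ∧ t.east = tau ℓ k h g := by
  have h0 := H.hℓ
  exact ⟨_, H.row_used (a := k + 1) (by omega) (by omega),
    by rw [H.row_color (by omega) (by omega), if_pos rfl], H.row_south (by omega) (by omega),
    H.row_north (by omega) (by omega), H.white_east⟩

open Classical in
/-- The bottom left, bottom row, bottom right, left column and top left tiles of supertiles and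
the two white tiles of the color counters are all different. -/
theorem white_card (H : Asm ℓ k w h P g) (m : ℕ)
    (hm : ∀ Γ : Finset (Tile BWG G), (∀ t ∈ Γ, Used ℓ w h g t ∧ t.color = BWG.white) →
      Γ.card ≤ m) :
    (setA ℓ w h g).card + (setB ℓ w h g).card + (setC ℓ w h g).card +
      (setB ℓ h w (tr g)).card + (setC ℓ h w (tr g)).card + 2 ≤ m := by
  obtain ⟨u, u1, u2, u3, u4, u5⟩ := H.white_spec
  obtain ⟨u', v1, v2, v3, v4, v5⟩ := H.transpose.white_spec
  set v := u'.swap with hv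
  replace v1 : Used ℓ w h g v := used_tr v1
  replace v2 : v.color = BWG.white := v2
  replace v3 : v.west = vg g := v3
  replace v4 : v.east = vg g := v4
  replace v5 : v.north = sig ℓ k w g := v5
  set B' := (setB ℓ h w (tr g)).image Tile.swap with hB'
  set C' := (setC ℓ h w (tr g)).image Tile.swap with hC'
  have cB' : B'.card = (setB ℓ h w (tr g)).card :=
    Finset.card_image_of_injective _ (fun _ _ e => Tile.swap_inj e)
  have cC' : C'.card = (setC ℓ h w (tr g)).card :=
    Finset.card_image_of_injective _ (fun _ _ e => Tile.swap_inj e)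
  have mB' : ∀ t ∈ B', Used ℓ w h g t ∧ t.color = BWG.white ∧ t.west = vg g ∧ t.east = vg g ∧
      (t.north ≠ sg g ∧ t.north ≠ sig ℓ k w g ∧
        ∀ c, 1 ≤ c → c ≤ k → t.north ≠ cr ℓ k w g c) := by
    intro t ht
    obtain ⟨t', ht', rfl⟩ := Finset.mem_image.1 ht
    obtain ⟨a1, a2, a3, a4, a5⟩ := H.transpose.mem_setB ht'
    exact ⟨used_tr a1, a2, a3, a4, a5⟩
  have mC' : ∀ t ∈ C', Used ℓ w h g t ∧ t.color = BWG.white ∧ t.west = tau ℓ k h g ∧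
      (∃ c, 1 ≤ c ∧ c ≤ k ∧ t.east = wr ℓ k h g c) ∧ t.south ≠ sg g ∧
      t.south ≠ sig ℓ k w g := by
    intro t ht
    obtain ⟨t', ht', rfl⟩ := Finset.mem_image.1 ht
    obtain ⟨a1, a2, a3, a4, a5⟩ := H.transpose.mem_setC ht'
    exact ⟨used_tr a1, a2, a3, a4, a5⟩
  have mA := fun t => H.mem_setA (t := t)
  have mB := fun t => H.mem_setB (t := t)
  have mC := fun t => H.mem_setC (t := t)
  have dAB : Disjoint (setA ℓ w h g) (setB ℓ w h g) :=
    Finset.disjoint_left.2 fun t h1 h2 => (mA t h1).2.2.2.1 (mB t h2).2.2.2.1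
  have dAC : Disjoint (setA ℓ w h g) (setC ℓ w h g) :=
    Finset.disjoint_left.2 fun t h1 h2 => by
      obtain ⟨c, c1, c2, c3⟩ := (mC t h2).2.2.2.1
      exact (mA t h1).2.2.2.2.2 c c1 c2 c3
  have dAB' : Disjoint (setA ℓ w h g) B' :=
    Finset.disjoint_left.2 fun t h1 h2 => (mA t h1).2.2.1.1 (mB' t h2).2.2.2.1
  have dAC' : Disjoint (setA ℓ w h g) C' :=
    Finset.disjoint_left.2 fun t h1 h2 => by
      obtain ⟨c, c1, c2, c3⟩ := (mC' t h2).2.2.2.1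
      exact (mA t h1).2.2.1.2.2 c c1 c2 c3
  have dBC : Disjoint (setB ℓ w h g) (setC ℓ w h g) :=
    Finset.disjoint_left.2 fun t h1 h2 =>
      H.sig_ne ((mC t h2).2.2.1.symm.trans (mB t h1).2.2.1)
  have dBB' : Disjoint (setB ℓ w h g) B' :=
    Finset.disjoint_left.2 fun t h1 h2 =>
      H.bad_black (mB t h1).1 (mB t h1).2.1 (mB t h1).2.2.1 (mB' t h2).2.2.1
  have dBC' : Disjoint (setB ℓ w h g) C' :=
    Finset.disjoint_left.2 fun t h1 h2 => (mC' t h2).2.2.2.2.1 (mB t h1).2.2.1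
  have dCB' : Disjoint (setC ℓ w h g) B' :=
    Finset.disjoint_left.2 fun t h1 h2 => (mC t h1).2.2.2.2.1 (mB' t h2).2.2.1
  have dCC' : Disjoint (setC ℓ w h g) C' :=
    Finset.disjoint_left.2 fun t h1 h2 => (mC t h1).2.2.2.2.2 (mC' t h2).2.2.1
  have dB'C' : Disjoint B' C' :=
    Finset.disjoint_left.2 fun t h1 h2 =>
      H.tau_ne ((mC' t h2).2.2.1.symm.trans (mB' t h1).2.2.1)
  have huv : u ≠ v := fun e => H.bad_black u1 u2 u3 (by rw [e]; exact v3)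
  have huA : u ∉ setA ℓ w h g := fun hu => (mA u hu).2.2.2.1 u4
  have huB : u ∉ setB ℓ w h g := fun hu => (mB u hu).2.2.2.2.2.1 u5
  have huC : u ∉ setC ℓ w h g := fun hu => H.sig_ne ((mC u hu).2.2.1.symm.trans u3)
  have huB' : u ∉ B' := fun hu => (mB' u hu).2.2.2.2.1 u4
  have huC' : u ∉ C' := fun hu => (mC' u hu).2.2.2.2.1 u3
  have hvA : v ∉ setA ℓ w h g := fun hu => (mA v hu).2.2.1.1 v4
  have hvB : v ∉ setB ℓ w h g := fun hu => (mB v hu).2.2.2.2.1 v4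
  have hvC : v ∉ setC ℓ w h g := fun hu => (mC v hu).2.2.2.2.1 v3
  have hvB' : v ∉ B' := fun hu => (mB' v hu).2.2.2.2.2.1 v5
  have hvC' : v ∉ C' := fun hu => H.tau_ne ((mC' v hu).2.2.1.symm.trans v3)
  have key := hm (insert u (insert v (setA ℓ w h g ∪ setB ℓ w h g ∪ setC ℓ w h g ∪ B' ∪ C'))) (by
    intro t ht
    simp only [Finset.mem_insert, Finset.mem_union] at ht
    rcases ht with rfl | rfl | (((ht | ht) | ht) | ht) | ht
    · exact ⟨u1, u2⟩
    · exact ⟨v1, v2⟩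
    · exact ⟨(mA t ht).1, (mA t ht).2.1⟩
    · exact ⟨(mB t ht).1, (mB t ht).2.1⟩
    · exact ⟨(mC t ht).1, (mC t ht).2.1⟩
    · exact ⟨(mB' t ht).1, (mB' t ht).2.1⟩
    · exact ⟨(mC' t ht).1, (mC' t ht).2.1⟩)
  rw [Finset.card_insert_of_notMem
      (by simp only [Finset.mem_insert, Finset.mem_union]; tauto),
    Finset.card_insert_of_notMem (by simp only [Finset.mem_union]; tauto),
    Finset.card_union_of_disjoint (by simp only [Finset.disjoint_union_left]; tauto),
    Finset.card_union_of_disjoint (by simp only [Finset.disjoint_union_left]; tauto),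
    Finset.card_union_of_disjoint (by simp only [Finset.disjoint_union_left]; tauto),
    Finset.card_union_of_disjoint dAB, cB', cC'] at key
  omega

end Asm

/-! ### From the three-colored pattern back to `P` -/

/-- The glues of the recovered system: interior supertiles keep their input glues, the
supertiles on the boundary receive fresh glues from the seed. -/
def backGlue {G : Type} (F : ℕ → ℕ → G) (x y : ℕ) : G ⊕ (ℕ × ℕ) :=
  if x = 0 ∨ y = 0 then Sum.inr (x, y) else Sum.inl (F x y)

/-- The tile type simulating the supertile `(x, y)`. -/
def backTile {G : Type} (ℓ : ℕ) (P : ℕ → ℕ → ℕ) (g : ℕ → ℕ → Tile BWG G) (x y : ℕ) :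
    Tile ℕ (G ⊕ (ℕ × ℕ)) :=
  ⟨P x y, backGlue (fun x y => (g (ℓ * x) (ℓ * y)).south) x (y + 1),
    backGlue (fun x y => (g (ℓ * x) (ℓ * y)).west) (x + 1) y,
    backGlue (fun x y => (g (ℓ * x) (ℓ * y)).south) x y,
    backGlue (fun x y => (g (ℓ * x) (ℓ * y)).west) x y⟩

namespace Asm

variable {G : Type} {ℓ k w h : ℕ} {P : ℕ → ℕ → ℕ} {g : ℕ → ℕ → Tile BWG G}

theorem west_succ (H : Asm ℓ k w h P g) {x y : ℕ} (hx : x < w) (hy : y < h) (hy1 : 1 ≤ y) :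
    (g (ℓ * (x + 1)) (ℓ * y)).west = (g (ℓ * x + (ℓ - 1)) (ℓ * y)).east := by
  have h0 := H.hℓ
  rw [H.bot_east hx hy hy1 (by omega) (by omega), Nat.mul_succ,
    show ℓ - 1 + 1 = ℓ by omega]

/-- In the interior, the bottom left white tile determines the color and both outputs. -/
theorem back_inner (H : Asm ℓ k w h P g) {x y x' y' : ℕ} (hx : x < w) (hx1 : 1 ≤ x) (hy : y < h)
    (hy1 : 1 ≤ y) (hx' : x' < w) (hx1' : 1 ≤ x') (hy' : y' < h) (hy1' : 1 ≤ y')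
    (e : g (ℓ * x) (ℓ * y) = g (ℓ * x') (ℓ * y')) :
    backTile ℓ P g x y = backTile ℓ P g x' y' := by
  have e1 := H.a_color hx hx1 hy hy1 hx' hx1' hy' hy1' e
  have e2 := H.a_c1 hx hx1 hy hy1 hx' hx1' hy' hy1' e
  have e3 := H.transpose.a_c1 hy hy1 hx hx1 hy' hy1' hx' hx1' (congrArg Tile.swap e)
  have e4 := H.west_succ hx hy hy1
  have e5 := H.west_succ hx' hy' hy1'
  have e6 : (g (ℓ * x) (ℓ * (y + 1))).south = (tr g (ℓ * y + (ℓ - 1)) (ℓ * x)).east :=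
    H.transpose.west_succ hy hx hx1
  have e7 : (g (ℓ * x') (ℓ * (y' + 1))).south = (tr g (ℓ * y' + (ℓ - 1)) (ℓ * x')).east :=
    H.transpose.west_succ hy' hx' hx1'
  simp only [backTile, backGlue, show ¬(x = 0 ∨ y = 0) by omega,
    show ¬(x' = 0 ∨ y' = 0) by omega, show ¬(x + 1 = 0 ∨ y = 0) by omega,
    show ¬(x = 0 ∨ y + 1 = 0) by omega, show ¬(x' + 1 = 0 ∨ y' = 0) by omega,
    show ¬(x' = 0 ∨ y' + 1 = 0) by omega, if_false]
  rw [e1, e4, e5, e2, e6, e7, e3, e]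

end Asm

/-- The reverse direction of the reduction. The only property of the pattern needed is that some
color `o` occurs to the left and below of eight differently colored positions: it forces `o` to
have at least six outputs, counted with both directions. -/
theorem reverse_direction {G : Type} {ℓ k w h : ℕ} {P : ℕ → ℕ → ℕ} {g : ℕ → ℕ → Tile BWG G}
    (H : Asm ℓ k w h P g)
    (hwhite : ∀ Γ : Finset (Tile BWG G), (∀ t ∈ Γ, Used ℓ w h g t ∧ t.color = BWG.white) →
      Γ.card ≤ 5 * k + 14 - 3 * (w + h))
    (hsurj : ∀ c, 1 ≤ c → c ≤ k → ∃ x < w, ∃ y < h, P x y = c)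
    (hw : 18 ≤ w) (hh : 3 ≤ h) (o : ℕ)
    (ho1 : ∀ i < 8, P (2 * i + 1) 2 = o) (ho2 : ∀ i < 8, P (2 * i + 2) 1 = o)
    (hY : ∀ i < 8, ∀ j < 8, P (2 * i + 2) 2 = P (2 * j + 2) 2 → i = j) :
    ∃ (G₁ : Type) (T : RTAS ℕ G₁), DirectedTAS T ∧ T.tiles.card ≤ k + 3 ∧
      SelfAssembles T w h P := by
  classical
  have hA := H.white_card _ hwhite
  have hB := H.setB_ge
  have hB' := H.transpose.setB_ge
  have hC := H.setC_ge hsurj o 8 (fun i => (2 * i + 1, 2)) (fun i hi =>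
    ⟨by change 2 * i + 1 < w; omega, by norm_num, by change 2 < h; omega, ho1 i hi⟩)
  have hC' := H.transpose.setC_ge (fun c h1 h2 => by
      obtain ⟨x, hx, y, hy, e⟩ := hsurj c h1 h2
      exact ⟨y, hy, x, hx, e⟩) o 8 (fun i => (1, 2 * i + 2)) (fun i hi =>
    ⟨by change 1 < h; omega, by change 1 ≤ 2 * i + 2; omega, by change 2 * i + 2 < w; omega,
      ho2 i hi⟩)
  set E := (Finset.range 8).image fun i =>
    (g (ℓ * (2 * i + 1) + (ℓ - 1)) (ℓ * 2)).east with hE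
  set N := (Finset.range 8).image fun i =>
    (tr g (ℓ * 1 + (ℓ - 1)) (ℓ * (2 * i + 2))).east with hN
  have hEN : 8 ≤ E.card * N.card := by
    rw [← Finset.card_product]
    have : ((Finset.range 8).image fun i => ((g (ℓ * (2 * i + 1) + (ℓ - 1)) (ℓ * 2)).east,
        (tr g (ℓ * 1 + (ℓ - 1)) (ℓ * (2 * i + 2))).east)).card = 8 := by
      rw [Finset.card_image_of_injOn, Finset.card_range]
      intro i hi j hj e
      simp only [Finset.coe_range, Set.mem_Iio] at hi hj
      simp only [Prod.mk.injEq] at e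
      rw [← H.west_succ (by omega) (by omega) (by omega),
        ← H.west_succ (by omega) (by omega) (by omega),
        ← H.transpose.west_succ (by omega) (by omega) (by omega),
        ← H.transpose.west_succ (by omega) (by omega) (by omega)] at e
      have e' : g (ℓ * (2 * i + 2)) (ℓ * 2) = g (ℓ * (2 * j + 2)) (ℓ * 2) := by
        have hl := H.hℓ
        have q1 : ℓ * 1 ≤ ℓ * (2 * i + 2) := Nat.mul_le_mul_left _ (by omega)
        have q2 : ℓ * 1 ≤ ℓ * (2 * j + 2) := Nat.mul_le_mul_left _ (by omega)
        exact H.dir _ _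
          (H.bot_used (x := 2 * i + 2) (y := 2) (i := 0) (by omega) (by omega) (by omega)
            (by omega) (by omega))
          (H.bot_used (x := 2 * j + 2) (y := 2) (i := 0) (by omega) (by omega) (by omega)
            (by omega) (by omega)) e.2 e.1
      exact hY i hi j hj (H.a_color (by omega) (by omega) (by omega) (by omega) (by omega)
        (by omega) (by omega) (by omega) e')
    rw [← this]
    apply Finset.card_le_card
    intro u hu
    obtain ⟨i, hi, rfl⟩ := Finset.mem_image.1 hu
    exact Finset.mem_product.2 ⟨Finset.mem_image_of_mem _ hi, Finset.mem_image_of_mem _ hi⟩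
  -- two positive integers with product at least eight have sum at least six
  have hsum : 6 ≤ E.card + N.card := by
    by_contra hlt
    have h1 : E.card ≤ 5 := by omega
    have h2 : N.card ≤ 5 - E.card := by omega
    have h3 := Nat.mul_le_mul_left E.card h2
    interval_cases E.card <;> omega
  have hcard : (setA ℓ w h g).card + w + h ≤ k + 4 := by
    omega
  set S := Finset.range w ×ˢ Finset.range h with hS
  refine ⟨G ⊕ (ℕ × ℕ), ⟨S.image fun p => backTile ℓ P g p.1 p.2,
    fun x => backGlue (fun x y => (g (ℓ * x) (ℓ * y)).south) x 0,
    fun y => backGlue (fun x y => (g (ℓ * x) (ℓ * y)).west) 0 y⟩, ?_, ?_,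
    fun x y => backTile ℓ P g x y, ⟨?_, ?_, ?_, ?_, ?_⟩, ?_⟩
  · intro t ht t' ht' hne
    obtain ⟨⟨x, y⟩, hp, rfl⟩ := Finset.mem_image.1 ht
    obtain ⟨⟨x', y'⟩, hp', rfl⟩ := Finset.mem_image.1 ht'
    simp only [hS, Finset.mem_product, Finset.mem_range] at hp hp'
    by_contra hcon
    push Not at hcon
    obtain ⟨es, ew⟩ := hcon
    apply hne
    simp only [backTile, backGlue] at es ew
    split_ifs at es ew with b1 b2 b2
    · simp only [Sum.inr.injEq, Prod.mk.injEq] at es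
      rw [es.1, es.2]
    · simp only [Sum.inl.injEq] at es ew
      push Not at b1 b2
      have hl := H.hℓ
      have q1 : ℓ * 1 ≤ ℓ * x := Nat.mul_le_mul_left _ (by omega)
      have q2 : ℓ * 1 ≤ ℓ * x' := Nat.mul_le_mul_left _ (by omega)
      exact H.back_inner hp.1 (by omega) hp.2 (by omega) hp'.1 (by omega) hp'.2 (by omega)
        (H.dir _ _ (H.bot_used (x := x) (y := y) (i := 0) hp.1 hp.2 (by omega) (by omega) (by omega))
          (H.bot_used (x := x') (y := y') (i := 0) hp'.1 hp'.2 (by omega) (by omega) (by omega)) es ew)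
  · have hsub : (S.image fun p => backTile ℓ P g p.1 p.2) ⊆
        ((Finset.Ico 1 w ×ˢ Finset.Ico 1 h).image fun p => backTile ℓ P g p.1 p.2) ∪
        ((Finset.range w).image fun x => backTile ℓ P g x 0) ∪
        ((Finset.Ico 1 h).image fun y => backTile ℓ P g 0 y) := by
      intro t ht
      obtain ⟨⟨x, y⟩, hp, rfl⟩ := Finset.mem_image.1 ht
      simp only [hS, Finset.mem_product, Finset.mem_range] at hp
      rw [Finset.mem_union, Finset.mem_union]
      rcases Nat.eq_zero_or_pos y with rfl | hy
      · exact Or.inl (Or.inr (Finset.mem_image.2 ⟨x, Finset.mem_range.2 hp.1, rfl⟩))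
      rcases Nat.eq_zero_or_pos x with rfl | hx
      · exact Or.inr (Finset.mem_image.2 ⟨y, Finset.mem_Ico.2 ⟨hy, hp.2⟩, rfl⟩)
      · exact Or.inl (Or.inl (Finset.mem_image.2 ⟨(x, y), Finset.mem_product.2
          ⟨Finset.mem_Ico.2 ⟨hx, hp.1⟩, Finset.mem_Ico.2 ⟨hy, hp.2⟩⟩, rfl⟩))
    have h1 := Finset.card_le_card hsub
    have h2 : ((Finset.Ico 1 w ×ˢ Finset.Ico 1 h).image fun p => backTile ℓ P g p.1 p.2).card ≤
        (setA ℓ w h g).card := by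
      apply card_image_le_image
      intro p hp q hq e
      simp only [Finset.mem_product, Finset.mem_Ico] at hp hq
      exact H.back_inner hp.1.2 hp.1.1 hp.2.2 hp.2.1 hq.1.2 hq.1.1 hq.2.2 hq.2.1 e
    have h3 : ((Finset.range w).image fun x => backTile ℓ P g x 0).card ≤ w := by
      simpa using Finset.card_image_le (s := Finset.range w) (f := fun x => backTile ℓ P g x 0)
    have h4 : ((Finset.Ico 1 h).image fun y => backTile ℓ P g 0 y).card ≤ h - 1 := by
      simpa using Finset.card_image_le (s := Finset.Ico 1 h) (f := fun y => backTile ℓ P g 0 y)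
    have h5 := Finset.card_union_le (((Finset.Ico 1 w ×ˢ Finset.Ico 1 h).image
      fun p => backTile ℓ P g p.1 p.2) ∪ ((Finset.range w).image fun x => backTile ℓ P g x 0))
      ((Finset.Ico 1 h).image fun y => backTile ℓ P g 0 y)
    have h6 := Finset.card_union_le ((Finset.Ico 1 w ×ˢ Finset.Ico 1 h).image
      fun p => backTile ℓ P g p.1 p.2) ((Finset.range w).image fun x => backTile ℓ P g x 0)
    change (S.image fun p => backTile ℓ P g p.1 p.2).card ≤ k + 3
    omega
  · intro x hx y hy
    exact Finset.mem_image.2 ⟨(x, y), Finset.mem_product.2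
      ⟨Finset.mem_range.2 hx, Finset.mem_range.2 hy⟩, rfl⟩
  · intro y _; rfl
  · intro x _; rfl
  · intro x _ y _; rfl
  · intro x _ y _; rfl
  · intro x _ y _; rfl

/-! ### The tile types of a system assembling the pattern of a formula -/

/-- The features of the pattern of a formula on which the reduction relies: the colors on the
boundary occur only once, the subpattern `p` (an `OR`-colored position to the west and to the
south of eight differently colored ones), and the subpatterns `q₁, …, q₄`. -/
structure PatOK (k w h : ℕ) (P : ℕ → ℕ → ℕ) (o cw bw pl mi : ℕ) (up ar ga : ℕ → ℕ) : Prop where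
  hw : 45 ≤ w
  hh : 5 < h
  rng : ∀ x < w, ∀ y < h, 1 ≤ P x y ∧ P x y ≤ k
  surj : ∀ c, 1 ≤ c → c ≤ k → ∃ x < w, ∃ y < h, P x y = c
  bd : ∀ x < w, ∀ y < h, ∀ x' < w, ∀ y' < h, (x = 0 ∨ y = 0 ∨ x + 1 = w ∨ y + 1 = h) →
    P x y = P x' y' → x = x' ∧ y = y'
  p1 : ∀ i < 8, P (2 * i + 1) 2 = o
  p2 : ∀ i < 8, P (2 * i + 2) 1 = o
  pY : ∀ i < 8, ∀ j < 8, P (2 * i + 2) 2 = P (2 * j + 2) 2 → i = j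
  qor : ∀ i < 4, P (18 + 5 * i + 2) 3 = o
  qm : P (18 + 5 * 0 + 3) 3 = mi
  qp : ∀ i < 4, i ≠ 0 → P (18 + 5 * i + 3) 3 = pl
  qb : ∀ i < 4, P (18 + 5 * i + 3) 2 = bw
  qu : ∀ i < 4, P (18 + 5 * i + 2) 2 = up (i % 2)
  qa : ∀ i < 4, P (18 + 5 * i + 1) 3 = ar (i / 2)
  qc : ∀ i < 4, P (18 + 5 * i + 1) 4 = cw
  qg : ∀ i < 4, P (18 + 5 * i + 2) 4 = ga i
  gainj : ∀ i < 4, ∀ j < 4, ga i = ga j → i = j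
  mp : mi ≠ pl
  co : cw ≠ o
  po : pl ≠ o
  bo : bw ≠ o
  bc : bw ≠ cw
  uo : ∀ i, up i ≠ o
  uc : ∀ i, up i ≠ cw
  ao : ∀ i, ar i ≠ o
  ac : ∀ i, ar i ≠ cw

section Structure

variable {G : Type} {k w h : ℕ} {P : ℕ → ℕ → ℕ} {o cw bw pl mi : ℕ} {up ar ga : ℕ → ℕ}
  {T : RTAS ℕ G} {f : ℕ → ℕ → Tile ℕ G}

open Classical in
/-- The tile types occurring in an assignment. -/
noncomputable def usedTiles {G : Type} (w h : ℕ) (f : ℕ → ℕ → Tile ℕ G) : Finset (Tile ℕ G) :=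
  (Finset.range w ×ˢ Finset.range h).image fun p => f p.1 p.2

/-- A directed system with at most `k + 3` tile types assembling `P`. -/
structure Sol {G : Type} (k w h : ℕ) (P : ℕ → ℕ → ℕ) (T : RTAS ℕ G) (f : ℕ → ℕ → Tile ℕ G) :
    Prop where
  dirT : DirectedTAS T
  card : T.tiles.card ≤ k + 3
  asg : IsAssignment T w h f
  col : ∀ x < w, ∀ y < h, (f x y).color = P x y

theorem mem_used {x y : ℕ} (hx : x < w) (hy : y < h) : f x y ∈ usedTiles w h f := by
  classical
  exact Finset.mem_image.2 ⟨(x, y),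
    Finset.mem_product.2 ⟨Finset.mem_range.2 hx, Finset.mem_range.2 hy⟩, rfl⟩

namespace Sol

theorem used_card (S : Sol k w h P T f) : (usedTiles w h f).card ≤ k + 3 := by
  classical
  refine (Finset.card_le_card ?_).trans S.card
  intro t ht
  obtain ⟨p, hp, rfl⟩ := Finset.mem_image.1 ht
  rw [Finset.mem_product, Finset.mem_range, Finset.mem_range] at hp
  exact S.asg.1 _ hp.1 _ hp.2

theorem eq_of (S : Sol k w h P T f) {x y x' y' : ℕ} (hx : x < w) (hy : y < h) (hx' : x' < w)
    (hy' : y' < h) (e1 : (f x y).south = (f x' y').south) (e2 : (f x y).west = (f x' y').west) :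
    f x y = f x' y' := by
  by_contra hne
  rcases S.dirT _ (S.asg.1 x hx y hy) _ (S.asg.1 x' hx' y' hy') hne with e | e
  · exact e e1
  · exact e e2

theorem hor (S : Sol k w h P T f) {x y : ℕ} (hx : x + 1 < w) (hy : y < h) :
    (f (x + 1) y).west = (f x y).east := S.asg.2.2.2.1 x hx y hy

theorem ver (S : Sol k w h P T f) {x y : ℕ} (hx : x < w) (hy : y + 1 < h) :
    (f x (y + 1)).south = (f x y).north := S.asg.2.2.2.2 x hx y hy

open Classical in
/-- At most three tile types are superfluous: every color needs a tile type of its own. -/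
theorem excess (S : Sol k w h P T f) (K : PatOK k w h P o cw bw pl mi up ar ga)
    (V : Finset (Tile ℕ G)) (hV : V ⊆ usedTiles w h f)
    (h2 : ∀ t ∈ V, ∃ t' ∈ usedTiles w h f, t' ∉ V ∧ t'.color = t.color) : V.card ≤ 3 := by
  have h3 : Finset.Icc 1 k ⊆ (usedTiles w h f \ V).image Tile.color := by
    intro c hc
    rw [Finset.mem_Icc] at hc
    obtain ⟨x, hx, y, hy, e⟩ := K.surj c hc.1 hc.2
    rw [← S.col x hx y hy] at e
    by_cases hm : f x y ∈ V
    · obtain ⟨t', a1, a2, a3⟩ := h2 _ hm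
      exact Finset.mem_image.2 ⟨t', Finset.mem_sdiff.2 ⟨a1, a2⟩, a3.trans e⟩
    · exact Finset.mem_image.2 ⟨_, Finset.mem_sdiff.2 ⟨mem_used hx hy, hm⟩, e⟩
  have h4 := (Finset.card_le_card h3).trans Finset.card_image_le
  rw [Nat.card_Icc] at h4
  have h5 := Finset.card_sdiff_add_card_eq_card hV
  have h6 := S.used_card
  omega

/-- The tile types of color `o`. -/
noncomputable def ors {G : Type} (w h : ℕ) (f : ℕ → ℕ → Tile ℕ G) (o : ℕ) : Finset (Tile ℕ G) :=
  (usedTiles w h f).filter fun t => t.color = o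

theorem mem_ors (S : Sol k w h P T f) {x y : ℕ} (hx : x < w) (hy : y < h) (e : P x y = o) :
    f x y ∈ ors w h f o :=
  Finset.mem_filter.2 ⟨mem_used hx hy, (S.col x hx y hy).trans e⟩

/-- Eight tile types see `OR`-colored tiles to their west and to their south. -/
theorem ors_ge_three (S : Sol k w h P T f) (K : PatOK k w h P o cw bw pl mi up ar ga) :
    3 ≤ (ors w h f o).card := by
  classical
  have hw := K.hw
  have hh := K.hh
  set O := ors w h f o with hO
  have h1 : ((Finset.range 8).image fun i =>
      ((f (2 * i + 1) 2).east, (f (2 * i + 2) 1).north)).card = 8 := by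
    rw [Finset.card_image_of_injOn, Finset.card_range]
    intro i hi j hj e
    simp only [Finset.coe_range, Set.mem_Iio] at hi hj
    simp only [Prod.mk.injEq] at e
    rw [← S.hor (by omega) (by omega), ← S.hor (by omega) (by omega),
      ← S.ver (by omega) (by omega), ← S.ver (by omega) (by omega)] at e
    have e' : f (2 * i + 2) 2 = f (2 * j + 2) 2 :=
      S.eq_of (by omega) (by omega) (by omega) (by omega) e.2 e.1
    apply K.pY i hi j hj
    rw [← S.col _ (by omega) _ (by omega), e', S.col _ (by omega) _ (by omega)]
  have h2 : ((Finset.range 8).image fun i =>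
      ((f (2 * i + 1) 2).east, (f (2 * i + 2) 1).north)) ⊆
      O.image Tile.east ×ˢ O.image Tile.north := by
    intro u hu
    obtain ⟨i, hi, rfl⟩ := Finset.mem_image.1 hu
    rw [Finset.mem_range] at hi
    exact Finset.mem_product.2
      ⟨Finset.mem_image_of_mem _ (S.mem_ors (by omega) (by omega) (K.p1 i hi)),
        Finset.mem_image_of_mem _ (S.mem_ors (by omega) (by omega) (K.p2 i hi))⟩
  have h3 := Finset.card_le_card h2
  rw [h1, Finset.card_product] at h3
  by_contra hlt
  have h4 : (O.image Tile.east).card ≤ 2 := Finset.card_image_le.trans (by omega)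
  have h5 : (O.image Tile.north).card ≤ 2 := Finset.card_image_le.trans (by omega)
  have := Nat.mul_le_mul h4 h5
  omega

/-- Two tile types of another color use up one superfluous tile type. -/
theorem excess_one (S : Sol k w h P T f) (K : PatOK k w h P o cw bw pl mi up ar ga)
    {x y x' y' : ℕ} (hx : x < w) (hy : y < h) (hx' : x' < w) (hy' : y' < h)
    (e : P x y = P x' y') (ho : P x y ≠ o) (hne : f x y ≠ f x' y') :
    (ors w h f o).card ≤ 3 := by
  classical
  obtain ⟨t0, h0⟩ : (ors w h f o).Nonempty := by
    rw [← Finset.card_pos]; have := S.ors_ge_three K; omega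
  have hc := S.col x hx y hy
  have hc' := S.col x' hx' y' hy'
  have hn : f x y ∉ (ors w h f o).erase t0 := fun hm =>
    ho (hc.symm.trans (Finset.mem_filter.1 (Finset.mem_erase.1 hm).2).2)
  have hn' : f x' y' ∉ (ors w h f o).erase t0 := fun hm =>
    ho ((e.trans hc'.symm).trans (Finset.mem_filter.1 (Finset.mem_erase.1 hm).2).2)
  have key := S.excess K (insert (f x y) ((ors w h f o).erase t0)) (by
    intro t ht
    rcases Finset.mem_insert.1 ht with rfl | ht
    · exact mem_used hx hy
    · exact (Finset.mem_filter.1 (Finset.mem_erase.1 ht).2).1) (by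
    intro t ht
    rcases Finset.mem_insert.1 ht with rfl | ht
    · refine ⟨f x' y', mem_used hx' hy', ?_, by rw [hc, hc', e]⟩
      rw [Finset.mem_insert, not_or]
      exact ⟨hne.symm, hn'⟩
    · have h1 := Finset.mem_filter.1 (Finset.mem_erase.1 ht).2
      have h2 := Finset.mem_filter.1 h0
      refine ⟨t0, h2.1, ?_, h2.2.trans h1.2.symm⟩
      rw [Finset.mem_insert, not_or]
      refine ⟨fun e0 => ho ?_, fun hm => (Finset.mem_erase.1 hm).1 rfl⟩
      rw [← hc, ← e0, h2.2])
  rw [Finset.card_insert_of_notMem hn, Finset.card_erase_of_mem h0] at key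
  omega

/-- Pairs of tile types of two further colors would use up two superfluous tile types. -/
theorem excess_two (S : Sol k w h P T f) (K : PatOK k w h P o cw bw pl mi up ar ga)
    {x y x' y' u v u' v' : ℕ} (hx : x < w) (hy : y < h) (hx' : x' < w) (hy' : y' < h)
    (e : P x y = P x' y') (ho : P x y ≠ o) (hne : f x y ≠ f x' y')
    (hu : u < w) (hv : v < h) (hu' : u' < w) (hv' : v' < h)
    (e' : P u v = P u' v') (ho' : P u v ≠ o) (hxu : P u v ≠ P x y) : f u v = f u' v' := by
  classical
  by_contra hne'
  obtain ⟨t0, h0⟩ : (ors w h f o).Nonempty := by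
    rw [← Finset.card_pos]; have := S.ors_ge_three K; omega
  have hge := S.ors_ge_three K
  have hc := S.col x hx y hy
  have hc' := S.col x' hx' y' hy'
  have hd := S.col u hu v hv
  have hd' := S.col u' hu' v' hv'
  have oc : ∀ t ∈ (ors w h f o).erase t0, t.color = o := fun t ht =>
    (Finset.mem_filter.1 (Finset.mem_erase.1 ht).2).2
  have t0c := (Finset.mem_filter.1 h0).2
  have n1 : f x y ∉ (ors w h f o).erase t0 := fun hm => ho (hc.symm.trans (oc _ hm))
  have n2 : f u v ∉ insert (f x y) ((ors w h f o).erase t0) := by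
    rw [Finset.mem_insert, not_or]
    exact ⟨fun e0 => hxu (by rw [← hc, ← hd, e0]), fun hm => ho' (hd.symm.trans (oc _ hm))⟩
  have key := S.excess K (insert (f u v) (insert (f x y) ((ors w h f o).erase t0))) (by
    intro t ht
    simp only [Finset.mem_insert] at ht
    rcases ht with rfl | rfl | ht
    · exact mem_used hu hv
    · exact mem_used hx hy
    · exact (Finset.mem_filter.1 (Finset.mem_erase.1 ht).2).1) (by
    intro t ht
    simp only [Finset.mem_insert, not_or] at ht ⊢
    rcases ht with rfl | rfl | ht
    · exact ⟨f u' v', mem_used hu' hv', ⟨fun h => hne' h.symm,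
        fun e0 => hxu (by rw [← hc, e', ← hd', e0]),
        fun hm => ho' ((e'.trans hd'.symm).trans (oc _ hm))⟩, by rw [hd, hd', e']⟩
    · exact ⟨f x' y', mem_used hx' hy', ⟨fun e0 => hxu (by rw [e, ← hc', ← hd, e0]),
        fun h => hne h.symm, fun hm => ho ((e.trans hc'.symm).trans (oc _ hm))⟩,
        by rw [hc, hc', e]⟩
    · exact ⟨t0, (Finset.mem_filter.1 h0).1, ⟨fun e0 => ho' (by rw [← hd, ← e0, t0c]),
        fun e0 => ho (by rw [← hc, ← e0, t0c]), fun hm => (Finset.mem_erase.1 hm).1 rfl⟩,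
        t0c.trans (oc t ht).symm⟩)
  rw [Finset.card_insert_of_notMem n2, Finset.card_insert_of_notMem n1,
    Finset.card_erase_of_mem h0] at key
  omega

/-- The `OR`-colored tiles in `q₁, …, q₄` are all different. -/
theorem gates_inj (S : Sol k w h P T f) (K : PatOK k w h P o cw bw pl mi up ar ga) :
    ∀ i < 4, ∀ j < 4, f (18 + 5 * i + 2) 3 = f (18 + 5 * j + 2) 3 → i = j := by
  have hw := K.hw
  have hh := K.hh
  by_cases hcw : ∀ i < 4, ∀ j < 4, f (18 + 5 * i + 1) 4 = f (18 + 5 * j + 1) 4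
  · -- equal tiles to the west of the gates: the gates are told apart by their south glues
    intro i hi j hj e
    apply K.gainj i hi j hj
    have e' : f (18 + 5 * i + 2) 4 = f (18 + 5 * j + 2) 4 := by
      apply S.eq_of (by omega) (by omega) (by omega) (by omega)
      · rw [S.ver (by omega) (by omega), S.ver (by omega) (by omega), e]
      · rw [S.hor (by omega) (by omega), S.hor (by omega) (by omega), hcw i hi j hj]
    rw [← K.qg i hi, ← K.qg j hj, ← S.col _ (by omega) _ (by omega), e',
      S.col _ (by omega) _ (by omega)]
  · -- otherwise the inputs of the `OR`-colored tiles depend on their colors only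
    push Not at hcw
    obtain ⟨i0, hi0, j0, hj0, hne⟩ := hcw
    have single : ∀ {u v u' v' : ℕ}, u < w → v < h → u' < w → v' < h → P u v = P u' v' →
        P u v ≠ o → P u v ≠ cw → f u v = f u' v' := by
      intro u v u' v' hu hv hu' hv' e' ho' hc
      exact S.excess_two K (by omega) (by omega) (by omega) (by omega)
        ((K.qc i0 hi0).trans (K.qc j0 hj0).symm) (by rw [K.qc i0 hi0]; exact K.co) hne hu hv hu'
        hv' e' ho' (by rw [K.qc i0 hi0]; exact hc)
    have hup : ∀ i < 4, ∀ j < 4, i % 2 = j % 2 →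
        (f (18 + 5 * i + 2) 3).south = (f (18 + 5 * j + 2) 3).south := by
      intro i hi j hj e
      have e1 : f (18 + 5 * i + 2) 2 = f (18 + 5 * j + 2) 2 :=
        single (by omega) (by omega) (by omega) (by omega)
          (by rw [K.qu i hi, K.qu j hj, e]) (by rw [K.qu i hi]; exact K.uo _)
          (by rw [K.qu i hi]; exact K.uc _)
      rw [S.ver (x := 18 + 5 * i + 2) (y := 2) (by omega) (by omega),
        S.ver (x := 18 + 5 * j + 2) (y := 2) (by omega) (by omega), e1]
    have har : ∀ i < 4, ∀ j < 4, i / 2 = j / 2 →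
        (f (18 + 5 * i + 2) 3).west = (f (18 + 5 * j + 2) 3).west := by
      intro i hi j hj e
      have e1 : f (18 + 5 * i + 1) 3 = f (18 + 5 * j + 1) 3 :=
        single (by omega) (by omega) (by omega) (by omega)
          (by rw [K.qa i hi, K.qa j hj, e]) (by rw [K.qa i hi]; exact K.ao _)
          (by rw [K.qa i hi]; exact K.ac _)
      rw [S.hor (x := 18 + 5 * i + 1) (y := 3) (by omega) (by omega),
        S.hor (x := 18 + 5 * j + 1) (y := 3) (by omega) (by omega), e1]
    have hmp : ∀ i < 4, i ≠ 0 → f (18 + 5 * 0 + 2) 3 ≠ f (18 + 5 * i + 2) 3 := by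
      intro i hi hi0 e
      apply K.mp
      have e' : f (18 + 5 * 0 + 3) 3 = f (18 + 5 * i + 3) 3 := by
        apply S.eq_of (by omega) (by omega) (by omega) (by omega)
        · have e1 : f (18 + 5 * 0 + 3) 2 = f (18 + 5 * i + 3) 2 :=
            single (by omega) (by omega) (by omega) (by omega)
              (by rw [K.qb i hi, K.qb 0 (by omega)]) (by rw [K.qb 0 (by omega)]; exact K.bo)
              (by rw [K.qb 0 (by omega)]; exact K.bc)
          rw [S.ver (x := 18 + 5 * 0 + 3) (y := 2) (by omega) (by omega),
            S.ver (x := 18 + 5 * i + 3) (y := 2) (by omega) (by omega), e1]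
        · rw [S.hor (x := 18 + 5 * 0 + 2) (y := 3) (by omega) (by omega),
            S.hor (x := 18 + 5 * i + 2) (y := 3) (by omega) (by omega), e]
      rw [← K.qm, ← K.qp i hi hi0, ← S.col _ (by omega) _ (by omega), e',
        S.col _ (by omega) _ (by omega)]
    -- the two south inputs differ, and so do the two west inputs
    have hu : (f (18 + 5 * 0 + 2) 3).south ≠ (f (18 + 5 * 1 + 2) 3).south := fun e =>
      hmp 1 (by omega) (by omega) (S.eq_of (by omega) (by omega) (by omega) (by omega) e
        (har 0 (by omega) 1 (by omega) rfl))
    have ha : (f (18 + 5 * 0 + 2) 3).west ≠ (f (18 + 5 * 2 + 2) 3).west := fun e =>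
      hmp 2 (by omega) (by omega) (S.eq_of (by omega) (by omega) (by omega) (by omega)
        (hup 0 (by omega) 2 (by omega) rfl) e)
    intro i hi j hj e
    have e1 : i % 2 = j % 2 := by
      by_contra hne
      apply hu
      rcases Nat.mod_two_eq_zero_or_one i with h1 | h1
      · rw [hup 0 (by omega) i hi (by omega), e, hup j hj 1 (by omega) (by omega)]
      · rw [hup 0 (by omega) j hj (by omega), ← e, hup i hi 1 (by omega) (by omega)]
    have e2 : i / 2 = j / 2 := by
      by_contra hne
      apply ha
      rcases (show i / 2 = 0 ∨ i / 2 = 1 by omega) with h1 | h1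
      · rw [har 0 (by omega) i hi (by omega), e, har j hj 2 (by omega) (by omega)]
      · rw [har 0 (by omega) j hj (by omega), ← e, har i hi 2 (by omega) (by omega)]
    omega

open Classical in
/-- The subpatterns `q₁, …, q₄` provide four `OR`-colored tile types. -/
theorem ors_ge_four (S : Sol k w h P T f) (K : PatOK k w h P o cw bw pl mi up ar ga) :
    ((Finset.range 4).image fun i => f (18 + 5 * i + 2) 3).card = 4 ∧
    ((Finset.range 4).image fun i => f (18 + 5 * i + 2) 3) ⊆ ors w h f o := by
  have hw := K.hw
  have hh := K.hh
  constructor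
  · rw [Finset.card_image_of_injOn, Finset.card_range]
    intro i hi j hj e
    simp only [Finset.coe_range, Set.mem_Iio] at hi hj
    exact S.gates_inj K i hi j hj e
  · intro t ht
    obtain ⟨i, hi, rfl⟩ := Finset.mem_image.1 ht
    rw [Finset.mem_range] at hi
    exact S.mem_ors (by omega) (by omega) (K.qor i hi)

/-- All colors other than `OR` have a single tile type. -/
theorem single (S : Sol k w h P T f) (K : PatOK k w h P o cw bw pl mi up ar ga)
    {x y x' y' : ℕ} (hx : x < w) (hy : y < h) (hx' : x' < w) (hy' : y' < h)
    (e : P x y = P x' y') (ho : P x y ≠ o) : f x y = f x' y' := by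
  by_contra hne
  have h1 := S.excess_one K hx hy hx' hy' e ho hne
  have h2 := S.ors_ge_four K
  have := Finset.card_le_card h2.2
  omega

/-- The `OR`-colored tile types have at most two east glues. -/
theorem ors_east (S : Sol k w h P T f) (K : PatOK k w h P o cw bw pl mi up ar ga)
    {t : Tile ℕ G} (ht : t ∈ ors w h f o) :
    t.east = (f (18 + 5 * 0 + 2) 3).east ∨ t.east = (f (18 + 5 * 1 + 2) 3).east := by
  classical
  have hw := K.hw
  have hh := K.hh
  obtain ⟨h4, hsub⟩ := S.ors_ge_four K
  have hle : (ors w h f o).card ≤ 4 := by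
    obtain ⟨t0, h0⟩ : (ors w h f o).Nonempty := ⟨t, ht⟩
    have := S.excess K ((ors w h f o).erase t0)
      (fun t ht => (Finset.mem_filter.1 (Finset.mem_erase.1 ht).2).1)
      (fun t ht => ⟨t0, (Finset.mem_filter.1 h0).1, fun hm => (Finset.mem_erase.1 hm).1 rfl,
        (Finset.mem_filter.1 h0).2.trans
          (Finset.mem_filter.1 (Finset.mem_erase.1 ht).2).2.symm⟩)
    rw [Finset.card_erase_of_mem h0] at this
    omega
  rw [← Finset.eq_of_subset_of_card_le hsub (by omega)] at ht
  obtain ⟨i, hi, rfl⟩ := Finset.mem_image.1 ht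
  rw [Finset.mem_range] at hi
  by_cases h0 : i = 0
  · exact Or.inl (by rw [h0])
  · right
    -- to the east there is a `+`, which has a single tile type
    rw [← S.hor (by omega) (by omega), ← S.hor (by omega) (by omega)]
    rw [S.single K (x := 18 + 5 * i + 2 + 1) (y := 3) (x' := 18 + 5 * 1 + 2 + 1) (y' := 3) (by omega)
      (by omega) (by omega) (by omega) ((K.qp i hi h0).trans (K.qp 1 (by omega) (by omega)).symm)
      (by rw [K.qp i hi h0]; exact K.po)]

end Sol

end Structure

/-! ### From `P` to the three-colored pattern -/

/-- Glues of the constructed system: the blank glue, the counters, the glue behind a finished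
counter, the outputs of supertiles, and the information (an output together with the color) sent
along the bottom row or the left column of a supertile. -/
inductive TGlue (G : Type) where
  | b
  | cnt (n : ℕ)
  | done
  | out (g : G)
  | info (o : Option G) (c : ℕ)

/-- The glue carrying an output; the outputs of the last row and column are blank. -/
def outGlue {G : Type} : Option G → TGlue G
  | none => TGlue.b
  | some g => TGlue.out g

/-- The tile type with given south and west glues. The functions `ef` and `nf` give the
information sent to the east and to the north by a supertile with given south and west inputs. -/
def tileOf {G : Type} (ef nf : G → G → Option G × ℕ) : TGlue G → TGlue G → Tile BWG (TGlue G)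
  | .b, .b => ⟨.black, .b, .b, .b, .b⟩
  | .b, .cnt 0 => ⟨.white, .b, .done, .b, .cnt 0⟩
  | .b, .cnt (n + 1) => ⟨.gray, .b, .cnt n, .b, .cnt (n + 1)⟩
  | .b, .done => ⟨.gray, .b, .done, .b, .done⟩
  | .b, .info o c => ⟨.white, .b, .info o c, .b, .info o c⟩
  | .done, .info o c => ⟨.white, .cnt c, outGlue o, .done, .info o c⟩
  | .cnt 0, .b => ⟨.white, .done, .b, .cnt 0, .b⟩
  | .cnt (n + 1), .b => ⟨.gray, .cnt n, .b, .cnt (n + 1), .b⟩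
  | .done, .b => ⟨.gray, .done, .b, .done, .b⟩
  | .info o c, .b => ⟨.white, .info o c, .b, .info o c, .b⟩
  | .info o c, .done => ⟨.white, outGlue o, .cnt c, .info o c, .done⟩
  | .done, .done => ⟨.gray, .done, .done, .done, .done⟩
  | .out s, .out t => ⟨.white, .info (nf s t).1 (nf s t).2, .info (ef s t).1 (ef s t).2,
      .out s, .out t⟩
  | s, t => ⟨.black, .b, .b, s, t⟩

/-- The west glue at inner position `(i, j)` of the supertile `(x, y)`; gadget rows and columns
are the positions with `y = h` and `x = w`. The south glues are obtained by transposition. -/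
def hw4 {G : Type} (ℓ k w h : ℕ) (P : ℕ → ℕ → ℕ) (eo : ℕ → ℕ → Option G) (x i y j : ℕ) : TGlue G :=
  if y < h then
    if j = 0 then
      (if i = 0 then outGlue (eo (x - 1) y) else if x < w then .info (eo x y) (P x y) else .b)
    else if j + 1 = ℓ then
      (if x < w ∧ 1 ≤ i ∧ i ≤ P x y + 1 then .cnt (P x y + 1 - i) else .done)
    else .b
  else if j = 1 then (if x = 0 ∧ i ≤ k + 1 then .cnt (k + 1 - i) else .done)
  else .b

/-- The east glue at inner position `(i, j)` of the supertile `(x, y)`. -/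
def he4 {G : Type} (ℓ k w h : ℕ) (P : ℕ → ℕ → ℕ) (eo : ℕ → ℕ → Option G) (x i y j : ℕ) : TGlue G :=
  if i + 1 < ℓ then hw4 ℓ k w h P eo x (i + 1) y j else hw4 ℓ k w h P eo (x + 1) 0 y j

/-- Inner positions of neither kind of white or gray line: inside a supertile, or in the outer
two gadget lines. -/
def Plain (ℓ w x i : ℕ) : Prop := (x < w ∧ 1 ≤ i ∧ i + 1 < ℓ) ∨ (x = w ∧ (i = 0 ∨ i = 2))

theorem line_cases {ℓ w x i : ℕ} (hx : x ≤ w) (hi : i < ℓ) (hi2 : x = w → i ≤ 2) :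
    Plain ℓ w x i ∨ (x < w ∧ i = 0) ∨ (x < w ∧ i + 1 = ℓ) ∨ (x = w ∧ i = 1) := by
  unfold Plain; omega

/-- The sizes and outputs used by the construction. -/
structure Fwd {G : Type} (ℓ k w h : ℕ) (P : ℕ → ℕ → ℕ) (eo no : ℕ → ℕ → Option G) : Prop where
  hℓ : ℓ = 5 * k + 8
  hw : 1 ≤ w
  hh : 1 ≤ h
  rng : ∀ x < w, ∀ y < h, 1 ≤ P x y ∧ P x y ≤ k
  eoL : ∀ y < h, eo (w - 1) y = none
  noL : ∀ x < w, no x (h - 1) = none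

namespace Fwd

variable {G : Type} {ℓ k w h : ℕ} {P : ℕ → ℕ → ℕ} {eo no : ℕ → ℕ → Option G}

theorem transpose (H : Fwd ℓ k w h P eo no) :
    Fwd ℓ k h w (fun x y => P y x) (fun x y => no y x) (fun x y => eo y x) where
  hℓ := H.hℓ
  hw := H.hh
  hh := H.hw
  rng := fun x hx y hy => H.rng y hy x hx
  eoL := H.noL
  noL := H.eoL

/-! West and east glues, by the kind of the row. -/

theorem row_plain (H : Fwd ℓ k w h P eo no) {x i y j : ℕ} (hy : Plain ℓ h y j) :
    hw4 ℓ k w h P eo x i y j = .b ∧ he4 ℓ k w h P eo x i y j = .b := by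
  have h0 := H.hℓ
  unfold Plain at hy
  unfold he4 hw4
  rcases hy with ⟨h1, h2, h3⟩ | ⟨rfl, rfl | rfl⟩ <;> constructor <;> split_ifs <;>
    first | rfl | omega

theorem row_L_plain (H : Fwd ℓ k w h P eo no) {x i y : ℕ} (hy : y < h) (hx : x < w) (hi : 1 ≤ i)
    (hi2 : i + 1 < ℓ) :
    hw4 ℓ k w h P eo x i y 0 = .info (eo x y) (P x y) ∧
      he4 ℓ k w h P eo x i y 0 = .info (eo x y) (P x y) := by
  unfold he4 hw4
  simp [hy, hx, hi2, show i ≠ 0 by omega]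

theorem row_L_gadget (H : Fwd ℓ k w h P eo no) {i y : ℕ} (hy : y < h) (hi : i ≤ 2) :
    hw4 ℓ k w h P eo w i y 0 = .b ∧ he4 ℓ k w h P eo w i y 0 = .b := by
  have h0 := H.hℓ
  unfold he4 hw4
  simp [hy, show i + 1 < ℓ by omega, H.eoL y hy, outGlue]

theorem row_L_L (H : Fwd ℓ k w h P eo no) {x y : ℕ} (hy : y < h) (hx : x < w) :
    hw4 ℓ k w h P eo x 0 y 0 = outGlue (eo (x - 1) y) ∧
      he4 ℓ k w h P eo x 0 y 0 = .info (eo x y) (P x y) := by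
  have h0 := H.hℓ
  unfold he4 hw4
  simp [hy, hx, show 1 < ℓ by omega]

theorem row_L_R (H : Fwd ℓ k w h P eo no) {x i y : ℕ} (hy : y < h) (hx : x < w)
    (hi : i + 1 = ℓ) :
    hw4 ℓ k w h P eo x i y 0 = .info (eo x y) (P x y) ∧
      he4 ℓ k w h P eo x i y 0 = outGlue (eo x y) := by
  have h0 := H.hℓ
  unfold he4 hw4
  simp [hy, hx, show ¬ i + 1 < ℓ by omega, show i ≠ 0 by omega]

theorem row_R_count (H : Fwd ℓ k w h P eo no) {x i y j : ℕ} (hy : y < h) (hj : j + 1 = ℓ)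
    (hx : x < w) (hi : 1 ≤ i) (hi2 : i ≤ P x y) :
    hw4 ℓ k w h P eo x i y j = .cnt (P x y - i + 1) ∧
      he4 ℓ k w h P eo x i y j = .cnt (P x y - i) := by
  have h0 := H.hℓ
  have hP := H.rng x hx y hy
  unfold he4 hw4
  rw [if_pos hy, if_neg (by omega), if_pos hj, if_pos (by omega), if_pos (by omega), if_pos hy,
    if_neg (by omega), if_pos hj, if_pos (by omega)]
  exact ⟨by congr 1; omega, by congr 1; omega⟩

theorem row_R_white (H : Fwd ℓ k w h P eo no) {x y j : ℕ} (hy : y < h) (hj : j + 1 = ℓ)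
    (hx : x < w) :
    hw4 ℓ k w h P eo x (P x y + 1) y j = .cnt 0 ∧
      he4 ℓ k w h P eo x (P x y + 1) y j = .done := by
  have h0 := H.hℓ
  have hP := H.rng x hx y hy
  unfold he4 hw4
  rw [if_pos hy, if_neg (by omega), if_pos hj, if_pos (by omega), if_pos (by omega), if_pos hy,
    if_neg (by omega), if_pos hj, if_neg (by omega)]
  exact ⟨by congr 1; omega, rfl⟩

theorem row_R_done (H : Fwd ℓ k w h P eo no) {x i y j : ℕ} (hy : y < h) (hj : j + 1 = ℓ)
    (hi : x < w → P x y + 1 < i) :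
    hw4 ℓ k w h P eo x i y j = .done ∧ he4 ℓ k w h P eo x i y j = .done := by
  have h0 := H.hℓ
  unfold he4 hw4
  rw [if_pos hy, if_neg (by omega), if_pos hj, if_neg (by omega)]
  refine ⟨rfl, ?_⟩
  split_ifs <;> first | rfl | omega

theorem row_R_L (H : Fwd ℓ k w h P eo no) {x y j : ℕ} (hy : y < h) (hj : j + 1 = ℓ)
    (hx : x < w) :
    hw4 ℓ k w h P eo x 0 y j = .done ∧ he4 ℓ k w h P eo x 0 y j = .cnt (P x y) := by
  have h0 := H.hℓ
  have hP := H.rng x hx y hy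
  unfold he4 hw4
  rw [if_pos hy, if_neg (by omega), if_pos hj, if_neg (by omega), if_pos (by omega), if_pos hy,
    if_neg (by omega), if_pos hj, if_pos (by omega)]
  exact ⟨rfl, by congr 1⟩

theorem row_G_count (H : Fwd ℓ k w h P eo no) {i : ℕ} (hi : i ≤ k) :
    hw4 ℓ k w h P eo 0 i h 1 = .cnt (k - i + 1) ∧ he4 ℓ k w h P eo 0 i h 1 = .cnt (k - i) := by
  have h0 := H.hℓ
  unfold he4 hw4
  rw [if_neg (by omega), if_pos rfl, if_pos (by omega), if_pos (by omega), if_neg (by omega),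
    if_pos rfl, if_pos (by omega)]
  exact ⟨by congr 1; omega, by congr 1; omega⟩

theorem row_G_white (H : Fwd ℓ k w h P eo no) :
    hw4 ℓ k w h P eo 0 (k + 1) h 1 = .cnt 0 ∧ he4 ℓ k w h P eo 0 (k + 1) h 1 = .done := by
  have h0 := H.hℓ
  unfold he4 hw4
  rw [if_neg (by omega), if_pos rfl, if_pos (by omega), if_pos (by omega), if_neg (by omega),
    if_pos rfl, if_neg (by omega)]
  exact ⟨by congr 1; omega, rfl⟩

theorem row_G_done (H : Fwd ℓ k w h P eo no) {x i : ℕ} (hi : 1 ≤ x ∨ k + 1 < i) :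
    hw4 ℓ k w h P eo x i h 1 = .done ∧ he4 ℓ k w h P eo x i h 1 = .done := by
  have h0 := H.hℓ
  unfold he4 hw4
  rw [if_neg (by omega), if_pos rfl, if_neg (by omega)]
  refine ⟨rfl, ?_⟩
  rw [if_neg (show ¬ h < h by omega), if_pos rfl, if_neg (show ¬ (x = 0 ∧ i + 1 ≤ k + 1) by omega),
    if_neg (show ¬ (x + 1 = 0 ∧ 0 ≤ k + 1) by omega), if_neg (show ¬ h < h by omega), if_pos rfl,
    ite_self]


/-! The colors of the pattern. -/

theorem color_top {x i b : ℕ} (hx : x < w) (hi : i < ℓ) (hb : ℓ * h ≤ b) :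
    QS ℓ k w h P (ℓ * x + i) b =
      if b = ℓ * h + 1 then (if ℓ * x + i = k + 1 then BWG.white else BWG.gray)
      else (if i = ℓ - 1 then BWG.gray else BWG.black) := QS_top hx hi hb

theorem color_right (H : Fwd ℓ k w h P eo no) {y j a : ℕ} (hy : y < h) (hj : j < ℓ)
    (ha : ℓ * w ≤ a) :
    QS ℓ k w h P a (ℓ * y + j) =
      if a = ℓ * w + 1 then (if ℓ * y + j = k + 1 then BWG.white else BWG.gray)
      else (if j = ℓ - 1 then BWG.gray else BWG.black) := by
  have h0 := H.hℓ
  rw [QS_symm (by omega) fun x hx y hy => (H.rng x hx y hy).2]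
  exact QS_top hy hj ha

theorem color_corner {a b : ℕ} (ha : ℓ * w ≤ a) (hb : ℓ * h ≤ b) :
    QS ℓ k w h P a b = if a = ℓ * w + 1 ∨ b = ℓ * h + 1 then BWG.gray else BWG.black := by
  rw [QS, if_neg (by omega), if_neg (by omega), if_neg (by omega)]

theorem color_plain (H : Fwd ℓ k w h P eo no) {x i y j : ℕ} (hx : Plain ℓ w x i)
    (hy : Plain ℓ h y j) : QS ℓ k w h P (ℓ * x + i) (ℓ * y + j) = .black := by
  have h0 := H.hℓ
  rcases hx with ⟨h1, h2, h3⟩ | ⟨rfl, h1⟩ <;> rcases hy with ⟨h4, h5, h6⟩ | ⟨rfl, h4⟩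
  · rw [QS_in h1 h4 (by omega) (by omega), superPat, if_neg (by omega), if_neg (by omega),
      if_neg (by omega), if_neg (by omega)]
  · rw [color_top h1 (by omega) (by omega), if_neg (by omega), if_neg (by omega)]
  · rw [H.color_right h4 (by omega) (by omega), if_neg (by omega), if_neg (by omega)]
  · rw [color_corner (by omega) (by omega), if_neg (by omega)]

end Fwd

section Keys

open Classical in
/-- The inputs of the gray tile types. -/
noncomputable def grayKeys (G : Type) (k : ℕ) : Finset (TGlue G × TGlue G) :=
  ((Finset.Icc 1 k).image fun n => (.b, .cnt n)) ∪ ((Finset.Icc 1 k).image fun n => (.cnt n, .b)) ∪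
    {(.b, .done), (.done, .b), (.done, .done)}

open Classical in
/-- The inputs of the white tile types. -/
noncomputable def whiteKeys {G : Type} (IE IN : Finset (Option G × ℕ)) (SA : Finset (G × G)) :
    Finset (TGlue G × TGlue G) :=
  (SA.image fun p => (.out p.1, .out p.2)) ∪ (IE.image fun p => (.b, .info p.1 p.2)) ∪
    (IE.image fun p => (.done, .info p.1 p.2)) ∪ (IN.image fun p => (.info p.1 p.2, .b)) ∪
    (IN.image fun p => (.info p.1 p.2, .done)) ∪ {(.b, .cnt 0), (.cnt 0, .b)}

open Classical in
/-- The inputs of all tile types of the constructed system. -/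
noncomputable def allKeys {G : Type} (k : ℕ) (IE IN : Finset (Option G × ℕ))
    (SA : Finset (G × G)) : Finset (TGlue G × TGlue G) :=
  {(.b, .b)} ∪ whiteKeys IE IN SA ∪ grayKeys G k

theorem grayKeys_card (G : Type) (k : ℕ) : (grayKeys G k).card ≤ 2 * k + 3 := by
  classical
  unfold grayKeys
  refine (Finset.card_union_le _ _).trans ?_
  refine (Nat.add_le_add (Finset.card_union_le _ _) Finset.card_le_three).trans ?_
  have h2 := Finset.card_image_le (s := Finset.Icc 1 k)
    (f := fun n => (TGlue.b (G := G), TGlue.cnt (G := G) n))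
  have h3 := Finset.card_image_le (s := Finset.Icc 1 k)
    (f := fun n => (TGlue.cnt (G := G) n, TGlue.b (G := G)))
  rw [Nat.card_Icc] at h2 h3
  omega

theorem whiteKeys_card {G : Type} (IE IN : Finset (Option G × ℕ)) (SA : Finset (G × G)) :
    (whiteKeys IE IN SA).card ≤ SA.card + 2 * IE.card + 2 * IN.card + 2 := by
  classical
  unfold whiteKeys
  refine (Finset.card_union_le _ _).trans ?_
  refine (Nat.add_le_add (Finset.card_union_le _ _) Finset.card_le_two).trans ?_
  refine (Nat.add_le_add_right (Nat.add_le_add_right (Finset.card_union_le _ _) _) _).trans ?_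
  refine (Nat.add_le_add_right (Nat.add_le_add_right (Nat.add_le_add_right
    (Finset.card_union_le _ _) _) _) _).trans ?_
  refine (Nat.add_le_add_right (Nat.add_le_add_right (Nat.add_le_add_right (Nat.add_le_add_right
    (Finset.card_union_le _ _) _) _) _) _).trans ?_
  have h1 := Finset.card_image_le (s := SA) (f := fun p => (TGlue.out p.1, TGlue.out p.2))
  have h2 := Finset.card_image_le (s := IE) (f := fun p => (TGlue.b (G := G), TGlue.info p.1 p.2))
  have h3 := Finset.card_image_le (s := IE) (f := fun p => (TGlue.done (G := G), TGlue.info p.1 p.2))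
  have h4 := Finset.card_image_le (s := IN) (f := fun p => (TGlue.info p.1 p.2, TGlue.b (G := G)))
  have h5 := Finset.card_image_le (s := IN) (f := fun p => (TGlue.info p.1 p.2, TGlue.done (G := G)))
  omega

end Keys

/-- The inputs and outputs of the interior supertiles, as prescribed by the functions `ef` and
`nf`; the finite sets collect everything that occurs. -/
structure FwdIO {G : Type} (w h : ℕ) (P : ℕ → ℕ → ℕ) (eo no : ℕ → ℕ → Option G)
    (ef nf : G → G → Option G × ℕ) (IE IN : Finset (Option G × ℕ)) (SA : Finset (G × G)) :
    Prop where
  io : ∀ x y, 1 ≤ x → x < w → 1 ≤ y → y < h → ∃ s t, no x (y - 1) = some s ∧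
    eo (x - 1) y = some t ∧ ef s t = (eo x y, P x y) ∧ nf s t = (no x y, P x y) ∧ (s, t) ∈ SA
  ie : ∀ x y, x < w → 1 ≤ y → y < h → (eo x y, P x y) ∈ IE
  inn : ∀ x y, 1 ≤ x → x < w → y < h → (no x y, P x y) ∈ IN

section Core

variable {G : Type} {ℓ k w h : ℕ} {P : ℕ → ℕ → ℕ} {eo no : ℕ → ℕ → Option G}
  {ef nf : G → G → Option G × ℕ} {IE IN : Finset (Option G × ℕ)} {SA : Finset (G × G)}

/-- At this position the tile prescribed by the pattern and the glues belongs to the system. -/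
def Good (ℓ k w h : ℕ) (P : ℕ → ℕ → ℕ) (eo no : ℕ → ℕ → Option G)
    (ef nf : G → G → Option G × ℕ) (IE IN : Finset (Option G × ℕ)) (SA : Finset (G × G))
    (x i y j : ℕ) : Prop :=
  tileOf ef nf (hw4 ℓ k h w (fun x y => P y x) (fun x y => no y x) y j x i)
      (hw4 ℓ k w h P eo x i y j) =
    ⟨QS ℓ k w h P (ℓ * x + i) (ℓ * y + j),
      he4 ℓ k h w (fun x y => P y x) (fun x y => no y x) y j x i,
      he4 ℓ k w h P eo x i y j,
      hw4 ℓ k h w (fun x y => P y x) (fun x y => no y x) y j x i,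
      hw4 ℓ k w h P eo x i y j⟩ ∧
  (hw4 ℓ k h w (fun x y => P y x) (fun x y => no y x) y j x i,
    hw4 ℓ k w h P eo x i y j) ∈ allKeys k IE IN SA

theorem good_of {x i y j : ℕ} {n e s t : TGlue G} {c : BWG}
    (hS : hw4 ℓ k h w (fun x y => P y x) (fun x y => no y x) y j x i = s ∧
      he4 ℓ k h w (fun x y => P y x) (fun x y => no y x) y j x i = n)
    (hW : hw4 ℓ k w h P eo x i y j = t ∧ he4 ℓ k w h P eo x i y j = e)
    (hc : QS ℓ k w h P (ℓ * x + i) (ℓ * y + j) = c)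
    (ht : tileOf ef nf s t = ⟨c, n, e, s, t⟩) (hm : (s, t) ∈ allKeys k IE IN SA) :
    Good ℓ k w h P eo no ef nf IE IN SA x i y j := by
  rw [Good, hS.1, hS.2, hW.1, hW.2, hc]
  exact ⟨ht, hm⟩

theorem good (H : Fwd ℓ k w h P eo no) (I : FwdIO w h P eo no ef nf IE IN SA)
    {x i y j : ℕ} (hx : x ≤ w) (hi : i < ℓ) (hi2 : x = w → i ≤ 2) (hxi : 1 ≤ x ∨ 1 ≤ i)
    (hy : y ≤ h) (hj : j < ℓ) (hj2 : y = h → j ≤ 2) (hyj : 1 ≤ y ∨ 1 ≤ j) :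
    Good ℓ k w h P eo no ef nf IE IN SA x i y j := by
  classical
  have h0 := H.hℓ
  have T := H.transpose
  have hw := H.hw
  have hh := H.hh
  have lw : ℓ * 1 ≤ ℓ * w := Nat.mul_le_mul_left _ hw
  have lh : ℓ * 1 ≤ ℓ * h := Nat.mul_le_mul_left _ hh
  rcases line_cases hx hi hi2 with cx | ⟨cx, rfl⟩ | ⟨cx, ci⟩ | ⟨rfl, rfl⟩ <;>
  rcases line_cases hy hj hj2 with cy | ⟨cy, rfl⟩ | ⟨cy, cj⟩ | ⟨rfl, rfl⟩
  -- the interior of a supertile and the outer gadget lines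
  · exact good_of (T.row_plain cx) (H.row_plain cy) (H.color_plain cx cy) rfl (by simp [allKeys])
  -- bottom row
  · have hy1 : 1 ≤ y := by omega
    rcases cx with ⟨h1, h2, h3⟩ | ⟨rfl, h1⟩
    · exact good_of (T.row_plain (Or.inl ⟨h1, h2, h3⟩)) (H.row_L_plain cy h1 h2 h3)
        (by rw [QS_in h1 cy (by omega) (by omega), superPat, if_pos rfl]) rfl
        (by have := I.ie x y h1 hy1 cy; simp [allKeys, whiteKeys, this])
    · exact good_of (T.row_plain (Or.inr ⟨rfl, h1⟩)) (H.row_L_gadget cy (by omega))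
        (by rw [H.color_right cy (by omega) (by omega), if_neg (by omega), if_neg (by omega)]) rfl
        (by simp [allKeys])
  -- color counter in the top row
  · rcases cx with ⟨h1, h2, h3⟩ | ⟨rfl, h1⟩
    · have hP := H.rng x h1 y cy
      have hcol := QS_in (k := k) (P := P) h1 cy (show i < ℓ by omega) hj
      rw [superPat, if_neg (by omega), if_neg (by omega), if_pos (by omega)] at hcol
      have hplain := T.row_plain (x := y) (i := j) (Or.inl ⟨h1, h2, h3⟩)
      rcases lt_trichotomy i (P x y + 1) with h4 | rfl | h4
      · rw [if_neg (by omega)] at hcol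
        exact good_of hplain (H.row_R_count cy cj h1 h2 (by omega)) hcol rfl
          (by simp [allKeys, grayKeys]; omega)
      · rw [if_pos rfl] at hcol
        exact good_of hplain (H.row_R_white cy cj h1) hcol rfl (by simp [allKeys, whiteKeys])
      · rw [if_neg (by omega)] at hcol
        exact good_of hplain (H.row_R_done cy cj fun _ => h4) hcol rfl
          (by simp [allKeys, grayKeys])
    · exact good_of (T.row_plain (Or.inr ⟨rfl, h1⟩)) (H.row_R_done cy cj (by omega))
        (by rw [H.color_right cy (by omega) (by omega), if_neg (by omega), if_pos (by omega)]) rfl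
        (by simp [allKeys, grayKeys])
  -- first gadget row
  · have hplain := T.row_plain (x := y) (i := 1) cx
    rcases cx with ⟨h1, h2, h3⟩ | ⟨rfl, h1⟩
    · have hcol := Fwd.color_top (P := P) (k := k) (h := y) (b := ℓ * y + 1) h1 hi (by omega)
      rw [if_pos rfl] at hcol
      rcases Nat.eq_zero_or_pos x with rfl | hx0
      · rcases lt_trichotomy i (k + 1) with h4 | rfl | h4
        · rw [if_neg (by omega)] at hcol
          exact good_of hplain (H.row_G_count (by omega)) hcol rfl
            (by simp [allKeys, grayKeys]; omega)
        · rw [if_pos (by omega)] at hcol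
          exact good_of hplain H.row_G_white hcol rfl (by simp [allKeys, whiteKeys])
        · rw [if_neg (by omega)] at hcol
          exact good_of hplain (H.row_G_done (by omega)) hcol rfl (by simp [allKeys, grayKeys])
      · have : ℓ * 1 ≤ ℓ * x := Nat.mul_le_mul_left _ hx0
        rw [if_neg (by omega)] at hcol
        exact good_of hplain (H.row_G_done (by omega)) hcol rfl (by simp [allKeys, grayKeys])
    · exact good_of hplain (H.row_G_done (by omega))
        (by rw [Fwd.color_corner (by omega) (by omega), if_pos (by omega)]) rfl
        (by simp [allKeys, grayKeys])
  -- left column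
  · have hx1 : 1 ≤ x := by omega
    rcases cy with ⟨h1, h2, h3⟩ | ⟨rfl, h1⟩
    · exact good_of (T.row_L_plain cx h1 h2 h3) (H.row_plain (Or.inl ⟨h1, h2, h3⟩))
        (by rw [QS_in cx h1 (by omega) (by omega), superPat, if_neg (by omega), if_pos rfl]) rfl
        (by have := I.inn x y hx1 cx h1; simp [allKeys, whiteKeys, this])
    · exact good_of (T.row_L_gadget cx (by omega)) (H.row_plain (Or.inr ⟨rfl, h1⟩))
        (by rw [Fwd.color_top cx (by omega) (by omega), if_neg (by omega), if_neg (by omega)]) rfl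
        (by simp [allKeys])
  -- bottom left tile of a supertile: this is where the inputs are evaluated
  · obtain ⟨s, t, e1, e2, e3, e4, e5⟩ := I.io x y (by omega) cx (by omega) cy
    have hS := T.row_L_L cx cy
    have hW := H.row_L_L cy cx
    rw [e1] at hS
    rw [e2] at hW
    exact good_of hS hW (by rw [QS_in cx cy (by omega) (by omega), superPat, if_pos rfl])
      (by simp only [outGlue, tileOf, e3, e4]) (by simp [allKeys, whiteKeys, outGlue, e5])
  -- top left tile of a supertile
  · exact good_of (T.row_L_R cx cy cj) (H.row_R_L cy cj cx)
      (by rw [QS_in cx cy (by omega) (by omega), superPat, if_neg (by omega), if_pos rfl]) rfl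
      (by have := I.inn x y (by omega) cx cy; simp [allKeys, whiteKeys, this])
  · exact good_of (T.row_L_gadget cx (by omega)) (H.row_G_done (by omega))
      (by have : ℓ * 1 ≤ ℓ * x := Nat.mul_le_mul_left _ (by omega)
          rw [Fwd.color_top cx (by omega) (by omega), if_pos (by omega), if_neg (by omega)]) rfl
      (by simp [allKeys, grayKeys])
  -- color counter in the right column
  · rcases cy with ⟨h1, h2, h3⟩ | ⟨rfl, h1⟩
    · have hP := H.rng x cx y h1
      have hcol := QS_in (k := k) (P := P) cx h1 hi (show j < ℓ by omega)
      rw [superPat, if_neg (by omega), if_neg (by omega), if_neg (by omega),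
        if_pos (by omega)] at hcol
      have hplain := H.row_plain (x := x) (i := i) (Or.inl ⟨h1, h2, h3⟩)
      rcases lt_trichotomy j (P x y + 1) with h4 | rfl | h4
      · rw [if_neg (by omega)] at hcol
        exact good_of (T.row_R_count cx ci h1 h2 (by omega)) hplain hcol rfl
          (by simp [allKeys, grayKeys]; omega)
      · rw [if_pos rfl] at hcol
        exact good_of (T.row_R_white cx ci h1) hplain hcol rfl (by simp [allKeys, whiteKeys])
      · rw [if_neg (by omega)] at hcol
        exact good_of (T.row_R_done cx ci fun _ => h4) hplain hcol rfl
          (by simp [allKeys, grayKeys])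
    · exact good_of (T.row_R_done cx ci (by omega)) (H.row_plain (Or.inr ⟨rfl, h1⟩))
        (by rw [Fwd.color_top cx (by omega) (by omega), if_neg (by omega), if_pos (by omega)]) rfl
        (by simp [allKeys, grayKeys])
  -- bottom right tile of a supertile
  · exact good_of (T.row_R_L cx ci cy) (H.row_L_R cy cx ci)
      (by rw [QS_in cx cy (by omega) (by omega), superPat, if_pos rfl]) rfl
      (by have := I.ie x y cx (by omega) cy; simp [allKeys, whiteKeys, this])
  -- top right tile of a supertile
  · have hP := H.rng x cx y cy
    exact good_of (T.row_R_done cx ci fun _ => by omega) (H.row_R_done cy cj fun _ => by omega)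
      (by rw [QS_in cx cy (by omega) (by omega), superPat, if_neg (by omega), if_neg (by omega),
        if_pos (by omega), if_neg (by omega)]) rfl (by simp [allKeys, grayKeys])
  · exact good_of (T.row_R_done cx ci (by omega)) (H.row_G_done (by omega))
      (by rw [Fwd.color_top cx (by omega) (by omega), if_pos (by omega), if_neg (by omega)]) rfl
      (by simp [allKeys, grayKeys])
  -- first gadget column
  · have hplain := H.row_plain (x := x) (i := 1) cy
    rcases cy with ⟨h1, h2, h3⟩ | ⟨rfl, h1⟩
    · have hcol := H.color_right (a := ℓ * x + 1) h1 hj (by omega)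
      rw [if_pos rfl] at hcol
      rcases Nat.eq_zero_or_pos y with rfl | hy0
      · rcases lt_trichotomy j (k + 1) with h4 | rfl | h4
        · rw [if_neg (by omega)] at hcol
          exact good_of (T.row_G_count (by omega)) hplain hcol rfl
            (by simp [allKeys, grayKeys]; omega)
        · rw [if_pos (by omega)] at hcol
          exact good_of T.row_G_white hplain hcol rfl (by simp [allKeys, whiteKeys])
        · rw [if_neg (by omega)] at hcol
          exact good_of (T.row_G_done (by omega)) hplain hcol rfl (by simp [allKeys, grayKeys])
      · have : ℓ * 1 ≤ ℓ * y := Nat.mul_le_mul_left _ hy0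
        rw [if_neg (by omega)] at hcol
        exact good_of (T.row_G_done (by omega)) hplain hcol rfl (by simp [allKeys, grayKeys])
    · exact good_of (T.row_G_done (by omega)) hplain
        (by rw [Fwd.color_corner (by omega) (by omega), if_pos (by omega)]) rfl
        (by simp [allKeys, grayKeys])
  · exact good_of (T.row_G_done (by omega)) (H.row_L_gadget cy (by omega))
      (by have : ℓ * 1 ≤ ℓ * y := Nat.mul_le_mul_left _ (by omega)
          rw [H.color_right cy (by omega) (by omega), if_pos (by omega), if_neg (by omega)]) rfl
      (by simp [allKeys, grayKeys])
  · exact good_of (T.row_G_done (by omega)) (H.row_R_done cy cj (by omega))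
      (by rw [H.color_right cy (by omega) (by omega), if_pos (by omega), if_neg (by omega)]) rfl
      (by simp [allKeys, grayKeys])
  · exact good_of (T.row_G_done (by omega)) (H.row_G_done (by omega))
      (by rw [Fwd.color_corner (by omega) (by omega), if_pos (by omega)]) rfl
      (by simp [allKeys, grayKeys])

end Core

/-- A directed system assembling the three-colored pattern, from the information flow of an
assembly of `P`. -/
theorem forward_core {G : Type} {ℓ k w h : ℕ} {P : ℕ → ℕ → ℕ} {eo no : ℕ → ℕ → Option G}
    {ef nf : G → G → Option G × ℕ} {IE IN : Finset (Option G × ℕ)} {SA : Finset (G × G)}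
    (H : Fwd ℓ k w h P eo no) (I : FwdIO w h P eo no ef nf IE IN SA) {mw : ℕ}
    (hm : SA.card + 2 * IE.card + 2 * IN.card + 2 ≤ mw) :
    ∃ (G₂ : Type) (Θ : RTAS BWG G₂), DirectedTAS Θ ∧ countColor Θ BWG.black ≤ 1 ∧
      countColor Θ BWG.white ≤ mw ∧ countColor Θ BWG.gray ≤ 2 * k + 3 ∧
      SelfAssembles Θ (ℓ * w + 2) (ℓ * h + 2) (fun a b => QS ℓ k w h P (a + 1) (b + 1)) := by
  classical
  have h0 := H.hℓ
  -- glues in global coordinates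
  set W : ℕ → ℕ → TGlue G := fun a b => hw4 ℓ k w h P eo (a / ℓ) (a % ℓ) (b / ℓ) (b % ℓ) with hW
  set S : ℕ → ℕ → TGlue G := fun a b => hw4 ℓ k h w (fun x y => P y x) (fun x y => no y x)
    (b / ℓ) (b % ℓ) (a / ℓ) (a % ℓ) with hS
  have key : ∀ a b, 1 ≤ a → a < ℓ * w + 3 → 1 ≤ b → b < ℓ * h + 3 →
      tileOf ef nf (S a b) (W a b) =
        ⟨QS ℓ k w h P a b, S a (b + 1), W (a + 1) b, S a b, W a b⟩ ∧
      (S a b, W a b) ∈ allKeys k IE IN SA := by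
    have dec : ∀ a w, a < ℓ * w + 3 → 1 ≤ w → 1 ≤ a → ∃ x i, a = ℓ * x + i ∧ x ≤ w ∧ i < ℓ ∧
        (x = w → i ≤ 2) ∧ (1 ≤ x ∨ 1 ≤ i) := by
      intro a w ha hw ha1
      have e := Nat.div_add_mod a ℓ
      have hi := Nat.mod_lt a (show 0 < ℓ by omega)
      refine ⟨a / ℓ, a % ℓ, e.symm, ?_, hi, ?_, ?_⟩
      · by_contra hc
        have := mul_succ_le (ℓ := ℓ) (not_le.1 hc)
        omega
      · intro hx; rw [hx] at e; omega
      · by_contra hc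
        push Not at hc
        have h1 : a / ℓ = 0 := Nat.lt_one_iff.1 hc.1
        rw [h1] at e
        omega
    have next : ∀ x i, i < ℓ → (ℓ * x + i + 1) = if i + 1 < ℓ then ℓ * x + (i + 1) else
        ℓ * (x + 1) + 0 := by
      intro x i hi
      rw [Nat.mul_succ]
      split_ifs <;> omega
    intro a b ha1 ha hb1 hb
    obtain ⟨x, i, rfl, hx, hi, hi2, hxi⟩ := dec a w ha H.hw ha1
    obtain ⟨y, j, rfl, hy, hj, hj2, hyj⟩ := dec b h hb H.hh hb1
    have hg := good H I hx hi hi2 hxi hy hj hj2 hyj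
    have e1 : W (ℓ * x + i) (ℓ * y + j) = hw4 ℓ k w h P eo x i y j := by
      simp only [hW, div_of hi, mod_of hi, div_of hj, mod_of hj]
    have e2 : S (ℓ * x + i) (ℓ * y + j) =
        hw4 ℓ k h w (fun x y => P y x) (fun x y => no y x) y j x i := by
      simp only [hS, div_of hi, mod_of hi, div_of hj, mod_of hj]
    have e3 : W (ℓ * x + i + 1) (ℓ * y + j) = he4 ℓ k w h P eo x i y j := by
      rw [next x i hi, he4]
      split_ifs with hc
      · simp only [hW, div_of hc, mod_of hc, div_of hj, mod_of hj]
      · simp only [hW, div_of (show 0 < ℓ by omega), mod_of (show 0 < ℓ by omega), div_of hj,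
          mod_of hj]
    have e4 : S (ℓ * x + i) (ℓ * y + j + 1) =
        he4 ℓ k h w (fun x y => P y x) (fun x y => no y x) y j x i := by
      rw [next y j hj, he4]
      split_ifs with hc
      · simp only [hS, div_of hi, mod_of hi, div_of hc, mod_of hc]
      · simp only [hS, div_of hi, mod_of hi, div_of (show 0 < ℓ by omega),
          mod_of (show 0 < ℓ by omega)]
    rw [e1, e2, e3, e4]
    exact hg
  have inp : ∀ s t, (tileOf ef nf s t).south = s ∧ (tileOf ef nf s t).west = t := by
    intro s t
    rcases s with _ | (_ | n) | _ | _ | _ <;> rcases t with _ | (_ | m) | _ | _ | _ <;>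
      exact ⟨rfl, rfl⟩
  have cb : ∀ p ∈ ({(.b, .b)} : Finset (TGlue G × TGlue G)),
      (tileOf ef nf p.1 p.2).color = BWG.black := by
    intro p hp
    rw [Finset.mem_singleton] at hp
    subst hp
    rfl
  have cg : ∀ p ∈ grayKeys G k, (tileOf ef nf p.1 p.2).color = BWG.gray := by
    intro p hp
    simp only [grayKeys, Finset.mem_union, Finset.mem_image, Finset.mem_Icc, Finset.mem_insert,
      Finset.mem_singleton] at hp
    rcases hp with (⟨n, hn, rfl⟩ | ⟨n, hn, rfl⟩) | rfl | rfl | rfl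
    · obtain ⟨n, rfl⟩ := Nat.exists_eq_add_of_le' hn.1; rfl
    · obtain ⟨n, rfl⟩ := Nat.exists_eq_add_of_le' hn.1; rfl
    all_goals rfl
  have cw : ∀ p ∈ whiteKeys IE IN SA, (tileOf ef nf p.1 p.2).color = BWG.white := by
    intro p hp
    simp only [whiteKeys, Finset.mem_union, Finset.mem_image, Finset.mem_insert,
      Finset.mem_singleton] at hp
    rcases hp with ((((⟨q, hq, rfl⟩ | ⟨q, hq, rfl⟩) | ⟨q, hq, rfl⟩) | ⟨q, hq, rfl⟩) |
      ⟨q, hq, rfl⟩) | rfl | rfl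
    all_goals rfl
  have cnt : ∀ (c : BWG) (K : Finset (TGlue G × TGlue G)),
      (∀ p ∈ allKeys k IE IN SA, (tileOf ef nf p.1 p.2).color = c → p ∈ K) →
      (((allKeys k IE IN SA).image fun p => tileOf ef nf p.1 p.2).filter
        (fun t => t.color = c)).card ≤ K.card := by
    intro c K hK
    refine (Finset.card_le_card ?_).trans
      (Finset.card_image_le (s := K) (f := fun p => tileOf ef nf p.1 p.2))
    intro t ht
    rw [Finset.mem_filter, Finset.mem_image] at ht
    obtain ⟨⟨p, hp, rfl⟩, hc⟩ := ht
    exact Finset.mem_image.2 ⟨p, hK p hp hc, rfl⟩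
  refine ⟨TGlue G, ⟨(allKeys k IE IN SA).image fun p => tileOf ef nf p.1 p.2,
    fun a => S (a + 1) 1, fun b => W 1 (b + 1)⟩, ?_, ?_, ?_, ?_,
    fun a b => tileOf ef nf (S (a + 1) (b + 1)) (W (a + 1) (b + 1)), ⟨?_, ?_, ?_, ?_, ?_⟩, ?_⟩
  · intro t ht t' ht' hne
    obtain ⟨p, hp, rfl⟩ := Finset.mem_image.1 ht
    obtain ⟨p', hp', rfl⟩ := Finset.mem_image.1 ht'
    by_contra hcon
    push Not at hcon
    simp only [(inp _ _).1, (inp _ _).2] at hcon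
    exact hne (by rw [hcon.1, hcon.2])
  · refine le_trans ?_ (Finset.card_singleton ((.b, .b) : TGlue G × TGlue G)).le
    unfold countColor
    convert cnt BWG.black {(.b, .b)} ?_
    intro p hp hc
    simp only [allKeys, Finset.mem_union] at hp
    rcases hp with (hp | hp) | hp
    · exact hp
    · rw [cw p hp] at hc; cases hc
    · rw [cg p hp] at hc; cases hc
  · refine le_trans ?_ ((whiteKeys_card IE IN SA).trans hm)
    unfold countColor
    convert cnt BWG.white (whiteKeys IE IN SA) ?_
    intro p hp hc
    simp only [allKeys, Finset.mem_union] at hp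
    rcases hp with (hp | hp) | hp
    · rw [cb p hp] at hc; cases hc
    · exact hp
    · rw [cg p hp] at hc; cases hc
  · refine le_trans ?_ (grayKeys_card G k)
    unfold countColor
    convert cnt BWG.gray (grayKeys G k) ?_
    intro p hp hc
    simp only [allKeys, Finset.mem_union] at hp
    rcases hp with (hp | hp) | hp
    · rw [cb p hp] at hc; cases hc
    · rw [cw p hp] at hc; cases hc
    · exact hp
  · intro a ha b hb
    exact Finset.mem_image.2 ⟨_, (key (a + 1) (b + 1) (by omega) (by omega) (by omega)
      (by omega)).2, rfl⟩
  · intro b _; exact (inp _ _).2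
  · intro a _; exact (inp _ _).1
  · intro a ha b hb
    dsimp only
    rw [(inp _ _).2, (key (a + 1) (b + 1) (by omega) (by omega) (by omega) (by omega)).1]
  · intro a ha b hb
    dsimp only
    rw [(inp _ _).1, (key (a + 1) (b + 1) (by omega) (by omega) (by omega) (by omega)).1]
  · intro a ha b hb
    change (tileOf ef nf (S (a + 1) (b + 1)) (W (a + 1) (b + 1))).color = _
    rw [(key (a + 1) (b + 1) (by omega) (by omega) (by omega) (by omega)).1]

/-! ### Simulating a small system for the pattern of a formula -/

section Simulate

variable {G : Type} {k w h : ℕ} {P : ℕ → ℕ → ℕ} {o cw bw pl mi : ℕ} {up ar ga : ℕ → ℕ}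
  {T : RTAS ℕ G} {f : ℕ → ℕ → Tile ℕ G}

/-- The east glue, omitted on the right edge of the pattern. -/
def eastOut {G : Type} (w : ℕ) (f : ℕ → ℕ → Tile ℕ G) (x y : ℕ) : Option G :=
  if x + 1 = w then none else some (f x y).east

/-- The north glue, omitted on the top edge of the pattern. -/
def northOut {G : Type} (h : ℕ) (f : ℕ → ℕ → Tile ℕ G) (x y : ℕ) : Option G :=
  if y + 1 = h then none else some (f x y).north

namespace PatOK

theorem o_inner (K : PatOK k w h P o cw bw pl mi up ar ga) {x y : ℕ} (hx : x < w) (hy : y < h)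
    (hb : x = 0 ∨ y = 0 ∨ x + 1 = w ∨ y + 1 = h) : P x y ≠ o := by
  have hw := K.hw
  have hh := K.hh
  intro e
  obtain ⟨rfl, rfl⟩ := K.bd x hx y hy (2 * 0 + 1) (by omega) 2 (by omega) hb
    (e.trans (K.p1 0 (by omega)).symm)
  omega

end PatOK

namespace Sol

/-- The tile type at a position determines what is passed on. -/
theorem outs (S : Sol k w h P T f) (K : PatOK k w h P o cw bw pl mi up ar ga) {x y x' y' : ℕ}
    (hx : x < w) (hy : y < h) (hx' : x' < w) (hy' : y' < h) (e : f x y = f x' y') :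
    P x y = P x' y' ∧ eastOut w f x y = eastOut w f x' y' ∧
      northOut h f x y = northOut h f x' y' := by
  have e1 : P x y = P x' y' := by rw [← S.col x hx y hy, e, S.col x' hx' y' hy']
  refine ⟨e1, ?_⟩
  by_cases hb : x = 0 ∨ y = 0 ∨ x + 1 = w ∨ y + 1 = h
  · obtain ⟨rfl, rfl⟩ := K.bd x hx y hy x' hx' y' hy' hb e1
    exact ⟨rfl, rfl⟩
  · by_cases hb' : x' = 0 ∨ y' = 0 ∨ x' + 1 = w ∨ y' + 1 = h
    · obtain ⟨rfl, rfl⟩ := K.bd x' hx' y' hy' x hx y hy hb' e1.symm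
      exact ⟨rfl, rfl⟩
    · unfold eastOut northOut
      rw [if_neg (by omega), if_neg (by omega), if_neg (by omega), if_neg (by omega), e]
      exact ⟨rfl, rfl⟩

/-- Tiles on the boundary occur nowhere else. -/
theorem bd_tile (S : Sol k w h P T f) (K : PatOK k w h P o cw bw pl mi up ar ga) {x y x' y' : ℕ}
    (hx : x < w) (hy : y < h) (hx' : x' < w) (hy' : y' < h)
    (hb : x = 0 ∨ y = 0 ∨ x + 1 = w ∨ y + 1 = h) (e : f x y = f x' y') : x = x' ∧ y = y' :=
  K.bd x hx y hy x' hx' y' hy' hb (S.outs K hx hy hx' hy' e).1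

open Classical in
/-- The tile types away from a set `B` of boundary positions leave room for those on `B`. -/
theorem room (S : Sol k w h P T f) (K : PatOK k w h P o cw bw pl mi up ar ga)
    (A B : Finset (ℕ × ℕ)) (hA : ∀ p ∈ A, p.1 < w ∧ p.2 < h)
    (hB : ∀ p ∈ B, p.1 < w ∧ p.2 < h ∧ (p.1 = 0 ∨ p.2 = 0)) (hd : Disjoint A B) :
    (A.image fun p => f p.1 p.2).card + B.card ≤ k + 3 := by
  have h1 : (B.image fun p => f p.1 p.2).card = B.card := by
    apply Finset.card_image_of_injOn
    intro p hp q hq e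
    have h1 := hB p hp
    have h2 := hB q hq
    have := S.bd_tile K h1.1 h1.2.1 h2.1 h2.2.1 (by omega) e
    exact Prod.ext this.1 this.2
  have h2 : Disjoint (A.image fun p => f p.1 p.2) (B.image fun p => f p.1 p.2) := by
    rw [Finset.disjoint_left]
    intro t ht ht'
    obtain ⟨p, hp, rfl⟩ := Finset.mem_image.1 ht
    obtain ⟨q, hq, e⟩ := Finset.mem_image.1 ht'
    have h1 := hA p hp
    have h2 := hB q hq
    have := S.bd_tile K h2.1 h2.2.1 h1.1 h1.2 (by omega) e
    obtain rfl : q = p := Prod.ext this.1 this.2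
    exact Finset.disjoint_left.1 hd hp hq
  rw [← h1, ← Finset.card_union_of_disjoint h2]
  refine (Finset.card_le_card ?_).trans S.used_card
  intro t ht
  rcases Finset.mem_union.1 ht with ht | ht <;> obtain ⟨p, hp, rfl⟩ := Finset.mem_image.1 ht
  · exact mem_used (hA p hp).1 (hA p hp).2
  · exact mem_used (hB p hp).1 (hB p hp).2.1

open Classical in
/-- Tile types in the interior differ from the `w + h - 1` ones in the bottom row and left column. -/
theorem sa_card (S : Sol k w h P T f) (K : PatOK k w h P o cw bw pl mi up ar ga) :
    ((Finset.Ico 1 w ×ˢ Finset.Ico 1 h).image fun p =>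
      ((f p.1 p.2).south, (f p.1 p.2).west)).card + w + h ≤ k + 4 := by
  have hw := K.hw
  have hh := K.hh
  have h1 := card_image_le_image (Finset.Ico 1 w ×ˢ Finset.Ico 1 h) (fun p => f p.1 p.2)
    (fun p => ((f p.1 p.2).south, (f p.1 p.2).west)) (fun p _ q _ e => by rw [e])
  have hdis : Disjoint (Finset.range w ×ˢ {0}) (({0} : Finset ℕ) ×ˢ Finset.Ico 1 h) := by
    rw [Finset.disjoint_left]
    simp only [Finset.mem_product, Finset.mem_range, Finset.mem_singleton, Finset.mem_Ico]
    intro p; omega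
  have h2 := S.room K (Finset.Ico 1 w ×ˢ Finset.Ico 1 h)
    (Finset.range w ×ˢ {0} ∪ {0} ×ˢ Finset.Ico 1 h)
    (by simp only [Finset.mem_product, Finset.mem_Ico]; intro p; omega)
    (by
      simp only [Finset.mem_union, Finset.mem_product, Finset.mem_Ico, Finset.mem_range,
        Finset.mem_singleton]
      intro p; omega)
    (by
      rw [Finset.disjoint_left]
      simp only [Finset.mem_union, Finset.mem_product, Finset.mem_Ico, Finset.mem_range,
        Finset.mem_singleton]
      intro p; omega)
  rw [Finset.card_union_of_disjoint hdis, Finset.card_product, Finset.card_product,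
    Finset.card_range, Finset.card_singleton, Nat.card_Ico] at h2
  omega

open Classical in
/-- The pairs of a north output and a color are no more than the tile types right of column `0`. -/
theorem in_card (S : Sol k w h P T f) (K : PatOK k w h P o cw bw pl mi up ar ga) :
    ((Finset.Ico 1 w ×ˢ Finset.range h).image fun p =>
      (northOut h f p.1 p.2, P p.1 p.2)).card + h ≤ k + 3 := by
  have hw := K.hw
  have h1 := card_image_le_image (Finset.Ico 1 w ×ˢ Finset.range h) (fun p => f p.1 p.2)
    (fun p => (northOut h f p.1 p.2, P p.1 p.2)) (fun p hp q hq e => by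
      simp only [Finset.mem_product, Finset.mem_Ico, Finset.mem_range] at hp hq
      have := S.outs K hp.1.2 hp.2 hq.1.2 hq.2 e
      rw [this.1, this.2.2])
  have h2 := S.room K (Finset.Ico 1 w ×ˢ Finset.range h) ({0} ×ˢ Finset.range h)
    (by simp only [Finset.mem_product, Finset.mem_Ico, Finset.mem_range]; intro p; omega)
    (by
      simp only [Finset.mem_product, Finset.mem_range, Finset.mem_singleton]
      intro p; omega)
    (by
      rw [Finset.disjoint_left]
      simp only [Finset.mem_product, Finset.mem_Ico, Finset.mem_range,
        Finset.mem_singleton]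
      intro p; omega)
  rw [Finset.card_product, Finset.card_singleton, Finset.card_range] at h2
  omega

open Classical in
/-- Above the bottom row, every color is passed on together with a single east glue, except for
`OR`, which comes with at most two. -/
theorem ie_card (S : Sol k w h P T f) (K : PatOK k w h P o cw bw pl mi up ar ga) :
    ((Finset.range w ×ˢ Finset.Ico 1 h).image fun p =>
      (eastOut w f p.1 p.2, P p.1 p.2)).card + w ≤ k + 1 := by
  have hw := K.hw
  have hh := K.hh
  set IE := (Finset.range w ×ˢ Finset.Ico 1 h).image fun p =>
      (eastOut w f p.1 p.2, P p.1 p.2) with hIE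
  set R := (Finset.range w).image fun x => P x 0 with hR
  have hRc : R.card = w := by
    rw [hR, Finset.card_image_of_injOn, Finset.card_range]
    intro x hx x' hx' e
    simp only [Finset.coe_range, Set.mem_Iio] at hx hx'
    exact (K.bd x hx 0 (by omega) x' hx' 0 (by omega) (by omega) e).1
  have hRs : insert o R ⊆ Finset.Icc 1 k := by
    intro c hc
    rw [Finset.mem_Icc]
    rcases Finset.mem_insert.1 hc with rfl | hc
    · rw [← K.p1 0 (by omega)]
      exact K.rng _ (by omega) _ (by omega)
    · obtain ⟨x, hx, rfl⟩ := Finset.mem_image.1 hc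
      exact K.rng x (Finset.mem_range.1 hx) 0 (by omega)
  have hoR : o ∉ R := by
    intro hc
    obtain ⟨x, hx, e⟩ := Finset.mem_image.1 hc
    exact K.o_inner (Finset.mem_range.1 hx) (by omega) (by omega) e
  have h1 : (IE.filter fun q => q.2 = o).card ≤ 2 := by
    refine (Finset.card_le_card (t := {(some (f (18 + 5 * 0 + 2) 3).east, o),
      (some (f (18 + 5 * 1 + 2) 3).east, o)}) ?_).trans Finset.card_le_two
    intro q hq
    obtain ⟨hq, hq2⟩ := Finset.mem_filter.1 hq
    obtain ⟨p, hp, rfl⟩ := Finset.mem_image.1 hq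
    simp only [Finset.mem_product, Finset.mem_Ico, Finset.mem_range] at hp
    dsimp only at hq2
    have hb : p.1 + 1 ≠ w := fun hb => K.o_inner hp.1 hp.2.2 (by omega) hq2
    rw [Finset.mem_insert, Finset.mem_singleton, eastOut, if_neg hb, hq2]
    rcases S.ors_east K (S.mem_ors hp.1 hp.2.2 hq2) with e | e
    · left; rw [e]
    · right; rw [e]
  have h2 : (IE.filter fun q => ¬ q.2 = o).card ≤ (Finset.Icc 1 k \ insert o R).card := by
    apply Finset.card_le_card_of_injOn Prod.snd
    · intro q hq
      obtain ⟨hq, hq2⟩ := Finset.mem_filter.1 (Finset.mem_coe.1 hq)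
      obtain ⟨p, hp, rfl⟩ := Finset.mem_image.1 hq
      simp only [Finset.mem_product, Finset.mem_Ico, Finset.mem_range] at hp
      simp only [Finset.coe_sdiff, Set.mem_sdiff, Finset.mem_coe, Finset.mem_Icc,
        Finset.mem_insert, not_or]
      refine ⟨K.rng _ hp.1 _ hp.2.2, hq2, fun hc => ?_⟩
      obtain ⟨x, hx, e⟩ := Finset.mem_image.1 hc
      have := K.bd x (Finset.mem_range.1 hx) 0 (by omega) _ hp.1 _ hp.2.2 (by omega) e
      omega
    · intro q hq q' hq' e
      obtain ⟨hq, hq2⟩ := Finset.mem_filter.1 (Finset.mem_coe.1 hq)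
      obtain ⟨p, hp, rfl⟩ := Finset.mem_image.1 hq
      obtain ⟨hq', -⟩ := Finset.mem_filter.1 (Finset.mem_coe.1 hq')
      obtain ⟨p', hp', rfl⟩ := Finset.mem_image.1 hq'
      simp only [Finset.mem_product, Finset.mem_Ico, Finset.mem_range] at hp hp'
      dsimp only at e hq2
      have := S.outs K hp.1 hp.2.2 hp'.1 hp'.2.2 (S.single K hp.1 hp.2.2 hp'.1 hp'.2.2 e hq2)
      rw [e, this.2.1]
  rw [Finset.card_sdiff_of_subset hRs, Finset.card_insert_of_notMem hoR, hRc, Nat.card_Icc] at h2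
  have h3 := Finset.card_le_card hRs
  rw [Finset.card_insert_of_notMem hoR, hRc, Nat.card_Icc] at h3
  have h4 := Finset.card_filter_add_card_filter_not (s := IE) (fun q => q.2 = o)
  omega

/-- A small directed system for `P` yields a small one for the three-colored pattern. -/
theorem simulate (S : Sol k w h P T f) (K : PatOK k w h P o cw bw pl mi up ar ga) :
    ∃ (G₂ : Type) (Θ : RTAS BWG G₂), DirectedTAS Θ ∧ countColor Θ BWG.black ≤ 1 ∧
      countColor Θ BWG.white ≤ 5 * k + 14 - 3 * (w + h) ∧
      countColor Θ BWG.gray ≤ 2 * k + 3 ∧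
      SelfAssembles Θ ((5 * k + 8) * w + 2) ((5 * k + 8) * h + 2)
        (fun a b => QS (5 * k + 8) k w h P (a + 1) (b + 1)) := by
  classical
  have hw := K.hw
  have hh := K.hh
  -- the outputs of a pair of inputs are those at any interior position with these inputs
  have tot : ∀ s t, ∃ q : (Option G × ℕ) × (Option G × ℕ), ∀ x y, 1 ≤ x → x < w → 1 ≤ y → y < h →
      (f x y).south = s → (f x y).west = t →
      q = ((eastOut w f x y, P x y), (northOut h f x y, P x y)) := by
    intro s t
    by_cases hex : ∃ x y, 1 ≤ x ∧ x < w ∧ 1 ≤ y ∧ y < h ∧ (f x y).south = s ∧ (f x y).west = t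
    · obtain ⟨x, y, -, hx, -, hy, es, et⟩ := hex
      refine ⟨((eastOut w f x y, P x y), (northOut h f x y, P x y)), ?_⟩
      intro x' y' _ hx' _ hy' es' et'
      have := S.outs K hx hy hx' hy'
        (S.eq_of hx hy hx' hy' (es.trans es'.symm) (et.trans et'.symm))
      rw [this.1, this.2.1, this.2.2]
    · refine ⟨((none, 0), (none, 0)), ?_⟩
      intro x y h1 h2 h3 h4 h5 h6
      exact absurd ⟨x, y, h1, h2, h3, h4, h5, h6⟩ hex
  choose q hq using tot
  refine forward_core (ℓ := 5 * k + 8) (P := P) (eo := eastOut w f) (no := northOut h f)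
    (ef := fun s t => (q s t).1) (nf := fun s t => (q s t).2)
    (IE := (Finset.range w ×ˢ Finset.Ico 1 h).image fun p =>
      (eastOut w f p.1 p.2, P p.1 p.2))
    (IN := (Finset.Ico 1 w ×ˢ Finset.range h).image fun p =>
      (northOut h f p.1 p.2, P p.1 p.2))
    (SA := (Finset.Ico 1 w ×ˢ Finset.Ico 1 h).image fun p =>
      ((f p.1 p.2).south, (f p.1 p.2).west))
    ⟨rfl, by omega, by omega, K.rng, ?_, ?_⟩ ⟨?_, ?_, ?_⟩ ?_
  · intro y _; rw [eastOut, if_pos (by omega)]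
  · intro x _; rw [northOut, if_pos (by omega)]
  · intro x y hx1 hx hy1 hy
    have hS := S.ver (x := x) (y := y - 1) hx (by omega)
    have hW := S.hor (x := x - 1) (y := y) (by omega) hy
    rw [Nat.sub_add_cancel hy1] at hS
    rw [Nat.sub_add_cancel hx1] at hW
    have := hq _ _ x y hx1 hx hy1 hy rfl rfl
    refine ⟨(f x y).south, (f x y).west, ?_, ?_, by rw [this], by rw [this],
      Finset.mem_image.2 ⟨(x, y), ?_, rfl⟩⟩
    · rw [northOut, if_neg (by omega), hS]
    · rw [eastOut, if_neg (by omega), hW]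
    · simp only [Finset.mem_product, Finset.mem_Ico]; omega
  · intro x y hx hy1 hy
    refine Finset.mem_image.2 ⟨(x, y), ?_, rfl⟩
    simp only [Finset.mem_product, Finset.mem_Ico, Finset.mem_range]; omega
  · intro x y hx1 hx hy
    refine Finset.mem_image.2 ⟨(x, y), ?_, rfl⟩
    simp only [Finset.mem_product, Finset.mem_Ico, Finset.mem_range]; omega
  · have h1 := S.sa_card K
    have h2 := S.ie_card K
    have h3 := S.in_card K
    omega

end Sol

end Simulate

/-! ### The pattern of a formula -/

section Formula

/-- A unique color determines its position, since the blocks do not contain unique colors. -/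
theorem place_uniq {n x y : ℕ} : ∀ (bs : List PBlock) (x0 : ℕ),
    (∀ b ∈ bs, ∀ i j, b.2.2 i j ≠ PColor.uniq n) →
    place bs x0 x y = PColor.uniq n → n = Nat.pair x y
  | [], _, _, e => by
    rw [place, PColor.uniq.injEq] at e
    exact e.symm
  | b :: bs, x0, hb, e => by
    rw [place] at e
    split_ifs at e with h1 h2
    · exact absurd e (hb b (by simp) _ _)
    · rw [PColor.uniq.injEq] at e
      exact e.symm
    · exact place_uniq bs _ (fun b' hb' => hb b' (List.mem_cons_of_mem _ hb')) e

/-- Outside of the rows and columns of the blocks, all colors are unique. -/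
theorem place_frame {x y : ℕ} : ∀ (bs : List PBlock) (x0 : ℕ), (∀ b ∈ bs, b.2.1 ≤ 4) →
    (x < x0 ∨ x0 + (bs.map fun b => b.1 + 1).sum ≤ x + 1 ∨ y = 0 ∨ 5 ≤ y) →
    place bs x0 x y = PColor.uniq (Nat.pair x y)
  | [], _, _, _ => rfl
  | b :: bs, x0, hb, e => by
    have h0 := hb b (by simp)
    rw [List.map_cons, List.sum_cons] at e
    rw [place, if_neg (by omega)]
    split_ifs with h2
    · rfl
    · exact place_frame bs _ (fun b' hb' => hb b' (List.mem_cons_of_mem _ hb')) (by omega)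

theorem blocks_spec (F : CNF3) : ∀ b ∈ blocksOf F, b.2.1 ≤ 4 ∧
    ∀ n i j, b.2.2 i j ≠ PColor.uniq n := by
  have lit : ∀ l n, litColor l ≠ PColor.uniq n := by
    intro l n; unfold litColor; split_ifs <;> simp
  intro b hb
  simp only [blocksOf, List.mem_append, List.mem_cons, List.mem_flatMap, List.mem_range,
    List.mem_map, List.not_mem_nil, or_false] at hb
  rcases hb with ((rfl | rfl | rfl | rfl | rfl | rfl) | ⟨v, -, rfl | rfl | rfl⟩) | ⟨cl, -, rfl⟩ <;>
    refine ⟨by norm_num, fun n i j => ?_⟩ <;> dsimp only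
  · unfold pPat; split_ifs <;> simp
  all_goals first
    | (unfold qPat; dsimp only; split <;> simp)
    | (unfold q5Pat; split <;> simp)
    | (unfold r1Pat; split <;> simp)
    | (unfold r2Pat; split <;> simp)
    | (unfold r3Pat; split <;> simp)
    | (unfold sPat; split <;> first | exact lit _ _ | simp)

theorem blocks_width (F : CNF3) :
    1 + ((blocksOf F).map fun b => b.1 + 1).sum = widthF F := by
  have h1 : ∀ l : List ℕ, ((l.flatMap fun v => [((2, 2, r1Pat v) : PBlock), (2, 2, r2Pat v),
      (4, 2, r3Pat v)]).map fun b => b.1 + 1).sum = 11 * l.length := by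
    intro l
    induction l with
    | nil => rfl
    | cons v l ih =>
      rw [List.flatMap_cons, List.map_append, List.sum_append, ih, List.length_cons]
      simp only [List.map_cons, List.map_nil, List.sum_cons, List.sum_nil]
      omega
  have h2 : ∀ l : List Clause3, ((l.map fun cl => ((5, 2, sPat cl) : PBlock)).map
      fun b => b.1 + 1).sum = 6 * l.length := by
    intro l
    induction l with
    | nil => rfl
    | cons v l ih =>
      rw [List.map_cons, List.map_cons, List.sum_cons, ih, List.length_cons]
      omega
  rw [blocksOf, List.map_append, List.map_append, List.sum_append, List.sum_append, h1, h2,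
    List.length_range, widthF]
  simp only [List.map_cons, List.map_nil, List.sum_cons, List.sum_nil]
  omega

theorem patF_frame (F : CNF3) {x y : ℕ} (h : x = 0 ∨ y = 0 ∨ x + 1 = widthF F ∨ y + 1 = 6) :
    patF F x y = PColor.uniq (Nat.pair x y) := by
  have := blocks_width F
  exact place_frame _ _ (fun b hb => (blocks_spec F b hb).1) (by omega)

theorem patF_uniq (F : CNF3) {x y n : ℕ} (h : patF F x y = PColor.uniq n) : n = Nat.pair x y :=
  place_uniq _ _ (fun b hb => (blocks_spec F b hb).2 n) h

/-- The pattern of a formula has the features used in the reduction, for every injective numbering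
`ρ` of its colors. -/
theorem patOK_of (F : CNF3) (ρ : PColor → ℕ) {k : ℕ} {P : ℕ → ℕ → ℕ}
    (hρ : Set.BijOn ρ (↑(colorsOf (widthF F) 6 (patF F))) (Set.Icc 1 k))
    (hP : ∀ x < widthF F, ∀ y < 6, P x y = ρ (patF F x y)) :
    PatOK k (widthF F) 6 P (ρ .orC) (ρ .cW) (ρ .bW) (ρ .plus) (ρ .minus)
      (fun i => ρ (.upW ⟨i % 2, Nat.mod_lt _ (by norm_num)⟩))
      (fun i => ρ (.arrW ⟨i % 2, Nat.mod_lt _ (by norm_num)⟩))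
      (fun i => ρ (.gate ⟨i % 4, Nat.mod_lt _ (by norm_num)⟩)) := by
  have hw : 45 ≤ widthF F := by unfold widthF; omega
  have mem : ∀ x < widthF F, ∀ y < 6, patF F x y ∈ colorsOf (widthF F) 6 (patF F) := by
    intro x hx y hy
    exact Finset.mem_image.2 ⟨(x, y),
      Finset.mem_product.2 ⟨Finset.mem_range.2 hx, Finset.mem_range.2 hy⟩, rfl⟩
  have inj : ∀ {c d : PColor}, c ∈ colorsOf (widthF F) 6 (patF F) →
      d ∈ colorsOf (widthF F) 6 (patF F) → ρ c = ρ d → c = d := fun hc hd e => hρ.injOn hc hd e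
  have m : ∀ {c : PColor} (x y : ℕ), x < 45 → y < 6 → patF F x y = c →
      c ∈ colorsOf (widthF F) 6 (patF F) := by
    intro c x y hx hy e
    rw [← e]
    exact mem x (by omega) y hy
  have val : ∀ {c : PColor} (x y : ℕ), x < 45 → y < 6 → patF F x y = c → P x y = ρ c := by
    intro c x y hx hy e
    rw [hP x (by omega) y hy, e]
  have mor : PColor.orC ∈ colorsOf (widthF F) 6 (patF F) := m 20 3 (by omega) (by omega) rfl
  have mcw : PColor.cW ∈ colorsOf (widthF F) 6 (patF F) := m 19 4 (by omega) (by omega) rfl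
  have mbw : PColor.bW ∈ colorsOf (widthF F) 6 (patF F) := m 21 2 (by omega) (by omega) rfl
  have mpl : PColor.plus ∈ colorsOf (widthF F) 6 (patF F) := m 26 3 (by omega) (by omega) rfl
  have mmi : PColor.minus ∈ colorsOf (widthF F) 6 (patF F) := m 21 3 (by omega) (by omega) rfl
  have mup : ∀ i, PColor.upW i ∈ colorsOf (widthF F) 6 (patF F) := by
    intro i
    fin_cases i
    · exact m 20 2 (by omega) (by omega) rfl
    · exact m 25 2 (by omega) (by omega) rfl
  have mar : ∀ i, PColor.arrW i ∈ colorsOf (widthF F) 6 (patF F) := by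
    intro i
    fin_cases i
    · exact m 19 3 (by omega) (by omega) rfl
    · exact m 29 3 (by omega) (by omega) rfl
  have mga : ∀ i, PColor.gate i ∈ colorsOf (widthF F) 6 (patF F) := by
    intro i
    fin_cases i
    · exact m 20 4 (by omega) (by omega) rfl
    · exact m 25 4 (by omega) (by omega) rfl
    · exact m 30 4 (by omega) (by omega) rfl
    · exact m 35 4 (by omega) (by omega) rfl
  refine ⟨hw, by omega, ?_, ?_, ?_, ?_, ?_, ?_, ?_, ?_, ?_, ?_, ?_, ?_, ?_, ?_, ?_,
    ?_, ?_, ?_, ?_, ?_, ?_, ?_, ?_, ?_⟩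
  · intro x hx y hy
    rw [hP x hx y hy]
    exact Set.mem_Icc.1 (hρ.mapsTo (mem x hx y hy))
  · intro c h1 h2
    obtain ⟨d, hd, rfl⟩ := hρ.surjOn (Set.mem_Icc.2 ⟨h1, h2⟩)
    obtain ⟨p, hp, rfl⟩ := Finset.mem_image.1 (Finset.mem_coe.1 hd)
    rw [Finset.mem_product, Finset.mem_range, Finset.mem_range] at hp
    exact ⟨p.1, hp.1, p.2, hp.2, hP _ hp.1 _ hp.2⟩
  · intro x hx y hy x' hx' y' hy' hb e
    rw [hP x hx y hy, hP x' hx' y' hy'] at e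
    have e1 := inj (mem x hx y hy) (mem x' hx' y' hy') e
    rw [patF_frame F hb] at e1
    exact Nat.pair_eq_pair.1 (patF_uniq F e1.symm)
  · intro i hi; interval_cases i <;> exact val _ _ (by omega) (by omega) rfl
  · intro i hi; interval_cases i <;> exact val _ _ (by omega) (by omega) rfl
  · intro i hi j hj e
    have hY : ∀ i < 8, patF F (2 * i + 2) 2 = PColor.Y ⟨i % 8, Nat.mod_lt _ (by norm_num)⟩ := by
      intro i hi; interval_cases i <;> rfl
    have e1 : PColor.Y ⟨i % 8, Nat.mod_lt _ (by norm_num)⟩ =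
        PColor.Y ⟨j % 8, Nat.mod_lt _ (by norm_num)⟩ :=
      inj (m _ _ (by omega) (by omega) (hY i hi)) (m _ _ (by omega) (by omega) (hY j hj))
        (by rw [← hY i hi, ← hY j hj, ← hP _ (by omega) _ (by omega), e,
          hP _ (by omega) _ (by omega)])
    rw [PColor.Y.injEq, Fin.mk.injEq] at e1
    omega
  · intro i hi; interval_cases i <;> exact val _ _ (by omega) (by omega) rfl
  · exact val _ _ (by omega) (by omega) rfl
  · intro i hi h0
    interval_cases i
    · exact absurd rfl h0
    all_goals exact val _ _ (by omega) (by omega) rfl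
  · intro i hi; interval_cases i <;> exact val _ _ (by omega) (by omega) rfl
  · intro i hi; interval_cases i <;> exact val _ _ (by omega) (by omega) rfl
  · intro i hi; interval_cases i <;> exact val _ _ (by omega) (by omega) rfl
  · intro i hi; interval_cases i <;> exact val _ _ (by omega) (by omega) rfl
  · intro i hi; interval_cases i <;> exact val _ _ (by omega) (by omega) rfl
  · intro i hi j hj e
    have e1 := inj (mga _) (mga _) e
    rw [PColor.gate.injEq, Fin.mk.injEq] at e1
    omega
  · intro e; cases inj mmi mpl e
  · intro e; cases inj mcw mor e
  · intro e; cases inj mpl mor e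
  · intro e; cases inj mbw mor e
  · intro e; cases inj mbw mcw e
  · intro i e; cases inj (mup _) mor e
  · intro i e; cases inj (mup _) mcw e
  · intro i e; cases inj (mar _) mor e
  · intro i e; cases inj (mar _) mcw e

end Formula

/-! ### The reduction -/

/-- For every pair `(P, m) ∈ ℐ` there exist a black/white/gray (3-colored) pattern
`Q` and integers `m_b, m_w, m_g` (namely `Q = QPat k w h P`, `m_b = 1`,
`m_w = 5k − 3(w + h) + 14`, `m_g = 2k + 3`) such that `P` can be self-assembled by
a DTAS with at most `m = k + 3` tile types if and only if `Q` can be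
self-assembled by a DTAS with at most `m_b` black, `m_w` white and `m_g` gray tile
types; the tuple `(Q, m_b, m_w, m_g)` is given by an explicit function of `P`,
hence computable in polynomial time. -/
theorem pats_reduces_to_3mbpats (k w h : ℕ) (P : ℕ → ℕ → ℕ) (hI : InI k w h P) :
    ∃ (WQ HQ : ℕ) (Q : ℕ → ℕ → BWG) (mb mw mg : ℕ),
      WQ = QW k w ∧ HQ = QH k h ∧ Q = QPat k w h P ∧
      mb = 1 ∧ mw = 5 * k + 14 - 3 * (w + h) ∧ mg = 2 * k + 3 ∧
      ((∃ (G₁ : Type) (T : RTAS ℕ G₁), DirectedTAS T ∧ T.tiles.card ≤ k + 3 ∧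
          SelfAssembles T w h P) ↔
        (∃ (G₂ : Type) (Θ : RTAS BWG G₂), DirectedTAS Θ ∧
          countColor Θ BWG.black ≤ mb ∧
          countColor Θ BWG.white ≤ mw ∧
          countColor Θ BWG.gray ≤ mg ∧
          SelfAssembles Θ WQ HQ Q)) := by
  refine ⟨_, _, _, _, _, _, rfl, rfl, rfl, rfl, rfl, rfl, ?_, ?_⟩
  -- a small system for `P` is simulated by a three-colored one
  · rintro ⟨G, T, hd, hc, f, hf, hcol⟩
    obtain ⟨F, ρ, rfl, rfl, hρ, hP⟩ := hI
    have K := patOK_of F ρ hρ hP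
    have S : Sol k (widthF F) 6 P T f := ⟨hd, hc, hf, hcol⟩
    have hQ : QPat k (widthF F) 6 P =
        fun a b => QS (5 * k + 8) k (widthF F) 6 P (a + 1) (b + 1) := by
      funext a b
      exact QPat_eq_QS k (widthF F) 6 P a b
    rw [hQ]
    exact S.simulate K
  -- conversely, the assembly is shifted by one so that supertile `(x, y)` starts at `(ℓ x, ℓ y)`
  · rintro ⟨G, Θ, hd, hb, hwt, hg, f, hf, hcol⟩
    obtain ⟨F, ρ, rfl, rfl, hρ, hP⟩ := hI
    have K := patOK_of F ρ hρ hP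
    have hw := K.hw
    obtain ⟨hf1, -, -, hf4, hf5⟩ := hf
    unfold QW QH at hf1 hf4 hf5 hcol
    have used : ∀ t, Used (5 * k + 8) (widthF F) 6 (fun a b => f (a - 1) (b - 1)) t →
        t ∈ Θ.tiles := by
      rintro t ⟨a, b, h1, h2, h3, h4, rfl⟩
      exact hf1 (a - 1) (by omega) (b - 1) (by omega)
    have cnt : ∀ (c : BWG) (Γ : Finset (Tile BWG G)),
        (∀ t ∈ Γ, Used (5 * k + 8) (widthF F) 6 (fun a b => f (a - 1) (b - 1)) t ∧ t.color = c) →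
        Γ.card ≤ countColor Θ c := fun c Γ h =>
      Finset.card_le_card fun t ht => Finset.mem_filter.2 ⟨used t (h t ht).1, (h t ht).2⟩
    refine reverse_direction (ℓ := 5 * k + 8) (g := fun a b => f (a - 1) (b - 1))
      ⟨rfl, by omega, by omega, K.rng, ?_, ?_, ?_, ?_, ?_, ?_⟩ ?_ K.surj (by omega) (by omega)
      (ρ .orC) K.p1 K.p2 K.pY
    · intro a b h1 h2 h3 h4
      rw [hcol _ (by omega) _ (by omega), QPat_eq_QS, Nat.sub_add_cancel h1, Nat.sub_add_cancel h3]
    · intro a b h1 h2 h3 h4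
      have := hf4 (a - 1) (by omega) (b - 1) (by omega)
      rwa [Nat.sub_add_cancel h1] at this
    · intro a b h1 h2 h3 h4
      have := hf5 (a - 1) (by omega) (b - 1) (by omega)
      rwa [Nat.sub_add_cancel h3] at this
    · intro t t' ht ht' e1 e2
      by_contra hne
      rcases hd t (used t ht) t' (used t' ht') hne with e | e
      · exact e e1
      · exact e e2
    · intro t t' ht ht' e1 e2
      exact Finset.card_le_one.1 hb t (Finset.mem_filter.2 ⟨used t ht, e1⟩) t'
        (Finset.mem_filter.2 ⟨used t' ht', e2⟩)
    · intro Γ h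
      exact (cnt _ Γ h).trans hg
    · intro Γ h
      exact (cnt _ Γ h).trans hwt
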